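/- (Theorem 1.2, second formula.) Let n ≥ 4 be a natural number. The genus-zero Hurwitz number h_{2^1,1^2} with two degenerate branch points, one of reduced ramification type 2^1 (a permutation of cycle type (3,1^{n-3})) and one of reduced ramification type 1^2 (a permutation of cycle type (2,2,1^{n-4})), and m = 2n−6 simple branch points, satisfies h_{2^1,1^2} = 3·(3n^2 − 15n + 20)·((2n−6)!/(n−4)!)·n^{n−6}. -/

import Mathlib

open Equiv

open Equiv

section SubsetSums
variable {ι : Type*} [DecidableEq ι]

/-- Moving an element of the first block to the outer sum. -/
lemma hz_sum_pull (U : Finset ι) (f : ι → Finset ι → Finset ι → ℚ) :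
    ∑ T ∈ U.powerset, ∑ i ∈ T, f i (T.erase i) (U \ T) =
      ∑ i ∈ U, ∑ T ∈ (U.erase i).powerset, f i T ((U.erase i) \ T) := by
  rw [Finset.sum_sigma', Finset.sum_sigma']
  refine Finset.sum_bij' (fun p _ => ⟨p.2, p.1.erase p.2⟩) (fun p _ => ⟨insert p.1 p.2, p.1⟩)
    ?_ ?_ ?_ ?_ ?_
  · rintro ⟨T, i⟩ h
    simp only [Finset.mem_sigma, Finset.mem_powerset] at h ⊢
    exact ⟨h.1 h.2, Finset.erase_subset_erase _ h.1⟩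
  · rintro ⟨i, T⟩ h
    simp only [Finset.mem_sigma, Finset.mem_powerset] at h ⊢
    refine ⟨Finset.insert_subset h.1 (h.2.trans (Finset.erase_subset _ _)), Finset.mem_insert_self _ _⟩
  · rintro ⟨T, i⟩ h
    simp only [Finset.mem_sigma, Finset.mem_powerset] at h
    simp [Finset.insert_erase h.2]
  · rintro ⟨i, T⟩ h
    simp only [Finset.mem_sigma, Finset.mem_powerset] at h
    have : i ∉ T := fun hi => by simpa using h.2 hi
    simp [Finset.erase_insert this]
  · rintro ⟨T, i⟩ h
    simp only [Finset.mem_sigma, Finset.mem_powerset] at h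
    have : (U.erase i) \ (T.erase i) = U \ T := by
      ext j
      simp only [Finset.mem_sdiff, Finset.mem_erase]
      by_cases hj : j = i
      · subst hj; simp [h.2]
      · simp [hj]
    simp only [this]

lemma hz_sum_compl (U : Finset ι) (f : Finset ι → Finset ι → ℚ) :
    ∑ T ∈ U.powerset, f T (U \ T) = ∑ T ∈ U.powerset, f (U \ T) T := by
  refine Finset.sum_bij' (fun T _ => U \ T) (fun T _ => U \ T) ?_ ?_ ?_ ?_ ?_
  · intro T h; simp
  · intro T h; simp
  · intro T h; simp only [Finset.mem_powerset] at h; simp [h]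
  · intro T h; simp only [Finset.mem_powerset] at h; simp [h]
  · intro T h; simp only [Finset.mem_powerset] at h; simp [h]

lemma hz_sum_pull' (U : Finset ι) (f : ι → Finset ι → Finset ι → ℚ) :
    ∑ T ∈ U.powerset, ∑ i ∈ U \ T, f i T ((U \ T).erase i) =
      ∑ i ∈ U, ∑ T ∈ (U.erase i).powerset, f i T ((U.erase i) \ T) := by
  have h1 := hz_sum_compl U (fun A B => ∑ i ∈ B, f i A (B.erase i))
  rw [h1]
  have h2 := hz_sum_pull U (fun i A B => f i B A)
  rw [h2]
  refine Finset.sum_congr rfl fun i _ => ?_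
  exact (hz_sum_compl (U.erase i) (fun A B => f i A B)).symm

/-- The Abel–Hurwitz polynomial `a (a + x_T)^(|T|-1)`. -/
def hzB (x : ι → ℚ) (a : ℚ) (T : Finset ι) : ℚ :=
  if T = ∅ then 1 else a * (a + ∑ i ∈ T, x i) ^ (T.card - 1)

def hzP (x : ι → ℚ) (a : ℚ) (T : Finset ι) : ℚ := (a + ∑ i ∈ T, x i) ^ T.card

lemma hzP_eq (x : ι → ℚ) (a : ℚ) (T : Finset ι) :
    hzP x a T = hzB x a T + ∑ i ∈ T, x i * hzP x (a + x i) (T.erase i) := by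
  have h : ∀ i ∈ T, x i * hzP x (a + x i) (T.erase i) =
      x i * (a + ∑ i ∈ T, x i) ^ (T.card - 1) := by
    intro i hi
    rw [hzP, Finset.card_erase_of_mem hi, add_assoc, Finset.add_sum_erase _ _ hi]
  rw [Finset.sum_congr rfl h, ← Finset.sum_mul, hzP, hzB]
  split_ifs with h0
  · subst h0; simp
  · rw [← add_mul, ← pow_succ']
    congr 1
    have := Finset.card_pos.2 (Finset.nonempty_iff_ne_empty.2 h0)
    omega

lemma hz_gh (x : ι → ℚ) (N : ℕ) : ∀ U : Finset ι, U.card = N →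
    (∀ a b : ℚ, ∑ T ∈ U.powerset, hzB x a T * hzP x b (U \ T) = hzP x (a + b) U) ∧
    (∀ a b a' b' : ℚ, a + b = a' + b' → ∑ T ∈ U.powerset, hzP x a T * hzP x b (U \ T) =
      ∑ T ∈ U.powerset, hzP x a' T * hzP x b' (U \ T)) := by
  induction N with
  | zero =>
    intro U hU
    rw [Finset.card_eq_zero] at hU
    subst hU
    simp [hzB, hzP]
  | succ N ih =>
    intro U hU
    have hg : ∀ a b : ℚ, ∑ T ∈ U.powerset, hzB x a T * hzP x b (U \ T) = hzP x (a + b) U := by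
      intro a b
      obtain ⟨i, U', hi, rfl, hc⟩ := Finset.card_eq_succ.1 hU
      obtain ⟨ihg, ihh⟩ := ih U' hc
      rw [Finset.sum_powerset_insert hi]
      have e1 : ∀ T ∈ U'.powerset, hzB x a T * hzP x b (insert i U' \ T) =
          (a + b + x i + ∑ j ∈ U', x j) * (hzB x a T * hzP x (b + x i) (U' \ T))
            - a * (hzP x a T * hzP x (b + x i) (U' \ T)) := by
        intro T hT
        rw [Finset.mem_powerset] at hT
        have hiT : i ∉ T := fun h => hi (hT h)
        have e : insert i U' \ T = insert i (U' \ T) := Finset.insert_sdiff_of_notMem _ hiT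
        have hi2 : i ∉ U' \ T := fun h => hi (Finset.mem_sdiff.1 h).1
        have hs : ∑ j ∈ U', x j = ∑ j ∈ U' \ T, x j + ∑ j ∈ T, x j :=
          (Finset.sum_sdiff hT).symm
        have hB : hzB x a T * (a + ∑ j ∈ T, x j) = a * hzP x a T := by
          rw [hzB, hzP]
          split_ifs with h0
          · subst h0; simp
          · have := Finset.card_pos.2 (Finset.nonempty_iff_ne_empty.2 h0)
            rw [mul_assoc, ← pow_succ]
            congr 2
            omega
        have hP : hzP x b (insert i (U' \ T)) =
            (b + x i + ∑ j ∈ U' \ T, x j) * hzP x (b + x i) (U' \ T) := by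
          rw [hzP, hzP, Finset.sum_insert hi2, Finset.card_insert_of_notMem hi2, pow_succ',
            add_assoc]
        rw [e, hP, hs]
        linear_combination (-hzP x (b + x i) (U' \ T)) * hB
      have e2 : ∀ T ∈ U'.powerset, hzB x a (insert i T) * hzP x b (insert i U' \ insert i T) =
          a * (hzP x (a + x i) T * hzP x b (U' \ T)) := by
        intro T hT
        rw [Finset.mem_powerset] at hT
        have hiT : i ∉ T := fun h => hi (hT h)
        have e : insert i U' \ insert i T = U' \ T := by
          ext j
          simp only [Finset.mem_sdiff, Finset.mem_insert]
          constructor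
          · tauto
          · rintro ⟨h1, h2⟩
            have : j ≠ i := fun h => hi (h ▸ h1)
            tauto
        rw [e, hzB, if_neg (Finset.insert_ne_empty _ _), Finset.card_insert_of_notMem hiT,
          Finset.sum_insert hiT, Nat.add_sub_cancel, hzP, hzP, ← add_assoc]
        ring
      rw [Finset.sum_congr rfl e1, Finset.sum_congr rfl e2, Finset.sum_sub_distrib,
        ← Finset.mul_sum, ← Finset.mul_sum, ← Finset.mul_sum, ihg,
        ihh a (b + x i) (a + x i) b (by ring)]
      rw [hzP, hzP, Finset.sum_insert hi, Finset.card_insert_of_notMem hi, pow_succ']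
      ring
    refine ⟨hg, ?_⟩
    have key : ∀ a b : ℚ, ∑ T ∈ U.powerset, hzP x a T * hzP x b (U \ T) =
        hzP x (a + b) U + ∑ i ∈ U, x i *
          ∑ T ∈ (U.erase i).powerset, hzP x (a + x i) T * hzP x b (U.erase i \ T) := by
      intro a b
      have : ∀ T ∈ U.powerset, hzP x a T * hzP x b (U \ T) = hzB x a T * hzP x b (U \ T) +
          ∑ i ∈ T, x i * (hzP x (a + x i) (T.erase i) * hzP x b (U \ T)) := by
        intro T _
        rw [hzP_eq x a T, add_mul, Finset.sum_mul]
        simp only [mul_assoc]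
      rw [Finset.sum_congr rfl this, Finset.sum_add_distrib, hg]
      congr 1
      rw [hz_sum_pull U (fun i A B => x i * (hzP x (a + x i) A * hzP x b B))]
      simp only [Finset.mul_sum]
    intro a b a' b' hab
    rw [key, key, hab]
    congr 1
    refine Finset.sum_congr rfl fun i hi => ?_
    congr 1
    refine (ih (U.erase i) ?_).2 _ _ _ _ (by linarith)
    rw [Finset.card_erase_of_mem hi, hU]; rfl

lemma hz_g (x : ι → ℚ) (U : Finset ι) (a b : ℚ) :
    ∑ T ∈ U.powerset, hzB x a T * hzP x b (U \ T) = hzP x (a + b) U :=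
  (hz_gh x _ U rfl).1 a b

/-- The multivariate Hurwitz Abel identity. -/
lemma hz_H (x : ι → ℚ) (U : Finset ι) (a b : ℚ) :
    ∑ T ∈ U.powerset, hzB x a T * hzB x b (U \ T) = hzB x (a + b) U := by
  have : ∀ T ∈ U.powerset, hzB x a T * hzB x b (U \ T) = hzB x a T * hzP x b (U \ T) -
      ∑ i ∈ U \ T, x i * (hzB x a T * hzP x (b + x i) ((U \ T).erase i)) := by
    intro T _
    rw [hzP_eq x b, mul_add, Finset.mul_sum, eq_sub_iff_add_eq]
    congr 1
    refine Finset.sum_congr rfl fun i _ => by ring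
  rw [Finset.sum_congr rfl this, Finset.sum_sub_distrib, hz_g,
    hz_sum_pull' U (fun i A B => x i * (hzB x a A * hzP x (b + x i) B))]
  rw [hzP_eq x (a + b) U, add_sub_assoc]
  simp only [← Finset.mul_sum, hz_g, ← add_assoc, sub_self, add_zero]

/-- `(a + x_T)^(|T|-2)`. -/
noncomputable def hzC (x : ι → ℚ) (a : ℚ) (T : Finset ι) : ℚ :=
  (a + ∑ i ∈ T, x i) ^ ((T.card : ℤ) - 2)

lemma hzB_zpow (x : ι → ℚ) (a : ℚ) (T : Finset ι) (ha : 0 < a) :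
    hzB x a T = a * (a + ∑ i ∈ T, x i) ^ ((T.card : ℤ) - 1) := by
  rw [hzB]
  split_ifs with h0
  · subst h0; simp; field_simp
  · have := Finset.card_pos.2 (Finset.nonempty_iff_ne_empty.2 h0)
    rw [← zpow_natCast]
    congr 2
    omega

lemma hzC_eq (x : ι → ℚ) (a : ℚ) (T : Finset ι) (ha : 0 < a) (hx : ∀ i ∈ T, 0 < x i) :
    hzC x a T = 1 / a ^ 2 * hzB x a T -
      ∑ i ∈ T, x i / (a * (a + x i)) * hzB x (a + x i) (T.erase i) := by
  have hs : 0 < a + ∑ i ∈ T, x i :=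
    add_pos_of_pos_of_nonneg ha (Finset.sum_nonneg fun i hi => (hx i hi).le)
  have h : ∀ i ∈ T, x i / (a * (a + x i)) * hzB x (a + x i) (T.erase i) =
      x i * (hzC x a T / a) := by
    intro i hi
    have hc := Finset.card_pos.2 ⟨i, hi⟩
    rw [hzB_zpow _ _ _ (add_pos ha (hx i hi)), Finset.card_erase_of_mem hi, add_assoc,
      Finset.add_sum_erase _ _ hi, hzC]
    have : (((T.card - 1 : ℕ) : ℤ) - 1) = (T.card : ℤ) - 2 := by omega
    rw [this]
    have h1 := ha.ne'
    have h2 := (add_pos ha (hx i hi)).ne'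
    field_simp
  rw [Finset.sum_congr rfl h, ← Finset.sum_mul, hzB_zpow _ _ _ ha]
  have : ((T.card : ℤ) - 1) = (T.card : ℤ) - 2 + 1 := by ring
  rw [this, zpow_add_one₀ hs.ne', hzC]
  have h1 := ha.ne'
  field_simp
  ring

lemma hz_D (x : ι → ℚ) (U : Finset ι) (a b : ℚ) (ha : 0 < a) (hx : ∀ i ∈ U, 0 < x i) :
    ∑ T ∈ U.powerset, hzC x a T * hzB x b (U \ T) = 1 / a ^ 2 * hzB x (a + b) U -
      ∑ i ∈ U, x i / (a * (a + x i)) * hzB x (a + x i + b) (U.erase i) := by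
  have : ∀ T ∈ U.powerset, hzC x a T * hzB x b (U \ T) =
      1 / a ^ 2 * (hzB x a T * hzB x b (U \ T)) -
      ∑ i ∈ T, x i / (a * (a + x i)) * (hzB x (a + x i) (T.erase i) * hzB x b (U \ T)) := by
    intro T hT
    rw [hzC_eq x a T ha fun i hi => hx i (Finset.mem_powerset.1 hT hi), sub_mul, Finset.sum_mul]
    simp only [mul_assoc]
  rw [Finset.sum_congr rfl this, Finset.sum_sub_distrib, ← Finset.mul_sum, hz_H,
    hz_sum_pull U (fun i A B => x i / (a * (a + x i)) * (hzB x (a + x i) A * hzB x b B))]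
  simp only [← Finset.mul_sum, hz_H]

lemma hz_A0 (x : ι → ℚ) (U : Finset ι) (a b : ℚ) (ha : 0 < a) (hb : 0 < b) (hx : ∀ i ∈ U, 0 < x i) :
    ∑ T ∈ U.powerset, hzC x a T * hzC x b (U \ T) =
      1 / b ^ 2 * (1 / a ^ 2 * hzB x (a + b) U -
      ∑ i ∈ U, x i / (a * (a + x i)) * hzB x (a + x i + b) (U.erase i)) -
      ∑ j ∈ U, x j / (b * (b + x j)) * (1 / a ^ 2 * hzB x (a + (b + x j)) (U.erase j) -
        ∑ i ∈ U.erase j, x i / (a * (a + x i)) *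
          hzB x (a + x i + (b + x j)) ((U.erase j).erase i)) := by
  have : ∀ T ∈ U.powerset, hzC x a T * hzC x b (U \ T) =
      1 / b ^ 2 * (hzC x a T * hzB x b (U \ T)) -
      ∑ j ∈ U \ T, x j / (b * (b + x j)) *
        (hzC x a T * hzB x (b + x j) ((U \ T).erase j)) := by
    intro T _
    rw [hzC_eq x b _ hb fun i hi => hx i (Finset.mem_sdiff.1 hi).1, mul_sub, Finset.mul_sum]
    congr 1
    · ring
    · exact Finset.sum_congr rfl fun i _ => by ring
  rw [Finset.sum_congr rfl this, Finset.sum_sub_distrib, ← Finset.mul_sum, hz_D _ _ _ _ ha hx,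
    hz_sum_pull' U (fun j A B => x j / (b * (b + x j)) * (hzC x a A * hzB x (b + x j) B))]
  congr 1
  refine Finset.sum_congr rfl fun j _ => ?_
  rw [← Finset.mul_sum, hz_D _ _ _ _ ha fun i hi => hx i (Finset.mem_of_mem_erase hi)]

/-- The closed form of the subset convolution. -/
lemma hz_A (x : ι → ℚ) (U : Finset ι) (a b n : ℚ) (ha : 0 < a) (hb : 0 < b) (hx : ∀ i ∈ U, 0 < x i)
    (hn : n = a + b + ∑ i ∈ U, x i) :
    ∑ T ∈ U.powerset, hzC x a T * hzC x b (U \ T) = n ^ ((U.card : ℤ) - 3) *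
      ((a + b) * n ^ 2 / (a ^ 2 * b ^ 2)
        - n * ∑ i ∈ U, x i * (a + b + x i) * (1 / (a * (a + x i) * b ^ 2) +
            1 / (b * (b + x i) * a ^ 2))
        + ∑ j ∈ U, ∑ i ∈ U.erase j, x i * x j * (a + b + x i + x j) /
            (a * b * (a + x i) * (b + x j))) := by
  have hn0 : 0 < n := by
    rw [hn]
    exact add_pos_of_pos_of_nonneg (add_pos ha hb) (Finset.sum_nonneg fun i hi => (hx i hi).le)
  rw [hz_A0 x U a b ha hb hx]
  have t1 : hzB x (a + b) U = (a + b) * (n ^ ((U.card : ℤ) - 3) * n ^ 2) := by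
    rw [hzB_zpow _ _ _ (add_pos ha hb), ← hn, ← zpow_natCast n 2, ← zpow_add₀ hn0.ne']
    congr 2
    push_cast
    ring
  have t2 : ∀ i ∈ U, hzB x (a + b + x i) (U.erase i) =
      (a + b + x i) * (n ^ ((U.card : ℤ) - 3) * n) := by
    intro i hi
    have hc := Finset.card_pos.2 ⟨i, hi⟩
    rw [hzB_zpow _ _ _ (add_pos (add_pos ha hb) (hx i hi)), add_assoc (a + b),
      Finset.add_sum_erase _ _ hi, ← hn, ← zpow_add_one₀ hn0.ne', Finset.card_erase_of_mem hi]
    congr 2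
    omega
  have t3 : ∀ j ∈ U, ∀ i ∈ U.erase j, hzB x (a + b + x i + x j) ((U.erase j).erase i) =
      (a + b + x i + x j) * (n ^ ((U.card : ℤ) - 3)) := by
    intro j hj i hi
    have hc := Finset.card_pos.2 ⟨i, hi⟩
    have hc' := Finset.card_erase_of_mem hj
    rw [hzB_zpow _ _ _ (add_pos (add_pos (add_pos ha hb) (hx i (Finset.mem_of_mem_erase hi))) (hx j hj)),
      show a + b + x i + x j = a + b + x j + x i by ring, add_assoc (a + b + x j),
      Finset.add_sum_erase _ _ hi, add_assoc (a + b) (x j) (∑ k ∈ U.erase j, x k),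
      Finset.add_sum_erase _ _ hj, ← hn, Finset.card_erase_of_mem hi]
    congr 2
    omega
  have s2 : ∑ i ∈ U, x i / (a * (a + x i)) * hzB x (a + x i + b) (U.erase i) =
      n ^ ((U.card : ℤ) - 3) * n * ∑ i ∈ U, x i * (a + b + x i) * (1 / (a * (a + x i))) := by
    rw [Finset.mul_sum]
    refine Finset.sum_congr rfl fun i hi => ?_
    rw [show a + x i + b = a + b + x i by ring, t2 i hi]
    ring
  have s3 : ∑ j ∈ U, x j / (b * (b + x j)) * (1 / a ^ 2 * hzB x (a + (b + x j)) (U.erase j) -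
        ∑ i ∈ U.erase j, x i / (a * (a + x i)) *
          hzB x (a + x i + (b + x j)) ((U.erase j).erase i)) =
      n ^ ((U.card : ℤ) - 3) * (n * ∑ i ∈ U, x i * (a + b + x i) * (1 / (b * (b + x i) * a ^ 2))
        - ∑ j ∈ U, ∑ i ∈ U.erase j, x i * x j * (a + b + x i + x j) /
            (a * b * (a + x i) * (b + x j))) := by
    rw [Finset.mul_sum, ← Finset.sum_sub_distrib, Finset.mul_sum]
    refine Finset.sum_congr rfl fun j hj => ?_
    rw [show a + (b + x j) = a + b + x j by ring, t2 j hj, mul_sub, mul_sub, Finset.mul_sum,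
      Finset.mul_sum]
    congr 1
    · have h1 := ha.ne'
      have h2 := hb.ne'
      have h3 := (add_pos hb (hx j hj)).ne'
      field_simp
    · refine Finset.sum_congr rfl fun i hi => ?_
      rw [show a + x i + (b + x j) = a + b + x i + x j by ring, t3 j hj i hi]
      have h1 := ha.ne'
      have h2 := hb.ne'
      have h3 := (add_pos hb (hx j hj)).ne'
      have h4 := (add_pos ha (hx i (Finset.mem_of_mem_erase hi))).ne'
      field_simp
  rw [t1, s2, s3]
  have s4 : ∑ i ∈ U, x i * (a + b + x i) * (1 / (a * (a + x i) * b ^ 2) +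
            1 / (b * (b + x i) * a ^ 2)) =
      1 / b ^ 2 * ∑ i ∈ U, x i * (a + b + x i) * (1 / (a * (a + x i))) +
      ∑ i ∈ U, x i * (a + b + x i) * (1 / (b * (b + x i) * a ^ 2)) := by
    rw [Finset.mul_sum, ← Finset.sum_add_distrib]
    refine Finset.sum_congr rfl fun i hi => ?_
    have h1 := ha.ne'
    have h2 := hb.ne'
    have h3 := (add_pos hb (hx i hi)).ne'
    have h4 := (add_pos ha (hx i hi)).ne'
    field_simp
  rw [s4]
  have h1 := ha.ne'
  have h2 := hb.ne'
  field_simp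
  ring

end SubsetSums

open Equiv

section OneVariable

lemma hz_fd {r s : ℕ} (h : s < r) :
    ∑ a ∈ Finset.range (r + 1), (-1 : ℚ) ^ a * r.choose a * (a : ℚ) ^ s = 0 := by
  have h1 := congrFun (fwdDiff_iter_pow_eq_zero_of_lt (R := ℚ) h) 0
  rw [fwdDiff_iter_eq_sum_shift] at h1
  simp only [zsmul_eq_mul, zero_add, nsmul_eq_mul, mul_one, Pi.zero_apply] at h1
  have h2 : ∑ a ∈ Finset.range (r + 1), (-1 : ℚ) ^ a * r.choose a * (a : ℚ) ^ s =
      (-1) ^ r * ∑ k ∈ Finset.range (r + 1),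
        (((-1 : ℤ) ^ (r - k) * (r.choose k : ℤ) : ℤ) : ℚ) * (k : ℚ) ^ s := by
    rw [Finset.mul_sum]
    refine Finset.sum_congr rfl fun a ha => ?_
    have : a ≤ r := by simpa [Nat.lt_succ_iff] using ha
    obtain ⟨c, rfl⟩ := Nat.exists_eq_add_of_le this
    have e : ((-1 : ℚ) ^ c) * (-1) ^ c = 1 := by rw [← mul_pow]; simp
    push_cast
    rw [Nat.add_sub_cancel_left, pow_add]
    linear_combination (-(-1 : ℚ) ^ a * ((a + c).choose a) * (a : ℚ) ^ s) * e
  rw [h2, h1, mul_zero]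

lemma hz_choose_sum (r : ℕ) (f : ℕ → ℚ) :
    ∑ a ∈ Finset.range (r + 2), ((r + 1).choose a : ℚ) * f a =
      ∑ a ∈ Finset.range (r + 1), (r.choose a : ℚ) * (f a + f (a + 1)) := by
  have h := Finset.sum_antidiagonal_choose_succ_mul (R := ℚ) (fun i _ => f i) r
  rw [Finset.Nat.sum_antidiagonal_eq_sum_range_succ (fun i _ => ((r+1).choose i : ℚ) * f i),
    Finset.Nat.sum_antidiagonal_eq_sum_range_succ (fun i _ => ((r).choose i : ℚ) * f i),
    Finset.Nat.sum_antidiagonal_eq_sum_range_succ (fun i j => ((r).choose j : ℚ) * f (i+1))] at h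
  rw [show r + 2 = (r + 1).succ from rfl, h, ← Finset.sum_add_distrib]
  refine Finset.sum_congr rfl fun a ha => ?_
  have : a ≤ r := by simpa [Nat.lt_succ_iff] using ha
  rw [Nat.choose_symm this]
  ring

lemma hz_beta (r : ℕ) : ∀ y : ℕ,
    ∑ a ∈ Finset.range (r + 1), (r.choose a : ℚ) * ((-1) ^ a / ((a : ℚ) + ((y + 1 : ℕ) : ℚ))) =
      (r.factorial : ℚ) * y.factorial / ((y + 1 + r).factorial : ℚ) := by
  induction r with
  | zero =>
    intro y
    have h : (y.factorial : ℚ) ≠ 0 := by exact_mod_cast y.factorial_ne_zero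
    have h2 : (y : ℚ) + 1 ≠ 0 := by positivity
    simp [Nat.factorial_succ]
    field_simp
  | succ r ih =>
    intro y
    rw [hz_choose_sum]
    have : ∀ a ∈ Finset.range (r + 1), (r.choose a : ℚ) * ((-1) ^ a / ((a : ℚ) + ((y + 1 : ℕ) : ℚ))
        + (-1) ^ (a + 1) / (((a + 1 : ℕ) : ℚ) + ((y + 1 : ℕ) : ℚ))) =
        (r.choose a : ℚ) * ((-1) ^ a / ((a : ℚ) + ((y + 1 : ℕ) : ℚ))) -
        (r.choose a : ℚ) * ((-1) ^ a / ((a : ℚ) + ((y + 1 + 1 : ℕ) : ℚ))) := by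
      intro a _
      rw [show ((a + 1 : ℕ) : ℚ) + ((y + 1 : ℕ) : ℚ) = (a : ℚ) + ((y + 1 + 1 : ℕ) : ℚ) by
        push_cast; ring]
      ring
    rw [Finset.sum_congr rfl this, Finset.sum_sub_distrib, ih, ih]
    have e1 : y + 1 + 1 + r = (y + 1 + r) + 1 := by ring
    have e2 : y + 1 + (r + 1) = (y + 1 + r) + 1 := by ring
    rw [e1, e2, Nat.factorial_succ (y + 1 + r), Nat.factorial_succ r, Nat.factorial_succ y]
    have h : ((y + 1 + r).factorial : ℚ) ≠ 0 := by exact_mod_cast (y + 1 + r).factorial_ne_zero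
    have h2 : (y : ℚ) + 1 + r + 1 ≠ 0 := by positivity
    push_cast
    field_simp
    ring

lemma hz_Drs (r y : ℕ) : ∀ s, s ≤ r →
    ∑ a ∈ Finset.range (r + 1), (-1 : ℚ) ^ a * r.choose a * (a : ℚ) ^ s /
        ((a : ℚ) + ((y + 1 : ℕ) : ℚ)) =
      (-((y + 1 : ℕ) : ℚ)) ^ s * ((r.factorial : ℚ) * y.factorial / ((y + 1 + r).factorial : ℚ)) := by
  intro s
  induction s with
  | zero =>
    intro _
    rw [← hz_beta, pow_zero, one_mul]
    refine Finset.sum_congr rfl fun a _ => ?_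
    ring
  | succ s ih =>
    intro hs
    have : ∀ a ∈ Finset.range (r + 1), (-1 : ℚ) ^ a * r.choose a * (a : ℚ) ^ (s + 1) /
        ((a : ℚ) + ((y + 1 : ℕ) : ℚ)) = (-1 : ℚ) ^ a * r.choose a * (a : ℚ) ^ s +
        (-((y + 1 : ℕ) : ℚ)) * ((-1 : ℚ) ^ a * r.choose a * (a : ℚ) ^ s /
        ((a : ℚ) + ((y + 1 : ℕ) : ℚ))) := by
      intro a _
      have h2 : (a : ℚ) + ((y + 1 : ℕ) : ℚ) ≠ 0 := by positivity
      field_simp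
      ring
    rw [Finset.sum_congr rfl this, Finset.sum_add_distrib, hz_fd (by omega), ← Finset.mul_sum,
      ih (by omega)]
    ring

/-- The partial fraction identity behind the pair terms. -/
lemma hz_Eprime (x y : ℕ) :
    (∑ a ∈ Finset.range (x + 1), (x.choose a : ℚ) * (a : ℚ) ^ a * ((x - a : ℕ) : ℚ) ^ (x - a) /
        ((a : ℚ) + ((y + 1 : ℕ) : ℚ))) =
      ∑ i ∈ Finset.range (x + 1), (x : ℚ) ^ i * x.choose i * ((y + 1 : ℕ) : ℚ) ^ (x - i) *
        (((x - i).factorial : ℚ) * y.factorial / ((y + 1 + (x - i)).factorial : ℚ)) := by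
  have h1 : ∀ a ∈ Finset.range (x + 1), (x.choose a : ℚ) * (a : ℚ) ^ a *
      ((x - a : ℕ) : ℚ) ^ (x - a) / ((a : ℚ) + ((y + 1 : ℕ) : ℚ)) =
      ∑ i ∈ Finset.range (x + 1 - a), (x : ℚ) ^ i * x.choose i * ((-1) ^ (x - i) *
        ((-1 : ℚ) ^ a * (x - i).choose a * (a : ℚ) ^ (x - i) / ((a : ℚ) + ((y + 1 : ℕ) : ℚ)))) := by
    intro a ha
    have hax : a ≤ x := by simpa [Nat.lt_succ_iff] using ha
    rw [Nat.cast_sub hax, sub_eq_add_neg, add_pow, Finset.mul_sum, Finset.sum_div,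
      show x + 1 - a = x - a + 1 by omega]
    refine Finset.sum_congr rfl fun i hi => ?_
    have hi' : i ≤ x - a := by simpa [Nat.lt_succ_iff] using hi
    obtain ⟨c, hc⟩ := Nat.exists_eq_add_of_le hi'
    have hx : x = a + (i + c) := by omega
    have e1 : x - a - i = c := by omega
    have e2 : x - i = a + c := by omega
    have hch : x.choose a * (x - a).choose i = x.choose i * (x - i).choose a := by
      have q1 := Nat.choose_mul (n := x) (k := a + i) (s := a) (by omega)
      have q2 := Nat.choose_mul (n := x) (k := a + i) (s := i) (by omega)
      rw [show a + i - a = i by omega] at q1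
      rw [show a + i - i = a by omega] at q2
      have q3 : (a + i).choose a = (a + i).choose i := Nat.choose_symm_add
      rw [← q1, ← q2, q3]
    have hch' : (x.choose a : ℚ) * ((x - a).choose i : ℚ) = x.choose i * (x - i).choose a := by
      exact_mod_cast hch
    rw [e1, e2]
    rw [e2] at hch'
    have e : ((-1 : ℚ) ^ a) * (-1) ^ a = 1 := by rw [← mul_pow]; simp
    have en : (-(a : ℚ)) ^ c = (-1) ^ c * (a : ℚ) ^ c := by rw [neg_pow]
    have hne : (a : ℚ) + ((y + 1 : ℕ) : ℚ) ≠ 0 := by positivity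
    rw [en, ← mul_div_assoc, ← mul_div_assoc]
    congr 1
    rw [pow_add, pow_add]
    linear_combination (a : ℚ) ^ a * (x : ℚ) ^ i * (-1) ^ c * (a : ℚ) ^ c * hch' -
      (x : ℚ) ^ i * x.choose i * (-1) ^ c * ((a + c).choose a) * (a : ℚ) ^ a * (a : ℚ) ^ c * e
  rw [Finset.sum_congr rfl h1]
  rw [Finset.sum_comm' (t' := Finset.range (x + 1)) (s' := fun i => Finset.range (x - i + 1))
    (by intro a i; simp only [Finset.mem_range]; omega)]
  refine Finset.sum_congr rfl fun i _ => ?_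
  rw [← Finset.mul_sum, ← Finset.mul_sum, hz_Drs _ _ _ le_rfl, neg_pow]
  have e : ((-1 : ℚ) ^ (x - i)) * (-1) ^ (x - i) = 1 := by rw [← mul_pow]; simp
  linear_combination ((x : ℚ) ^ i * (x.choose i : ℚ) * ((y + 1 : ℕ) : ℚ) ^ (x - i) *
    ((((x - i).factorial : ℚ)) * (y.factorial : ℚ) / ((y + 1 + (x - i)).factorial : ℚ))) * e

noncomputable def hzpsi (a : ℕ) : ℚ := (a : ℚ) ^ a / (a.factorial : ℚ)

noncomputable def hzphi (a : ℕ) : ℚ := (a : ℚ) * hzpsi a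

lemma hzpsi_pos (a : ℕ) : 0 < hzpsi a := by
  rw [hzpsi]
  rcases Nat.eq_zero_or_pos a with h | h
  · subst h; simp
  · positivity

lemma hzphi_pos {a : ℕ} (h : 0 < a) : 0 < hzphi a :=
  mul_pos (by exact_mod_cast h) (hzpsi_pos a)

noncomputable def hzM (k : ℕ) (x : ℚ) : ℚ :=
  ∑ a ∈ Finset.Ico 1 k, hzpsi a * hzpsi (k - a) / ((a : ℚ) + x)

/-- Full sum, in terms of half of the binomial expansion. -/
lemma hz_half (x y : ℕ) :
    hzphi (y + 1) * ∑ a ∈ Finset.range (x + 1), hzpsi a * hzpsi (x - a) /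
        ((a : ℚ) + ((y + 1 : ℕ) : ℚ)) =
      (∑ i ∈ Finset.range (x + 1), (x : ℚ) ^ i * ((y + 1 : ℕ) : ℚ) ^ (x + (y + 1) - i) *
        (x + (y + 1)).choose i) / ((x + (y + 1)).factorial : ℚ) := by
  have h1 : ∑ a ∈ Finset.range (x + 1), hzpsi a * hzpsi (x - a) /
        ((a : ℚ) + ((y + 1 : ℕ) : ℚ)) = (∑ a ∈ Finset.range (x + 1), (x.choose a : ℚ) *
          (a : ℚ) ^ a * ((x - a : ℕ) : ℚ) ^ (x - a) / ((a : ℚ) + ((y + 1 : ℕ) : ℚ))) /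
          (x.factorial : ℚ) := by
    rw [Finset.sum_div]
    refine Finset.sum_congr rfl fun a ha => ?_
    have hax : a ≤ x := by simpa [Nat.lt_succ_iff] using ha
    rw [Nat.cast_choose ℚ hax, hzpsi, hzpsi]
    have f1 : (x.factorial : ℚ) ≠ 0 := by exact_mod_cast x.factorial_ne_zero
    have f2 : (a.factorial : ℚ) ≠ 0 := by exact_mod_cast a.factorial_ne_zero
    have f3 : ((x - a).factorial : ℚ) ≠ 0 := by exact_mod_cast (x - a).factorial_ne_zero
    have hne : (a : ℚ) + ((y + 1 : ℕ) : ℚ) ≠ 0 := by positivity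
    field_simp
  rw [h1, hz_Eprime, Finset.sum_div, Finset.mul_sum, Finset.sum_div]
  refine Finset.sum_congr rfl fun i hi => ?_
  have hix : i ≤ x := by simpa [Nat.lt_succ_iff] using hi
  obtain ⟨c, rfl⟩ := Nat.exists_eq_add_of_le hix
  rw [Nat.cast_choose ℚ hix, Nat.cast_choose ℚ (show i ≤ i + c + (y + 1) by omega),
    hzphi, hzpsi, show i + c - i = c by omega, show i + c + (y + 1) - i = y + 1 + c by omega,
    Nat.factorial_succ y, pow_add ((y + 1 : ℕ) : ℚ) (y + 1) c]
  have f1 : ((i + c).factorial : ℚ) ≠ 0 := by exact_mod_cast (i + c).factorial_ne_zero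
  have f2 : (i.factorial : ℚ) ≠ 0 := by exact_mod_cast i.factorial_ne_zero
  have f3 : (c.factorial : ℚ) ≠ 0 := by exact_mod_cast c.factorial_ne_zero
  have f4 : ((y + 1 + c).factorial : ℚ) ≠ 0 := by exact_mod_cast (y + 1 + c).factorial_ne_zero
  have f5 : ((i + c + (y + 1)).factorial : ℚ) ≠ 0 := by
    exact_mod_cast (i + c + (y + 1)).factorial_ne_zero
  have f6 : (y.factorial : ℚ) ≠ 0 := by exact_mod_cast y.factorial_ne_zero
  have f7 : (y : ℚ) + 1 ≠ 0 := by positivity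
  push_cast
  field_simp

lemma hz_full (x : ℕ) (hx : 0 < x) (y : ℚ) (hy : 0 < y) :
    ∑ a ∈ Finset.range (x + 1), hzpsi a * hzpsi (x - a) / ((a : ℚ) + y) =
      hzM x y + hzpsi x / y + hzpsi x / (x + y) := by
  rw [Finset.sum_range_succ, Finset.range_eq_Ico, Finset.sum_eq_sum_Ico_succ_bot hx, hzM]
  have : hzpsi 0 = 1 := by simp [hzpsi]
  simp [this]
  ring

lemma hz_pair (x z : ℕ) (hx : 0 < x) (hz : 0 < z) :
    hzphi x * hzM z x + hzphi z * hzM x z = hzpsi (x + z) - 2 * hzpsi x * hzpsi z := by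
  obtain ⟨x, rfl⟩ : ∃ x', x = x' + 1 := ⟨x - 1, by omega⟩
  obtain ⟨z, rfl⟩ : ∃ x', z = x' + 1 := ⟨z - 1, by omega⟩
  have h1 := hz_half (x + 1) z
  have h2 := hz_half (z + 1) x
  rw [hz_full _ hx _ (by positivity)] at h1
  rw [hz_full _ hz _ (by positivity)] at h2
  set X : ℚ := ((x + 1 : ℕ) : ℚ) with hX
  set Z : ℚ := ((z + 1 : ℕ) : ℚ) with hZ
  have hX0 : 0 < X := by positivity
  have hZ0 : 0 < Z := by positivity
  have hb : (X + Z) ^ (x + 1 + (z + 1)) = ∑ i ∈ Finset.range (x + 1 + (z + 1) + 1),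
    X ^ i * Z ^ (x + 1 + (z + 1) - i) * ((x + 1 + (z + 1)).choose i : ℚ) := add_pow _ _ _
  have hsplit : ∑ i ∈ Finset.range (x + 1 + (z + 1) + 1),
    X ^ i * Z ^ (x + 1 + (z + 1) - i) * ((x + 1 + (z + 1)).choose i : ℚ) +
      X ^ (x + 1) * Z ^ (z + 1) * ((x + 1 + (z + 1)).choose (x + 1) : ℚ) =
    ∑ i ∈ Finset.range (x + 1 + 1), X ^ i * Z ^ (x + 1 + (z + 1) - i) *
      ((x + 1 + (z + 1)).choose i : ℚ) +
    ∑ i ∈ Finset.range (z + 1 + 1), Z ^ i * X ^ (z + 1 + (x + 1) - i) *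
      ((z + 1 + (x + 1)).choose i : ℚ) := by
    rw [← Finset.sum_range_reflect (fun i => Z ^ i * X ^ (z + 1 + (x + 1) - i) *
      ((z + 1 + (x + 1)).choose i : ℚ)) (z + 1 + 1), ← Finset.sum_range_add_sum_Ico
      (fun i => X ^ i * Z ^ (x + 1 + (z + 1) - i) * ((x + 1 + (z + 1)).choose i : ℚ))
      (show x + 1 + 1 ≤ x + 1 + (z + 1) + 1 by omega), add_assoc]
    congr 1
    have e : x + 1 + (z + 1) + 1 - (x + 1 + 1) = z + 1 := by omega
    rw [Finset.sum_Ico_eq_sum_range, e, Finset.sum_range_succ' _ (z + 1)]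
    congr 1
    · refine Finset.sum_congr rfl fun i hi => ?_
      have hi' : i < z + 1 := Finset.mem_range.1 hi
      have e1 : x + 1 + (z + 1) - (x + 1 + 1 + i) = z + 1 + 1 - 1 - (i + 1) := by omega
      have e2 : z + 1 + (x + 1) - (z + 1 + 1 - 1 - (i + 1)) = x + 1 + 1 + i := by omega
      rw [e1, e2, Nat.choose_symm_of_eq_add
        (show z + 1 + (x + 1) = (z + 1 + 1 - 1 - (i + 1)) + (x + 1 + 1 + i) by omega)]
      rw [show x + 1 + (z + 1) = z + 1 + (x + 1) by ring]
      ring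
    · have e1 : z + 1 + 1 - 1 - 0 = z + 1 := by omega
      rw [e1, Nat.add_sub_cancel_left, show x + 1 + (z + 1) = z + 1 + (x + 1) by ring,
        Nat.choose_symm_add]
      ring
  have hc : z + 1 + (x + 1) = x + 1 + (z + 1) := by ring
  rw [hc] at h2 hsplit
  have hadd := congrArg₂ (fun s t : ℚ => s + t) h1 h2
  beta_reduce at hadd
  rw [← add_div, ← hsplit, ← hb] at hadd
  have hpsi : hzpsi (x + 1 + (z + 1)) = (X + Z) ^ (x + 1 + (z + 1)) /
      ((x + 1 + (z + 1)).factorial : ℚ) := by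
    rw [hzpsi, hX, hZ]; push_cast; ring
  have hpp : X ^ (x + 1) * Z ^ (z + 1) * ((x + 1 + (z + 1)).choose (x + 1) : ℚ) /
      ((x + 1 + (z + 1)).factorial : ℚ) = hzpsi (x + 1) * hzpsi (z + 1) := by
    rw [Nat.cast_choose ℚ (by omega), hzpsi, hzpsi, Nat.add_sub_cancel_left]
    have f1 : ((x + 1).factorial : ℚ) ≠ 0 := by exact_mod_cast (x + 1).factorial_ne_zero
    have f2 : ((z + 1).factorial : ℚ) ≠ 0 := by exact_mod_cast (z + 1).factorial_ne_zero
    have f3 : ((x + 1 + (z + 1)).factorial : ℚ) ≠ 0 := by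
      exact_mod_cast (x + 1 + (z + 1)).factorial_ne_zero
    rw [← hX, ← hZ]
    field_simp
  rw [add_div, hpp, ← hpsi] at hadd
  have p1 : hzphi (x + 1) = X * hzpsi (x + 1) := rfl
  have p2 : hzphi (z + 1) = Z * hzpsi (z + 1) := rfl
  have q1 : hzphi (z + 1) * (hzpsi (x + 1) / Z) = hzpsi (x + 1) * hzpsi (z + 1) := by
    rw [p2]; field_simp
  have q2 : hzphi (x + 1) * (hzpsi (z + 1) / X) = hzpsi (x + 1) * hzpsi (z + 1) := by
    rw [p1]; field_simp
  have q3 : hzphi (z + 1) * (hzpsi (x + 1) / (X + Z)) + hzphi (x + 1) * (hzpsi (z + 1) / (Z + X)) =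
      hzpsi (x + 1) * hzpsi (z + 1) := by
    rw [p1, p2, add_comm Z X]
    have : X + Z ≠ 0 := by positivity
    field_simp
    ring
  linear_combination hadd - q1 - q2 - q3

noncomputable def hzW (k : ℕ) : ℚ :=
  ∑ a ∈ Finset.Ico 1 k, hzpsi a * hzpsi (k - a) / ((k - a : ℕ) : ℚ)

lemma hz_W (k : ℕ) (hk : 0 < k) : hzW k = hzpsi k - hzpsi k / k := by
  obtain ⟨K, rfl⟩ : ∃ x', k = x' + 1 := ⟨k - 1, by omega⟩
  have h := hz_g (fun _ : ℕ => (1 : ℚ)) (Finset.range K) 1 0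
  have h1 : ∀ T ∈ (Finset.range K).powerset, hzB (fun _ : ℕ => (1 : ℚ)) 1 T *
      hzP (fun _ : ℕ => (1 : ℚ)) 0 (Finset.range K \ T) =
      (fun j : ℕ => ((1 : ℚ) + j) ^ (j - 1) * ((K - j : ℕ) : ℚ) ^ (K - j)) T.card := by
    intro T hT
    rw [Finset.mem_powerset] at hT
    rw [hzB, hzP]
    simp only [Finset.sum_const, nsmul_eq_mul, mul_one, zero_add, Finset.card_sdiff_of_subset hT,
      Finset.card_range, one_mul]
    split_ifs with h0
    · subst h0; simp
    · rfl
  have h1' := Finset.sum_powerset_apply_card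
    (x := Finset.range K) (fun j : ℕ => ((1 : ℚ) + j) ^ (j - 1) * ((K - j : ℕ) : ℚ) ^ (K - j))
  rw [Finset.sum_congr rfl h1, h1'] at h
  simp only [hzP, Finset.sum_const, Finset.card_range, nsmul_eq_mul, mul_one, add_zero] at h
  have h2 : ∀ j ∈ Finset.range (K + 1), (K.choose j : ℚ) * (((1 : ℚ) + j) ^ (j - 1) *
      ((K - j : ℕ) : ℚ) ^ (K - j)) = (K.factorial : ℚ) *
      (hzpsi (K - j) * hzpsi (j + 1) / ((j + 1 : ℕ) : ℚ)) := by
    intro j hj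
    have hjx : j ≤ K := by simpa [Nat.lt_succ_iff] using hj
    rw [Nat.cast_choose ℚ hjx, hzpsi, hzpsi, Nat.factorial_succ]
    have f1 : (K.factorial : ℚ) ≠ 0 := by exact_mod_cast K.factorial_ne_zero
    have f2 : (j.factorial : ℚ) ≠ 0 := by exact_mod_cast j.factorial_ne_zero
    have f3 : ((K - j).factorial : ℚ) ≠ 0 := by exact_mod_cast (K - j).factorial_ne_zero
    have f4 : (1 : ℚ) + j ≠ 0 := by positivity
    have f5 : ((j + 1 : ℕ) : ℚ) = 1 + j := by push_cast; ring
    have f6 : ((1 : ℚ) + j) ^ (j + 1) = ((1 : ℚ) + j) ^ (j - 1) * (1 + j) ^ 2 := by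
      rcases Nat.eq_zero_or_pos j with h0 | h0
      · subst h0; simp
      · rw [← pow_add]; congr 1; omega
    rw [Nat.cast_mul, f5, f6]
    field_simp
  rw [Finset.sum_congr rfl h2, ← Finset.mul_sum, Finset.sum_range_succ] at h
  have h3 : ∑ j ∈ Finset.range K, hzpsi (K - j) * hzpsi (j + 1) / ((j + 1 : ℕ) : ℚ) =
      hzW (K + 1) := by
    rw [hzW, Finset.sum_Ico_eq_sum_range, Nat.add_sub_cancel, ← Finset.sum_range_reflect]
    refine Finset.sum_congr rfl fun j hj => ?_
    have hj' := Finset.mem_range.1 hj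
    rw [show K - (K - 1 - j) = 1 + j by omega, show K - 1 - j + 1 = K + 1 - (1 + j) by omega]
  have h4 : hzpsi (K - K) = 1 := by simp [hzpsi]
  have f1 : (K.factorial : ℚ) ≠ 0 := by exact_mod_cast K.factorial_ne_zero
  have h5 : (K.factorial : ℚ) * hzpsi (K + 1) = (1 + K) ^ K := by
    rw [hzpsi, Nat.factorial_succ]
    have : (K : ℚ) + 1 ≠ 0 := by positivity
    push_cast
    rw [pow_succ, add_comm (1 : ℚ)]
    field_simp
  rw [h3, h4, ← h5] at h
  have h6 := mul_left_cancel₀ f1 h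
  rw [one_mul] at h6
  linear_combination h6

/-- Symmetric version. -/
lemma hz_W' (k : ℕ) : ∑ a ∈ Finset.Ico 1 k, hzpsi a * hzpsi (k - a) / (a : ℚ) = hzW k := by
  rw [hzW]
  refine Finset.sum_nbij' (fun a => k - a) (fun a => k - a) ?_ ?_ ?_ ?_ ?_
  all_goals intro a ha; rw [Finset.mem_Ico] at ha
  · rw [Finset.mem_Ico]; omega
  · rw [Finset.mem_Ico]; omega
  · omega
  · omega
  · rw [show k - (k - a) = a by omega]; ring

lemma hz_M' (k : ℕ) (x : ℚ) :
    ∑ a ∈ Finset.Ico 1 k, hzpsi a * hzpsi (k - a) / (((k - a : ℕ) : ℚ) + x) = hzM k x := by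
  rw [hzM]
  refine Finset.sum_nbij' (fun a => k - a) (fun a => k - a) ?_ ?_ ?_ ?_ ?_
  all_goals intro a ha; rw [Finset.mem_Ico] at ha
  · rw [Finset.mem_Ico]; omega
  · rw [Finset.mem_Ico]; omega
  · omega
  · omega
  · rw [show k - (k - a) = a by omega]; ring

end OneVariable

open Equiv

section StarIdentity
variable {ι : Type*} [DecidableEq ι]

lemma hz_sum_swap (U : Finset ι) (f : ι → ι → ℚ) :
    ∑ j ∈ U, ∑ i ∈ U.erase j, f i j = ∑ j ∈ U, ∑ i ∈ U.erase j, f j i := by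
  refine Finset.sum_comm' ?_
  intro x y
  simp only [Finset.mem_erase]
  tauto

lemma hz_cut (x : ι → ℕ) (R : Finset ι) (k : ℕ) (hx : ∀ i ∈ R, 0 < x i) (n : ℚ)
    (hn : n = k + ∑ i ∈ R, (x i : ℚ)) :
    ∑ a ∈ Finset.Ico 1 k, hzphi a * hzphi (k - a) *
      (∑ T ∈ R.powerset, hzC (fun i => (x i : ℚ)) (a : ℚ) T *
        hzC (fun i => (x i : ℚ)) ((k - a : ℕ) : ℚ) (R \ T)) =
      n ^ ((R.card : ℤ) - 3) * (2 * n * k * hzW k -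
        2 * ∑ i ∈ R, (x i : ℚ) * (k + x i) * hzM k (x i)) := by
  have h1 : ∀ a ∈ Finset.Ico 1 k, hzphi a * hzphi (k - a) *
      (∑ T ∈ R.powerset, hzC (fun i => (x i : ℚ)) (a : ℚ) T *
        hzC (fun i => (x i : ℚ)) ((k - a : ℕ) : ℚ) (R \ T)) =
      n ^ ((R.card : ℤ) - 3) * (
        n ^ 2 * (hzpsi a * hzpsi (k - a) / (a : ℚ) + hzpsi a * hzpsi (k - a) / ((k - a : ℕ) : ℚ))
        - n * ∑ i ∈ R, (x i : ℚ) * ((hzpsi a * hzpsi (k - a) / (a : ℚ) +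
            hzpsi a * hzpsi (k - a) / ((k - a : ℕ) : ℚ)) +
            (hzpsi a * hzpsi (k - a) / ((a : ℚ) + x i) +
              hzpsi a * hzpsi (k - a) / (((k - a : ℕ) : ℚ) + x i)))
        + ∑ j ∈ R, ∑ i ∈ R.erase j, (x i : ℚ) * x j *
            (hzpsi a * hzpsi (k - a) / ((a : ℚ) + x i) +
              hzpsi a * hzpsi (k - a) / (((k - a : ℕ) : ℚ) + x j))) := by
    intro a ha
    rw [Finset.mem_Ico] at ha
    have hk : (k : ℚ) = a + ((k - a : ℕ) : ℚ) := by
      rw [← Nat.cast_add]; congr 1; omega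
    have ha0 : (0 : ℚ) < a := by exact_mod_cast ha.1
    have hb0 : (0 : ℚ) < ((k - a : ℕ) : ℚ) := by
      have : 0 < k - a := by omega
      exact_mod_cast this
    have hx' : ∀ i ∈ R, 0 < (x i : ℚ) := fun i hi => by exact_mod_cast hx i hi
    rw [hz_A (fun i => (x i : ℚ)) R a ((k - a : ℕ) : ℚ) n ha0 hb0 hx' (by rw [hn, hk])]
    simp only [hzphi]
    generalize ((k - a : ℕ) : ℚ) = b at *
    generalize hzpsi a = P
    generalize hzpsi (k - a) = Q
    have e1 : P * Q / (a : ℚ) + P * Q / b = (↑a * P * (b * Q)) * ((↑a + b) / (a ^ 2 * b ^ 2)) := by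
      field_simp
      ring
    have e2 : ∀ i ∈ R, (x i : ℚ) * (P * Q / ↑a + P * Q / b + (P * Q / (↑a + ↑(x i)) + P * Q / (b + ↑(x i)))) =
      (↑a * P * (b * Q)) * (↑(x i) * (↑a + b + ↑(x i)) *
        (1 / (↑a * (↑a + ↑(x i)) * b ^ 2) + 1 / (b * (b + ↑(x i)) * ↑a ^ 2))) := by
      intro i hi
      have := hx' i hi
      field_simp
      ring
    have e3 : ∀ j ∈ R, ∀ i ∈ R.erase j, (x i : ℚ) * ↑(x j) * (P * Q / (↑a + ↑(x i)) + P * Q / (b + ↑(x j))) =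
      (↑a * P * (b * Q)) * (↑(x i) * ↑(x j) * (↑a + b + ↑(x i) + ↑(x j)) /
        (↑a * b * (↑a + ↑(x i)) * (b + ↑(x j)))) := by
      intro j hj i hi
      have := hx' j hj
      have := hx' i (Finset.mem_of_mem_erase hi)
      field_simp
      ring
    rw [Finset.sum_congr rfl e2, Finset.sum_congr rfl (fun j hj => Finset.sum_congr rfl (e3 j hj)), e1]
    simp only [← Finset.mul_sum]
    ring
  rw [Finset.sum_congr rfl h1, ← Finset.mul_sum]
  congr 1
  have c1 : ∑ a ∈ Finset.Ico 1 k, (hzpsi a * hzpsi (k - a) / (a : ℚ) +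
      hzpsi a * hzpsi (k - a) / ((k - a : ℕ) : ℚ)) = 2 * hzW k := by
    rw [Finset.sum_add_distrib, hz_W', ← hzW]; ring
  have c2 : ∀ y z : ℚ, ∑ a ∈ Finset.Ico 1 k, (hzpsi a * hzpsi (k - a) / ((a : ℚ) + y) +
      hzpsi a * hzpsi (k - a) / (((k - a : ℕ) : ℚ) + z)) = hzM k y + hzM k z := by
    intro y z
    rw [Finset.sum_add_distrib, hz_M', ← hzM]
  rw [Finset.sum_add_distrib, Finset.sum_sub_distrib, ← Finset.mul_sum, c1, ← Finset.mul_sum,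
    Finset.sum_comm, Finset.sum_comm (s := Finset.Ico 1 k) (t := R)]
  have d2 : ∀ i ∈ R, ∑ a ∈ Finset.Ico 1 k, (x i : ℚ) * ((hzpsi a * hzpsi (k - a) / (a : ℚ) +
            hzpsi a * hzpsi (k - a) / ((k - a : ℕ) : ℚ)) +
            (hzpsi a * hzpsi (k - a) / ((a : ℚ) + x i) +
              hzpsi a * hzpsi (k - a) / (((k - a : ℕ) : ℚ) + x i))) =
      2 * hzW k * (x i : ℚ) + 2 * ((x i : ℚ) * hzM k (x i)) := by
    intro i hi
    rw [← Finset.mul_sum, Finset.sum_add_distrib, c1, c2]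
    ring
  have d3 : ∀ j ∈ R, ∑ a ∈ Finset.Ico 1 k, ∑ i ∈ R.erase j, (x i : ℚ) * x j *
            (hzpsi a * hzpsi (k - a) / ((a : ℚ) + x i) +
              hzpsi a * hzpsi (k - a) / (((k - a : ℕ) : ℚ) + x j)) =
      ∑ i ∈ R.erase j, (x i : ℚ) * x j * hzM k (x i) + ∑ i ∈ R.erase j, (x j : ℚ) * x i * hzM k (x j) := by
    intro j hj
    rw [Finset.sum_comm, ← Finset.sum_add_distrib]
    refine Finset.sum_congr rfl fun i hi => ?_
    rw [← Finset.mul_sum, c2]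
    ring
  rw [Finset.sum_congr rfl d2, Finset.sum_congr rfl d3]
  rw [Finset.sum_add_distrib, Finset.sum_add_distrib,
    hz_sum_swap R (fun i j => (x i : ℚ) * x j * hzM k (x i)), ← Finset.mul_sum, ← Finset.mul_sum]
  have d4 : ∀ j ∈ R, ∑ i ∈ R.erase j, (x j : ℚ) * x i * hzM k (x j) =
      (n - k) * ((x j : ℚ) * hzM k (x j)) - (x j : ℚ) * (x j : ℚ) * hzM k (x j) := by
    intro j hj
    have : ∑ i ∈ R.erase j, (x i : ℚ) = n - k - x j := by
      rw [hn, ← Finset.add_sum_erase R _ hj]; ring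
    rw [← Finset.sum_mul, ← Finset.mul_sum, this]; ring
  have d5 : ∀ j ∈ R, (x j : ℚ) * (k + x j) * hzM k (x j) = k * ((x j : ℚ) * hzM k (x j)) +
      (x j : ℚ) * (x j : ℚ) * hzM k (x j) := by
    intro j hj; ring
  rw [Finset.sum_congr rfl d4, Finset.sum_congr rfl d5, Finset.sum_sub_distrib, Finset.sum_add_distrib,
    ← Finset.mul_sum, ← Finset.mul_sum]
  have hS : ∑ i ∈ R, (x i : ℚ) = n - k := by rw [hn]; ring
  rw [hS]
  ring

/-- The cut-and-join identity. -/
lemma hz_star (x : ι → ℕ) (U : Finset ι) (hU : U.Nonempty) (hx : ∀ i ∈ U, 0 < x i) (n : ℚ)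
    (hn : n = ∑ i ∈ U, (x i : ℚ)) :
    (∑ i ∈ U, ∑ j ∈ U.erase i, (x i : ℚ) * x j * (n ^ ((U.card : ℤ) - 4) *
      (hzphi (x i + x j) * ∏ l ∈ (U.erase i).erase j, hzphi (x l)))) +
    (∑ k ∈ U, (x k : ℚ) * ∑ a ∈ Finset.Ico 1 (x k), hzphi a * hzphi (x k - a) *
      (∏ l ∈ U.erase k, hzphi (x l)) *
      (∑ T ∈ (U.erase k).powerset, hzC (fun i => (x i : ℚ)) (a : ℚ) T *
        hzC (fun i => (x i : ℚ)) ((x k - a : ℕ) : ℚ) (U.erase k \ T))) =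
    2 * (n + U.card - 2) * (n ^ ((U.card : ℤ) - 3) * ∏ l ∈ U, hzphi (x l)) := by
  have hn0 : 0 < n := by
    rw [hn]; exact Finset.sum_pos (fun i hi => by exact_mod_cast hx i hi) hU
  have hz : n ^ ((U.card : ℤ) - 3) = n ^ ((U.card : ℤ) - 4) * n := by
    rw [← zpow_add_one₀ hn0.ne']; congr 1; ring
  set Φ := ∏ l ∈ U, hzphi (x l) with hΦ
  set Q := n ^ ((U.card : ℤ) - 4) with hQ
  have h1 : ∀ k ∈ U, (x k : ℚ) * ∑ a ∈ Finset.Ico 1 (x k), hzphi a * hzphi (x k - a) *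
      (∏ l ∈ U.erase k, hzphi (x l)) *
      (∑ T ∈ (U.erase k).powerset, hzC (fun i => (x i : ℚ)) (a : ℚ) T *
        hzC (fun i => (x i : ℚ)) ((x k - a : ℕ) : ℚ) (U.erase k \ T)) =
      Q * (2 * n * (x k - 1) * Φ) - 2 * Q * ∑ i ∈ U.erase k, (x k : ℚ) * x i * (x k + x i) *
        hzM (x k) (x i) * hzphi (x i) * ∏ l ∈ (U.erase k).erase i, hzphi (x l) := by
    intro k hk
    have hc := hz_cut x (U.erase k) (x k) (fun i hi => hx i (Finset.mem_of_mem_erase hi)) n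
      (by rw [hn, ← Finset.add_sum_erase U _ hk])
    have hcard : (((U.erase k).card : ℕ) : ℤ) - 3 = (U.card : ℤ) - 4 := by
      rw [Finset.card_erase_of_mem hk, Nat.cast_sub (Finset.card_pos.2 hU)]; push_cast; ring
    rw [hcard, ← hQ] at hc
    have e1 : ∀ a ∈ Finset.Ico 1 (x k), hzphi a * hzphi (x k - a) *
      (∏ l ∈ U.erase k, hzphi (x l)) *
      (∑ T ∈ (U.erase k).powerset, hzC (fun i => (x i : ℚ)) (a : ℚ) T *
        hzC (fun i => (x i : ℚ)) ((x k - a : ℕ) : ℚ) (U.erase k \ T)) =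
      (∏ l ∈ U.erase k, hzphi (x l)) * (hzphi a * hzphi (x k - a) *
      (∑ T ∈ (U.erase k).powerset, hzC (fun i => (x i : ℚ)) (a : ℚ) T *
        hzC (fun i => (x i : ℚ)) ((x k - a : ℕ) : ℚ) (U.erase k \ T))) := fun a _ => by ring
    rw [Finset.sum_congr rfl e1, ← Finset.mul_sum, hc]
    have e2 : ∀ i ∈ U.erase k, (x k : ℚ) * x i * (x k + x i) *
        hzM (x k) (x i) * hzphi (x i) * ∏ l ∈ (U.erase k).erase i, hzphi (x l) =
        (x k * ∏ l ∈ U.erase k, hzphi (x l)) * ((x i : ℚ) * (x k + x i) * hzM (x k) (x i)) := by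
      intro i hi
      rw [← Finset.mul_prod_erase _ _ hi]; ring
    have hxk : (x k : ℚ) ≠ 0 := by exact_mod_cast (hx k hk).ne'
    have e3 : Φ = x k * hzpsi (x k) * ∏ l ∈ U.erase k, hzphi (x l) := by
      rw [hΦ, ← Finset.mul_prod_erase _ _ hk, hzphi]
    rw [Finset.sum_congr rfl e2, ← Finset.mul_sum, hz_W _ (hx k hk), e3]
    field_simp
  rw [Finset.sum_congr rfl h1, Finset.sum_sub_distrib, ← Finset.mul_sum, ← Finset.mul_sum]
  have hsym : ∀ G : ι → ι → ℚ, 2 * ∑ k ∈ U, ∑ i ∈ U.erase k, G k i =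
      ∑ k ∈ U, ∑ i ∈ U.erase k, (G k i + G i k) := by
    intro G
    simp only [Finset.sum_add_distrib]
    rw [hz_sum_swap U G]; ring
  have h2 : ∀ k ∈ U, ∀ i ∈ U.erase k,
      ((x k : ℚ) * x i * (x k + x i) *
        hzM (x k) (x i) * hzphi (x i) * ∏ l ∈ (U.erase k).erase i, hzphi (x l)) +
      ((x i : ℚ) * x k * (x i + x k) *
        hzM (x i) (x k) * hzphi (x k) * ∏ l ∈ (U.erase i).erase k, hzphi (x l)) =
      (x k : ℚ) * x i * (hzphi (x k + x i) * ∏ l ∈ (U.erase k).erase i, hzphi (x l)) -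
        2 * Φ * (x k + x i) := by
    intro k hk i hi
    have hi' := Finset.mem_of_mem_erase hi
    rw [Finset.erase_right_comm (a := i) (b := k)]
    have e3 : Φ = x k * hzpsi (x k) * (x i * hzpsi (x i) * ∏ l ∈ (U.erase k).erase i, hzphi (x l)) := by
      rw [hΦ, ← Finset.mul_prod_erase _ _ hk, ← Finset.mul_prod_erase _ _ hi, hzphi, hzphi]
    have hp := hz_pair (x k) (x i) (hx k hk) (hx i hi')
    rw [e3, show hzphi (x k + x i) = ((x k + x i : ℕ) : ℚ) * hzpsi (x k + x i) from rfl]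
    push_cast
    linear_combination ((x k : ℚ) * x i * (x k + x i) * ∏ l ∈ (U.erase k).erase i, hzphi (x l)) * hp
  have h3 := hsym (fun k i => (x k : ℚ) * x i * (x k + x i) *
        hzM (x k) (x i) * hzphi (x i) * ∏ l ∈ (U.erase k).erase i, hzphi (x l))
  beta_reduce at h3
  rw [Finset.sum_congr rfl (fun k hk => Finset.sum_congr rfl (h2 k hk))] at h3
  have h4 : ∑ k ∈ U, ∑ i ∈ U.erase k, ((x k : ℚ) + x i) = 2 * (U.card - 1) * n := by
    have : ∀ k ∈ U, ∑ i ∈ U.erase k, ((x k : ℚ) + x i) = (U.card - 2) * x k + n := by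
      intro k hk
      rw [Finset.sum_add_distrib, Finset.sum_const, nsmul_eq_mul, Finset.card_erase_of_mem hk,
        Nat.cast_sub (Finset.card_pos.2 hU), hn, ← Finset.add_sum_erase U _ hk]
      push_cast; ring
    rw [Finset.sum_congr rfl this, Finset.sum_add_distrib, ← Finset.mul_sum, ← hn, Finset.sum_const,
      nsmul_eq_mul]
    ring
  simp only [Finset.sum_sub_distrib, ← Finset.mul_sum] at h3
  rw [h4] at h3
  have h5 : ∑ k ∈ U, 2 * n * ((x k : ℚ) - 1) * Φ = 2 * n * (n - U.card) * Φ := by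
    rw [← Finset.sum_mul, ← Finset.mul_sum, Finset.sum_sub_distrib, ← hn, Finset.sum_const,
      nsmul_eq_mul, mul_one]
  have h6 : (∑ i ∈ U, ∑ j ∈ U.erase i, (x i : ℚ) * x j * (Q *
      (hzphi (x i + x j) * ∏ l ∈ (U.erase i).erase j, hzphi (x l)))) =
      Q * ∑ i ∈ U, ∑ j ∈ U.erase i, (x i : ℚ) * x j * 
      (hzphi (x i + x j) * ∏ l ∈ (U.erase i).erase j, hzphi (x l)) := by
    simp only [Finset.mul_sum]
    refine Finset.sum_congr rfl fun i _ => Finset.sum_congr rfl fun j _ => by ring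
  rw [h5, h6, hz]
  linear_combination (-Q) * h3

end StarIdentity

open Equiv

section ListSums
variable {α : Type*}

/-- Sum of the weight `w` over all lists of length `m` with entries in `E`. -/
def hzw (E : Finset α) : ℕ → (List α → ℚ) → ℚ
  | 0, w => w []
  | m + 1, w => ∑ e ∈ E, hzw E m (fun l => w (e :: l))

lemma hzw_zero (E : Finset α) (w : List α → ℚ) : hzw E 0 w = w [] := rfl

lemma hzw_succ (E : Finset α) (m : ℕ) (w : List α → ℚ) :
    hzw E (m + 1) w = ∑ e ∈ E, hzw E m (fun l => w (e :: l)) := rfl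

lemma hzw_congr (E : Finset α) (m : ℕ) : ∀ (w w' : List α → ℚ),
    (∀ l : List α, l.length = m → (∀ e ∈ l, e ∈ E) → w l = w' l) → hzw E m w = hzw E m w' := by
  induction m with
  | zero => intro w w' h; exact h [] rfl (by simp)
  | succ m ih =>
    intro w w' h
    rw [hzw_succ, hzw_succ]
    refine Finset.sum_congr rfl fun e he => ih _ _ fun l hl hle => h _ (by simp [hl]) ?_
    intro e' he'
    rcases List.mem_cons.1 he' with h1 | h1
    · rwa [h1]
    · exact hle _ h1

lemma hzw_add (E : Finset α) (m : ℕ) : ∀ (w w' : List α → ℚ),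
    hzw E m (fun l => w l + w' l) = hzw E m w + hzw E m w' := by
  induction m with
  | zero => intro w w'; rfl
  | succ m ih =>
    intro w w'
    simp only [hzw_succ, ih, Finset.sum_add_distrib]

lemma hzw_const_zero (E : Finset α) (m : ℕ) : hzw E m (fun _ => 0) = 0 := by
  induction m with
  | zero => rfl
  | succ m ih => simp only [hzw_succ, ih, Finset.sum_const_zero]

lemma hzw_sum {κ : Type*} (S : Finset κ) (E : Finset α) (m : ℕ) (w : κ → List α → ℚ) :
    hzw E m (fun l => ∑ k ∈ S, w k l) = ∑ k ∈ S, hzw E m (w k) := by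
  classical
  induction S using Finset.induction_on with
  | empty => simp [hzw_const_zero]
  | insert a S ha ih =>
    simp only [Finset.sum_insert ha, hzw_add, ih]

lemma hzw_restrict {E E' : Finset α} (hE : E' ⊆ E) (m : ℕ) : ∀ (w : List α → ℚ),
    (∀ l : List α, (∀ e ∈ l, e ∈ E) → (∃ e ∈ l, e ∉ E') → w l = 0) → hzw E m w = hzw E' m w := by
  classical
  induction m with
  | zero => intro w h; rfl
  | succ m ih =>
    intro w h
    rw [hzw_succ, hzw_succ]
    symm
    have h1 : ∀ e ∈ E', hzw E' m (fun l => w (e :: l)) = hzw E m (fun l => w (e :: l)) := by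
      intro e he
      symm
      apply ih
      rintro l hl ⟨e', he', hne⟩
      refine h _ ?_ ⟨e', List.mem_cons_of_mem _ he', hne⟩
      intro e'' h''
      rcases List.mem_cons.1 h'' with h2 | h2
      · rw [h2]; exact hE he
      · exact hl _ h2
    rw [Finset.sum_congr rfl h1]
    refine Finset.sum_subset hE fun e he hne => ?_
    rw [← hzw_const_zero E m]
    refine hzw_congr _ _ _ _ fun l _ hl => h _ ?_ ⟨e, List.mem_cons_self, hne⟩
    intro e'' h''
    rcases List.mem_cons.1 h'' with h2 | h2
    · rwa [h2]
    · exact hl _ h2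

lemma hzw_shuffle [DecidableEq α] {E₁ E₂ : Finset α} (hd : Disjoint E₁ E₂) (m : ℕ) :
    ∀ (w₁ w₂ : List α → ℚ),
    hzw (E₁ ∪ E₂) m (fun l => w₁ (l.filter (· ∈ E₁)) * w₂ (l.filter (· ∈ E₂))) =
      ∑ p ∈ Finset.HasAntidiagonal.antidiagonal m, (m.choose p.1 : ℚ) * (hzw E₁ p.1 w₁ * hzw E₂ p.2 w₂) := by
  induction m with
  | zero => intro w₁ w₂; simp [hzw_zero]
  | succ m ih =>
    intro w₁ w₂
    rw [Finset.sum_antidiagonal_choose_succ_mul (fun i j => hzw E₁ i w₁ * hzw E₂ j w₂),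
      hzw_succ, Finset.sum_union hd, add_comm]
    congr 1
    · have : ∀ e ∈ E₂, hzw (E₁ ∪ E₂) m (fun l => w₁ ((e :: l).filter (· ∈ E₁)) *
          w₂ ((e :: l).filter (· ∈ E₂))) = ∑ p ∈ Finset.HasAntidiagonal.antidiagonal m, (m.choose p.1 : ℚ) *
            (hzw E₁ p.1 w₁ * hzw E₂ p.2 (fun l => w₂ (e :: l))) := by
        intro e he
        have he' : e ∉ E₁ := Finset.disjoint_right.1 hd he
        rw [← ih]
        simp [he, he']
      rw [Finset.sum_congr rfl this, Finset.sum_comm]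
      refine Finset.sum_congr rfl fun p _ => ?_
      rw [hzw_succ]
      simp only [Finset.mul_sum]
    · have : ∀ e ∈ E₁, hzw (E₁ ∪ E₂) m (fun l => w₁ ((e :: l).filter (· ∈ E₁)) *
          w₂ ((e :: l).filter (· ∈ E₂))) = ∑ p ∈ Finset.HasAntidiagonal.antidiagonal m, (m.choose p.1 : ℚ) *
            (hzw E₁ p.1 (fun l => w₁ (e :: l)) * hzw E₂ p.2 w₂) := by
        intro e he
        have he' : e ∉ E₂ := Finset.disjoint_left.1 hd he
        rw [← ih]
        simp [he, he']
      rw [Finset.sum_congr rfl this, Finset.sum_comm]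
      refine Finset.sum_congr rfl fun p hp => ?_
      have : m.choose p.1 = m.choose p.2 := by
        rw [Finset.HasAntidiagonal.mem_antidiagonal] at hp
        exact Nat.choose_symm_of_eq_add (by omega)
      rw [hzw_succ, ← this]
      simp only [Finset.mul_sum, Finset.sum_mul]

lemma hzw_card [Fintype α] (E : Finset α) (m : ℕ) : ∀ (P : List α → Prop) [DecidablePred P],
    (Nat.card {f : Fin m → α // (∀ i, f i ∈ E) ∧ P (List.ofFn f)} : ℚ) =
      hzw E m (fun l => if P l then 1 else 0) := by
  classical
  induction m with
  | zero =>
    intro P _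
    rw [hzw_zero]
    split_ifs with h
    · have : Nat.card {f : Fin 0 → α // (∀ i, f i ∈ E) ∧ P (List.ofFn f)} = 1 := by
        rw [Nat.card_eq_one_iff_unique]
        refine ⟨inferInstance, ⟨⟨Fin.elim0, by simpa using h⟩⟩⟩
      rw [this]; simp
    · have : Nat.card {f : Fin 0 → α // (∀ i, f i ∈ E) ∧ P (List.ofFn f)} = 0 := by
        rw [Nat.card_eq_zero]
        left
        exact ⟨fun f => h (by simpa using f.2.2)⟩
      rw [this]; simp
  | succ m ih =>
    intro P _
    rw [hzw_succ]
    have h1 : ∀ e ∈ E, hzw E m (fun l => if P (e :: l) then (1 : ℚ) else 0) =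
      (Nat.card {f : Fin m → α // (∀ i, f i ∈ E) ∧ P (e :: List.ofFn f)} : ℚ) := by
      intro e _
      rw [ih (fun l => P (e :: l))]
    rw [Finset.sum_congr rfl h1, ← Nat.cast_sum]
    congr 1
    have e1 : {f : Fin (m + 1) → α // (∀ i, f i ∈ E) ∧ P (List.ofFn f)} ≃
        (Σ e : E, {f : Fin m → α // (∀ i, f i ∈ E) ∧ P ((e : α) :: List.ofFn f)}) :=
      { toFun := fun f => ⟨⟨f.1 0, f.2.1 0⟩, ⟨fun i => f.1 i.succ, fun i => f.2.1 _, by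
            have := f.2.2
            rwa [List.ofFn_succ] at this⟩⟩
        invFun := fun g => ⟨Fin.cons g.1.1 g.2.1, by
          constructor
          · intro i
            refine Fin.cases ?_ ?_ i
            · simp
            · intro i; simpa using g.2.2.1 i
          · rw [List.ofFn_succ]
            simpa using g.2.2.2⟩
        left_inv := by
          intro f
          apply Subtype.ext
          funext i
          refine Fin.cases ?_ ?_ i
          · simp
          · intro i; simp
        right_inv := by
          rintro ⟨e, g⟩
          rfl }
    rw [Nat.card_congr e1, Nat.card_sigma, ← Finset.sum_attach E]
    rfl

end ListSums

open Equiv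

set_option linter.unusedSectionVars false

open Classical in
/-- Indicator of a proposition. -/
noncomputable def hzi (P : Prop) : ℚ := if P then 1 else 0

lemma hzi_pos {P : Prop} (h : P) : hzi P = 1 := if_pos h
lemma hzi_neg {P : Prop} (h : ¬ P) : hzi P = 0 := if_neg h
lemma hzi_congr {P Q : Prop} (h : P ↔ Q) : hzi P = hzi Q := by rw [propext h]
lemma hzi_and (P Q : Prop) : hzi (P ∧ Q) = hzi P * hzi Q := by
  by_cases hP : P <;> by_cases hQ : Q <;> simp [hzi, hP, hQ]

section Connectivity
variable {V : Type*} [Fintype V] [DecidableEq V]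

open Classical in
/-- Transpositions supported in `A`. -/
noncomputable def hzE (A : Finset V) : Finset (Perm V) :=
  Finset.univ.filter (fun τ => ∃ u ∈ A, ∃ v ∈ A, u ≠ v ∧ τ = swap u v)

lemma mem_hzE {A : Finset V} {τ : Perm V} :
    τ ∈ hzE A ↔ ∃ u ∈ A, ∃ v ∈ A, u ≠ v ∧ τ = swap u v := by
  simp [hzE]

def hzcl (B : Finset V) (l : List (Perm V)) : Prop := ∀ τ ∈ l, ∀ x ∈ B, τ x ∈ B

def hzconn (A : Finset V) (l : List (Perm V)) : Prop :=
  A.Nonempty ∧ ∀ B ⊆ A, B.Nonempty → hzcl B l → B = A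

open Classical in
noncomputable def hzN (A : Finset V) (π : Perm V) (m : ℕ) : ℚ :=
  hzw (hzE A) m (fun l => hzi (hzconn A l ∧ ∀ x ∈ A, l.prod x = π x))

lemma hz_mem_iff {B : Finset V} {τ : Perm V} (h : ∀ x ∈ B, τ x ∈ B) (x : V) : τ x ∈ B ↔ x ∈ B := by
  refine ⟨fun hx => ?_, h x⟩
  have hi : B.image τ = B := by
    apply Finset.eq_of_subset_of_card_le
    · intro y hy
      obtain ⟨z, hz, rfl⟩ := Finset.mem_image.1 hy
      exact h z hz
    · rw [Finset.card_image_of_injective _ τ.injective]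
  rw [← hi] at hx
  obtain ⟨z, hz, hzx⟩ := Finset.mem_image.1 hx
  rwa [← τ.injective hzx]

lemma hzcl.inter {A B : Finset V} {l : List (Perm V)} (hA : hzcl A l) (hB : hzcl B l) :
    hzcl (A ∩ B) l := by
  intro τ hτ x hx
  rw [Finset.mem_inter] at hx ⊢
  exact ⟨hA τ hτ x hx.1, hB τ hτ x hx.2⟩

lemma hzcl.union {A B : Finset V} {l : List (Perm V)} (hA : hzcl A l) (hB : hzcl B l) :
    hzcl (A ∪ B) l := by
  intro τ hτ x hx
  rw [Finset.mem_union] at hx ⊢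
  exact hx.imp (hA τ hτ x) (hB τ hτ x)

lemma hzcl.sdiff {A B : Finset V} {l : List (Perm V)} (hA : hzcl A l) (hB : hzcl B l) :
    hzcl (A \ B) l := by
  intro τ hτ x hx
  rw [Finset.mem_sdiff] at hx ⊢
  exact ⟨hA τ hτ x hx.1, fun h => hx.2 ((hz_mem_iff (hB τ hτ) x).1 h)⟩

lemma hzcl_cons {B : Finset V} {τ : Perm V} {l : List (Perm V)} :
    hzcl B (τ :: l) ↔ (∀ x ∈ B, τ x ∈ B) ∧ hzcl B l := by
  simp [hzcl]

lemma hz_swap_cl {B : Finset V} {u v : V} :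
    (∀ x ∈ B, swap u v x ∈ B) ↔ (u ∈ B ↔ v ∈ B) := by
  constructor
  · intro h
    constructor
    · intro hu; simpa using h u hu
    · intro hv; simpa using h v hv
  · intro h x hx
    by_cases h1 : x = u
    · subst h1; simpa using h.1 hx
    by_cases h2 : x = v
    · subst h2; simpa using h.2 hx
    rwa [swap_apply_of_ne_of_ne h1 h2]

lemma hzE_cl {A : Finset V} {l : List (Perm V)} (hl : ∀ τ ∈ l, τ ∈ hzE A) : hzcl A l := by
  intro τ hτ
  obtain ⟨u, hu, v, hv, _, rfl⟩ := mem_hzE.1 (hl τ hτ)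
  exact hz_swap_cl.2 (by simp [hu, hv])

lemma hzE_fix {A : Finset V} {τ : Perm V} (h : τ ∈ hzE A) {x : V} (hx : x ∉ A) : τ x = x := by
  obtain ⟨u, hu, v, hv, _, rfl⟩ := mem_hzE.1 h
  exact swap_apply_of_ne_of_ne (fun h => hx (h ▸ hu)) (fun h => hx (h ▸ hv))

open Classical in
/-- The connected component of `u`. -/
noncomputable def hzcomp (A : Finset V) (l : List (Perm V)) (u : V) : Finset V :=
  A.filter (fun x => ∀ B ⊆ A, u ∈ B → hzcl B l → x ∈ B)

lemma hzcomp_sub {A : Finset V} {l : List (Perm V)} {u : V} : hzcomp A l u ⊆ A := by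
  classical
  unfold hzcomp
  exact Finset.filter_subset _ _

lemma hzcomp_self {A : Finset V} {l : List (Perm V)} {u : V} (hu : u ∈ A) : u ∈ hzcomp A l u := by
  classical
  exact Finset.mem_filter.2 ⟨hu, fun _ _ h _ => h⟩

lemma hzcomp_min {A B : Finset V} {l : List (Perm V)} {u : V} (hB : B ⊆ A) (hu : u ∈ B)
    (h : hzcl B l) : hzcomp A l u ⊆ B := fun x hx => by
  classical
  exact (Finset.mem_filter.1 hx).2 B hB hu h

lemma hzcomp_cl {A : Finset V} {l : List (Perm V)} {u : V} (hA : hzcl A l) :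
    hzcl (hzcomp A l u) l := by
  classical
  intro τ hτ x hx
  have hx' := Finset.mem_filter.1 hx
  exact Finset.mem_filter.2 ⟨hA τ hτ x hx'.1, fun B hB hu h => h τ hτ x (hx'.2 B hB hu h)⟩

lemma hzcomp_conn {A : Finset V} {l : List (Perm V)} {u : V} (hA : hzcl A l) (hu : u ∈ A) :
    hzconn (hzcomp A l u) l := by
  refine ⟨⟨u, hzcomp_self hu⟩, fun C hC hne hcl => ?_⟩
  by_cases h : u ∈ C
  · exact le_antisymm hC (hzcomp_min (hC.trans hzcomp_sub) h hcl)
  · exfalso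
    obtain ⟨y, hy⟩ := hne
    have h1 : hzcomp A l u ⊆ hzcomp A l u \ C :=
      hzcomp_min (Finset.sdiff_subset.trans hzcomp_sub)
        (Finset.mem_sdiff.2 ⟨hzcomp_self hu, h⟩) ((hzcomp_cl hA).sdiff hcl)
    exact (Finset.mem_sdiff.1 (h1 (hC hy))).2 hy

/-- Intersection of a closed set with a connected one is trivial. -/
lemma hzconn.inter_eq {A B : Finset V} {l : List (Perm V)} (hA : hzconn A l) (hAc : hzcl A l)
    (hB : hzcl B l) {x : V} (hxA : x ∈ A) (hxB : x ∈ B) : A ⊆ B := by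
  have := hA.2 (A ∩ B) Finset.inter_subset_left ⟨x, Finset.mem_inter.2 ⟨hxA, hxB⟩⟩ (hAc.inter hB)
  rw [← this]; exact Finset.inter_subset_right

open Classical in
lemma hz_onestep {A : Finset V} {u v : V} (hu : u ∈ A) (hv : v ∈ A)
    {l : List (Perm V)} (hA : hzcl A l) :
    hzi (hzconn A (swap u v :: l)) =
      hzi (hzconn A l) + ∑ B ∈ A.powerset.filter (fun B => u ∈ B ∧ v ∉ B),
        hzi (hzcl B l ∧ hzconn B l ∧ hzconn (A \ B) l) := by
  set C := hzcomp A l u with hC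
  have hCc : hzcl C l := hzcomp_cl hA
  have hCn : hzconn C l := hzcomp_conn hA hu
  have huC : u ∈ C := hzcomp_self hu
  have hCA : C ⊆ A := hzcomp_sub
  by_cases hvC : v ∈ C
  · have h1 : hzconn A (swap u v :: l) ↔ hzconn A l := by
      unfold hzconn
      refine and_congr_right fun _ => forall_congr' fun B => ?_
      refine forall_congr' fun hB => forall_congr' fun _ => ?_
      rw [hzcl_cons, hz_swap_cl]
      have : hzcl B l → (u ∈ B ↔ v ∈ B) := fun h =>
        ⟨fun h' => hCn.inter_eq hCc h huC h' hvC, fun h' => hCn.inter_eq hCc h hvC h' huC⟩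
      tauto
    rw [Finset.sum_eq_zero, add_zero]
    · simp only [h1]
    · intro B hB
      rw [Finset.mem_filter, Finset.mem_powerset] at hB
      rw [hzi_neg]
      rintro ⟨h, _⟩
      exact hB.2.2 (hCn.inter_eq hCc h huC hB.2.1 hvC)
  · have h0 : ¬ hzconn A l := fun h => hvC (h.inter_eq hA hCc hu huC hv)
    rw [hzi_neg h0, zero_add, Finset.sum_eq_single C]
    · refine hzi_congr ?_
      have hAC : hzcl (A \ C) l := hA.sdiff hCc
      have hvAC : v ∈ A \ C := Finset.mem_sdiff.2 ⟨hv, hvC⟩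
      constructor
      · intro h
        refine ⟨hCc, hCn, ⟨v, hvAC⟩, fun D hD hne hcl => ?_⟩
        have huD : u ∉ D := fun h => (Finset.mem_sdiff.1 (hD h)).2 huC
        have hDA : D ⊆ A := hD.trans Finset.sdiff_subset
        by_cases hvD : v ∈ D
        · have := h.2 (C ∪ D) (Finset.union_subset hCA hDA) ⟨u, Finset.mem_union_left _ huC⟩ (by
            rw [hzcl_cons, hz_swap_cl]
            exact ⟨by simp [huC, hvD], hCc.union hcl⟩)
          rw [← this]
          ext y
          simp only [Finset.mem_sdiff, Finset.mem_union]
          constructor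
          · intro hy; exact ⟨Or.inr hy, (Finset.mem_sdiff.1 (hD hy)).2⟩
          · tauto
        · have := h.2 D hDA hne (by
            rw [hzcl_cons, hz_swap_cl]
            exact ⟨by simp [huD, hvD], hcl⟩)
          rw [this] at huD
          exact absurd hu huD
      · rintro ⟨_, _, h⟩
        refine ⟨⟨u, hu⟩, fun B hB hne hcl => ?_⟩
        rw [hzcl_cons, hz_swap_cl] at hcl
        have huB : u ∈ B := by
          by_contra huB
          have hvB : v ∉ B := fun h => huB (hcl.1.2 h)
          obtain ⟨y, hy⟩ := hne
          by_cases hyC : y ∈ C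
          · exact huB (hCn.inter_eq hCc hcl.2 hyC hy huC)
          · exact hvB (h.inter_eq hAC hcl.2 (Finset.mem_sdiff.2 ⟨hB hy, hyC⟩) hy hvAC)
        have hvB := hcl.1.1 huB
        apply le_antisymm hB
        intro y hy
        by_cases hyC : y ∈ C
        · exact hCn.inter_eq hCc hcl.2 huC huB hyC
        · exact h.inter_eq hAC hcl.2 hvAC hvB (Finset.mem_sdiff.2 ⟨hy, hyC⟩)
    · intro B hB hne
      rw [Finset.mem_filter, Finset.mem_powerset] at hB
      rw [hzi_neg]
      rintro ⟨h1, h2, _⟩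
      exact hne (le_antisymm (h2.inter_eq h1 hCc hB.2.1 huC) (hCn.inter_eq hCc h1 huC hB.2.1))
    · intro h
      exact absurd (Finset.mem_filter.2 ⟨Finset.mem_powerset.2 hCA, huC, hvC⟩) h

lemma hz_prod_cl {B : Finset V} {l : List (Perm V)} (h : hzcl B l) : ∀ x ∈ B, l.prod x ∈ B := by
  induction l with
  | nil => simp
  | cons τ l ih =>
    rw [hzcl_cons] at h
    intro x hx
    rw [List.prod_cons, Perm.mul_apply]
    exact h.1 _ (ih h.2 x hx)

lemma hzE_disjoint {B C : Finset V} (h : Disjoint B C) : Disjoint (hzE B) (hzE C) := by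
  rw [Finset.disjoint_left]
  intro τ h1 h2
  obtain ⟨u, hu, v, hv, huv, rfl⟩ := mem_hzE.1 h1
  have := hzE_fix h2 (Finset.disjoint_left.1 h hu)
  rw [swap_apply_left] at this
  exact huv this.symm

lemma hz_filter {B C : Finset V} (h : Disjoint B C) {l : List (Perm V)}
    (hl : ∀ τ ∈ l, τ ∈ hzE B ∪ hzE C) :
    hzcl B l ∧ (∀ D ⊆ B, hzcl D l ↔ hzcl D (l.filter (· ∈ hzE B))) ∧
    ∀ x ∈ B, l.prod x = (l.filter (· ∈ hzE B)).prod x := by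
  induction l with
  | nil => simp [hzcl]
  | cons τ l ih =>
    obtain ⟨h1, h2, h3⟩ := ih (fun τ hτ => hl τ (List.mem_cons_of_mem _ hτ))
    have hτ := hl τ List.mem_cons_self
    by_cases hB : τ ∈ hzE B
    · rw [List.filter_cons_of_pos (by simpa using hB)]
      refine ⟨?_, ?_, ?_⟩
      · rw [hzcl_cons]
        refine ⟨?_, h1⟩
        have := hzE_cl (A := B) (l := [τ]) (by simpa using hB)
        simpa [hzcl] using this
      · intro D hD
        rw [hzcl_cons, hzcl_cons, h2 D hD]
      · intro x hx
        rw [List.prod_cons, List.prod_cons, Perm.mul_apply, Perm.mul_apply, h3 x hx]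
    · rw [List.filter_cons_of_neg (by simpa using hB)]
      have hC : τ ∈ hzE C := (Finset.mem_union.1 hτ).resolve_left hB
      have hfix : ∀ x ∈ B, τ x = x := fun x hx => hzE_fix hC (Finset.disjoint_left.1 h hx)
      refine ⟨?_, ?_, ?_⟩
      · rw [hzcl_cons]
        exact ⟨fun x hx => by rwa [hfix x hx], h1⟩
      · intro D hD
        rw [hzcl_cons, h2 D hD]
        exact and_iff_right fun x hx => by rwa [hfix x (hD hx)]
      · intro x hx
        rw [List.prod_cons, Perm.mul_apply, ← h3 x hx]
        exact hfix _ (hz_prod_cl h1 x hx)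

lemma hz_filter_conn {B C : Finset V} (h : Disjoint B C) {l : List (Perm V)}
    (hl : ∀ τ ∈ l, τ ∈ hzE B ∪ hzE C) : hzconn B l ↔ hzconn B (l.filter (· ∈ hzE B)) := by
  unfold hzconn
  refine and_congr_right fun _ => forall_congr' fun D => forall_congr' fun hD => ?_
  rw [(hz_filter h hl).2.1 D hD]

open Classical in
lemma hz_split {A B : Finset V} (hB : B ⊆ A) (ρ : Perm V) (m : ℕ) :
    hzw (hzE A) m (fun l => hzi ((hzcl B l ∧ hzconn B l ∧ hzconn (A \ B) l) ∧ ∀ x ∈ A, l.prod x = ρ x)) =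
    ∑ p ∈ Finset.HasAntidiagonal.antidiagonal m, (m.choose p.1 : ℚ) *
      (hzN B ρ p.1 * hzN (A \ B) ρ p.2) := by
  have hd : Disjoint B (A \ B) := Finset.disjoint_sdiff
  have hsub : hzE B ∪ hzE (A \ B) ⊆ hzE A := by
    apply Finset.union_subset
    · intro τ hτ
      obtain ⟨u, hu, v, hv, huv, rfl⟩ := mem_hzE.1 hτ
      exact mem_hzE.2 ⟨u, hB hu, v, hB hv, huv, rfl⟩
    · intro τ hτ
      obtain ⟨u, hu, v, hv, huv, rfl⟩ := mem_hzE.1 hτ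
      exact mem_hzE.2 ⟨u, Finset.sdiff_subset hu, v, Finset.sdiff_subset hv, huv, rfl⟩
  rw [hzw_restrict hsub]
  · unfold hzN
    rw [← hzw_shuffle (hzE_disjoint hd)]
    apply hzw_congr
    intro l _ hl
    have hl' : ∀ τ ∈ l, τ ∈ hzE (A \ B) ∪ hzE B := fun τ hτ => by
      rw [Finset.union_comm]; exact hl τ hτ
    rw [← hz_filter_conn hd hl, ← hz_filter_conn hd.symm hl']
    have h1 := hz_filter hd hl
    have h2 := hz_filter hd.symm hl'
    have e1 : (∀ x ∈ B, (l.filter (· ∈ hzE B)).prod x = ρ x) ↔ ∀ x ∈ B, l.prod x = ρ x :=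
      forall₂_congr fun x hx => by rw [h1.2.2 x hx]
    have e2 : (∀ x ∈ A \ B, (l.filter (· ∈ hzE (A \ B))).prod x = ρ x) ↔
      ∀ x ∈ A \ B, l.prod x = ρ x :=
      forall₂_congr fun x hx => by rw [h2.2.2 x hx]
    rw [e1, e2, ← hzi_and]
    refine hzi_congr ?_
    have : (∀ x ∈ A, l.prod x = ρ x) ↔ (∀ x ∈ B, l.prod x = ρ x) ∧ ∀ x ∈ A \ B, l.prod x = ρ x := by
      constructor
      · intro h; exact ⟨fun x hx => h x (hB hx), fun x hx => h x (Finset.sdiff_subset hx)⟩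
      · rintro ⟨h, h'⟩ x hx
        by_cases hxB : x ∈ B
        · exact h x hxB
        · exact h' x (Finset.mem_sdiff.2 ⟨hx, hxB⟩)
    rw [this]
    have := h1.1
    tauto
  · rintro l hl ⟨τ, hτ, hn⟩
    rw [hzi_neg]
    rintro ⟨⟨h, _⟩, _⟩
    apply hn
    obtain ⟨u, hu, v, hv, huv, rfl⟩ := mem_hzE.1 (hl τ hτ)
    have h3 := hz_swap_cl.1 (h _ hτ)
    rw [Finset.mem_union]
    by_cases huB : u ∈ B
    · exact Or.inl (mem_hzE.2 ⟨u, huB, v, h3.1 huB, huv, rfl⟩)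
    · have hvB : v ∉ B := fun h => huB (h3.2 h)
      exact Or.inr (mem_hzE.2 ⟨u, Finset.mem_sdiff.2 ⟨hu, huB⟩, v, Finset.mem_sdiff.2 ⟨hv, hvB⟩, huv, rfl⟩)

open Classical in
lemma hz_M_eq {A : Finset V} {u v : V} (hu : u ∈ A) (hv : v ∈ A) (ρ : Perm V) (m : ℕ) :
    hzw (hzE A) m (fun l => hzi (hzconn A (swap u v :: l) ∧ ∀ x ∈ A, l.prod x = ρ x)) =
    hzN A ρ m + ∑ B ∈ A.powerset.filter (fun B => u ∈ B ∧ v ∉ B),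
      ∑ p ∈ Finset.HasAntidiagonal.antidiagonal m, (m.choose p.1 : ℚ) *
        (hzN B ρ p.1 * hzN (A \ B) ρ p.2) := by
  have h1 : ∀ B ∈ A.powerset.filter (fun B => u ∈ B ∧ v ∉ B),
      ∑ p ∈ Finset.HasAntidiagonal.antidiagonal m, (m.choose p.1 : ℚ) *
        (hzN B ρ p.1 * hzN (A \ B) ρ p.2) =
      hzw (hzE A) m (fun l => hzi ((hzcl B l ∧ hzconn B l ∧ hzconn (A \ B) l) ∧
        ∀ x ∈ A, l.prod x = ρ x)) := by
    intro B hB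
    rw [hz_split (Finset.mem_powerset.1 (Finset.mem_filter.1 hB).1)]
  rw [Finset.sum_congr rfl h1, ← hzw_sum, hzN, ← hzw_add]
  apply hzw_congr
  intro l _ hl
  have := hz_onestep hu hv (hzE_cl hl)
  by_cases hρ : ∀ x ∈ A, l.prod x = ρ x
  · simp only [hzi_and, hzi_pos hρ, mul_one] at this ⊢
    exact this
  · simp only [hzi_and, hzi_neg hρ, mul_zero, Finset.sum_const_zero, add_zero]

open Classical in
lemma hzN_succ (A : Finset V) (π : Perm V) (m : ℕ) :
    hzN A π (m + 1) = (1 / 2) * ∑ p ∈ A.offDiag,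
      (hzN A (swap p.1 p.2 * π) m + ∑ B ∈ A.powerset.filter (fun B => p.1 ∈ B ∧ p.2 ∉ B),
        ∑ q ∈ Finset.HasAntidiagonal.antidiagonal m, (m.choose q.1 : ℚ) *
          (hzN B (swap p.1 p.2 * π) q.1 * hzN (A \ B) (swap p.1 p.2 * π) q.2)) := by
  set F : Perm V → ℚ := fun τ => hzw (hzE A) m (fun l => hzi (hzconn A (τ :: l) ∧
    ∀ x ∈ A, l.prod x = (τ⁻¹ * π) x)) with hF
  have h1 : hzN A π (m + 1) = ∑ τ ∈ hzE A, F τ := by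
    rw [hzN, hzw_succ]
    refine Finset.sum_congr rfl fun τ _ => ?_
    rw [hF]
    apply hzw_congr
    intro l _ _
    refine hzi_congr (and_congr_right fun _ => forall₂_congr fun x _ => ?_)
    rw [List.prod_cons, Perm.mul_apply, Perm.mul_apply, Perm.eq_inv_iff_eq]
  have h2 : ∀ p ∈ A.offDiag, (hzN A (swap p.1 p.2 * π) m +
      ∑ B ∈ A.powerset.filter (fun B => p.1 ∈ B ∧ p.2 ∉ B),
        ∑ q ∈ Finset.HasAntidiagonal.antidiagonal m, (m.choose q.1 : ℚ) *
          (hzN B (swap p.1 p.2 * π) q.1 * hzN (A \ B) (swap p.1 p.2 * π) q.2)) =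
      F (swap p.1 p.2) := by
    intro p hp
    rw [Finset.mem_offDiag] at hp
    rw [← hz_M_eq hp.1 hp.2.1]
    simp only [hF, swap_inv]
  rw [h1, Finset.sum_congr rfl h2]
  have h3 : ∑ p ∈ A.offDiag, F (swap p.1 p.2) = ∑ τ ∈ hzE A, ∑ p ∈ A.offDiag with
      swap p.1 p.2 = τ, F (swap p.1 p.2) := by
    rw [Finset.sum_fiberwise_of_maps_to]
    intro p hp
    rw [Finset.mem_offDiag] at hp
    exact mem_hzE.2 ⟨p.1, hp.1, p.2, hp.2.1, hp.2.2, rfl⟩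
  rw [h3, Finset.mul_sum]
  refine Finset.sum_congr rfl fun τ hτ => ?_
  have h4 : ∑ p ∈ A.offDiag with swap p.1 p.2 = τ, F (swap p.1 p.2) =
      ∑ p ∈ A.offDiag with swap p.1 p.2 = τ, F τ :=
    Finset.sum_congr rfl fun p hp => by rw [(Finset.mem_filter.1 hp).2]
  rw [h4, Finset.sum_const, nsmul_eq_mul]
  obtain ⟨u, hu, v, hv, huv, rfl⟩ := mem_hzE.1 hτ
  have h5 : A.offDiag.filter (fun p => swap p.1 p.2 = swap u v) = {(u, v), (v, u)} := by
    ext ⟨a, b⟩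
    simp only [Finset.mem_filter, Finset.mem_offDiag, Finset.mem_insert, Finset.mem_singleton,
      Prod.mk.injEq]
    constructor
    · rintro ⟨⟨_, _, hab⟩, h⟩
      have ha : swap u v a = b := by rw [← h]; simp
      by_cases h1 : a = u
      · subst h1; left; simp at ha; exact ⟨rfl, ha.symm⟩
      by_cases h2 : a = v
      · subst h2; right; simp at ha; exact ⟨rfl, ha.symm⟩
      rw [swap_apply_of_ne_of_ne h1 h2] at ha
      exact absurd ha hab
    · rintro (⟨rfl, rfl⟩ | ⟨rfl, rfl⟩)
      · exact ⟨⟨hu, hv, huv⟩, rfl⟩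
      · exact ⟨⟨hv, hu, huv.symm⟩, swap_comm _ _⟩
  rw [h5, Finset.card_pair (by simp [huv])]
  push_cast; ring

lemma hzN_ne_zero {B : Finset V} {ρ : Perm V} {m : ℕ} (h : hzN B ρ m ≠ 0) : ∀ x ∈ B, ρ x ∈ B := by
  classical
  by_contra hc
  push Not at hc
  apply h
  obtain ⟨x, hx, hxB⟩ := hc
  rw [hzN, ← hzw_const_zero (hzE B) m]
  apply hzw_congr
  intro l _ hl
  rw [hzi_neg]
  rintro ⟨_, h2⟩
  apply hxB
  rw [← h2 x hx]
  exact hz_prod_cl (hzE_cl hl) x hx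

end Connectivity

open Equiv

set_option linter.unusedSectionVars false

section CyclePartitions
variable {V : Type*} [Fintype V] [DecidableEq V]

/-- `C` is the set of cycles (including fixed points) of `π` on `A`. -/
structure hzPart (π : Perm V) (A : Finset V) (C : Finset (Finset V)) : Prop where
  ne : ∀ c ∈ C, c.Nonempty
  cyc : ∀ c ∈ C, π.IsCycleOn (c : Set V)
  disj : ∀ c ∈ C, ∀ d ∈ C, c ≠ d → Disjoint c d
  un : C.biUnion id = A

lemma hz_isCycleOn {ρ : Perm V} {s : Finset V} (h : ∀ x ∈ s, ρ x ∈ s) (u : V)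
    (hu : ∀ x ∈ s, ρ.SameCycle u x) : ρ.IsCycleOn (s : Set V) := by
  refine ⟨⟨fun x hx => h x hx, ρ.injective.injOn, ?_⟩, fun x hx y hy => (hu x hx).symm.trans (hu y hy)⟩
  intro y hy
  refine ⟨ρ⁻¹ y, ?_, by simp⟩
  rw [Finset.mem_coe]
  rw [← hz_mem_iff h]
  simpa using hy

lemma hz_swap_pow {π : Perm V} {u v w : V} : ∀ i : ℕ,
    (∀ j, 0 < j → j ≤ i → (π ^ j) w ≠ u ∧ (π ^ j) w ≠ v) →
    ((swap u v * π) ^ i) w = (π ^ i) w := by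
  intro i
  induction i with
  | zero => intro _; simp
  | succ i ih =>
    intro h
    rw [pow_succ', Perm.mul_apply, ih (fun j h0 h1 => h j h0 (by omega)), Perm.mul_apply,
      ← Perm.mul_apply π, ← pow_succ']
    exact swap_apply_of_ne_of_ne (h (i + 1) (by omega) le_rfl).1 (h (i + 1) (by omega) le_rfl).2

lemma hz_sameCycle_pow (ρ : Perm V) (u : V) (i : ℕ) : ρ.SameCycle u ((ρ ^ i) u) := ⟨i, by simp⟩

lemma hz_cycle_cl {π : Perm V} {c : Finset V} (h : π.IsCycleOn (c : Set V)) : ∀ x ∈ c, π x ∈ c :=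
  fun _ hx => h.1.mapsTo hx

lemma hz_pow_mem {π : Perm V} {c : Finset V} (h : ∀ x ∈ c, π x ∈ c) (i : ℕ) : ∀ x ∈ c, (π ^ i) x ∈ c := by
  induction i with
  | zero => simp
  | succ i ih => intro x hx; rw [pow_succ', Perm.mul_apply]; exact h _ (ih x hx)

lemma hz_other {π : Perm V} {c : Finset V} (h : π.IsCycleOn (c : Set V)) {u v : V} (hu : u ∉ c)
    (hv : v ∉ c) : (swap u v * π).IsCycleOn (c : Set V) := by
  have hcl := hz_cycle_cl h
  rcases c.eq_empty_or_nonempty with rfl | ⟨w, hw⟩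
  · simp [Perm.IsCycleOn]
  have hne : ∀ x ∈ c, x ≠ u ∧ x ≠ v := fun x hx => ⟨fun h => hu (h ▸ hx), fun h => hv (h ▸ hx)⟩
  refine hz_isCycleOn (fun x hx => ?_) w (fun x hx => ?_)
  · rw [Perm.mul_apply, swap_apply_of_ne_of_ne (hne _ (hcl x hx)).1 (hne _ (hcl x hx)).2]
    exact hcl x hx
  · obtain ⟨i, _, hi⟩ := h.exists_pow_eq hw hx
    rw [← hi, ← hz_swap_pow (u := u) (v := v) i fun j _ _ => hne _ (hz_pow_mem hcl j w hw)]
    exact hz_sameCycle_pow _ _ _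

lemma hz_pow_ne {π : Perm V} {c : Finset V} (h : π.IsCycleOn (c : Set V)) {u : V} (hu : u ∈ c)
    {j : ℕ} (h0 : 0 < j) (h1 : j < c.card) : (π ^ j) u ≠ u := by
  intro h2
  rw [h.pow_apply_eq hu] at h2
  exact absurd (Nat.le_of_dvd h0 h2) (by omega)

lemma hz_join_half {π : Perm V} {c : Finset V} (h : π.IsCycleOn (c : Set V)) {u v : V} (hu : u ∈ c)
    (hv : v ∉ c) : (swap u v * π).SameCycle u v ∧ ∀ x ∈ c, (swap u v * π).SameCycle u x := by
  have hcl := hz_cycle_cl h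
  have key : ∀ i, i < c.card → ((swap u v * π) ^ i) u = (π ^ i) u := by
    intro i hi
    refine hz_swap_pow i fun j h0 h1 => ⟨hz_pow_ne h hu h0 (by omega), fun h2 => hv ?_⟩
    rw [← h2]; exact hz_pow_mem hcl j u hu
  constructor
  · have hpos : 0 < c.card := Finset.card_pos.2 ⟨u, hu⟩
    have h1 : ((swap u v * π) ^ c.card) u = v := by
      obtain ⟨k, hk⟩ : ∃ k, c.card = k + 1 := ⟨c.card - 1, by omega⟩
      rw [hk, pow_succ', Perm.mul_apply, key k (by omega), Perm.mul_apply, ← Perm.mul_apply π,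
        ← pow_succ', ← hk, h.pow_card_apply hu, swap_apply_left]
    have h2 := hz_sameCycle_pow (swap u v * π) u c.card
    rwa [h1] at h2
  · intro x hx
    obtain ⟨i, hi, hix⟩ := h.exists_pow_eq hu hx
    rw [← hix, ← key i hi]
    exact hz_sameCycle_pow _ _ _

lemma hz_join_cycle {π : Perm V} {c d : Finset V} (hc : π.IsCycleOn (c : Set V))
    (hd : π.IsCycleOn (d : Set V)) (hcd : Disjoint c d) {u v : V} (hu : u ∈ c) (hv : v ∈ d) :
    (swap u v * π).IsCycleOn ((c ∪ d : Finset V) : Set V) := by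
  have hvc : v ∉ c := Finset.disjoint_right.1 hcd hv
  have hud : u ∉ d := Finset.disjoint_left.1 hcd hu
  have h1 := hz_join_half hc hu hvc
  have h2 := hz_join_half hd hv hud
  rw [swap_comm v u] at h2
  refine hz_isCycleOn (fun x hx => ?_) u (fun x hx => ?_)
  · rw [Perm.mul_apply]
    refine hz_swap_cl.2 (by simp [hu, hv]) _ ?_
    rw [Finset.mem_union] at hx ⊢
    exact hx.imp (hz_cycle_cl hc x) (hz_cycle_cl hd x)
  · rcases Finset.mem_union.1 hx with hx | hx
    · exact h1.2 x hx
    · exact h1.1.trans (h2.2 x hx)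

lemma hzPart.sub {π : Perm V} {A : Finset V} {C T : Finset (Finset V)} (h : hzPart π A C) (hT : T ⊆ C) :
    hzPart π (T.biUnion id) T :=
  ⟨fun c hc => h.ne c (hT hc), fun c hc => h.cyc c (hT hc),
    fun c hc d hd => h.disj c (hT hc) d (hT hd), rfl⟩

lemma hzPart.card_eq {π : Perm V} {A : Finset V} {C : Finset (Finset V)} (h : hzPart π A C) :
    A.card = ∑ c ∈ C, c.card := by
  rw [← h.un]
  exact Finset.card_biUnion h.disj

lemma hzPart.mem_sub {π : Perm V} {A : Finset V} {C : Finset (Finset V)} (h : hzPart π A C)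
    {c : Finset V} (hc : c ∈ C) : c ⊆ A := by
  rw [← h.un]; exact Finset.subset_biUnion_of_mem id hc

lemma hzPart.eq_of_mem {π : Perm V} {A : Finset V} {C : Finset (Finset V)} (h : hzPart π A C)
    {c d : Finset V} (hc : c ∈ C) (hd : d ∈ C) {x : V} (hxc : x ∈ c) (hxd : x ∈ d) : c = d := by
  by_contra hne
  exact Finset.disjoint_left.1 (h.disj c hc d hd hne) hxc hxd

lemma hz_cycle_sub {ρ : Perm V} {c B : Finset V} (hc : ρ.IsCycleOn (c : Set V))
    (hB : ∀ x ∈ B, ρ x ∈ B) {x : V} (hxc : x ∈ c) (hxB : x ∈ B) : c ⊆ B := by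
  intro y hy
  obtain ⟨i, _, hi⟩ := hc.exists_pow_eq hxc hy
  rw [← hi]; exact hz_pow_mem hB i x hxB

lemma hzPart.join {π : Perm V} {A : Finset V} {C : Finset (Finset V)} (h : hzPart π A C)
    {c d : Finset V} (hc : c ∈ C) (hd : d ∈ C) (hcd : c ≠ d) {u v : V} (hu : u ∈ c) (hv : v ∈ d) :
    hzPart (swap u v * π) A (insert (c ∪ d) ((C.erase c).erase d)) := by
  have hmem : ∀ e ∈ (C.erase c).erase d, e ∈ C ∧ e ≠ c ∧ e ≠ d := by
    intro e he
    simp only [Finset.mem_erase] at he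
    tauto
  have hdis : ∀ e ∈ (C.erase c).erase d, Disjoint (c ∪ d) e := by
    intro e he
    obtain ⟨h1, h2, h3⟩ := hmem e he
    exact Finset.disjoint_union_left.2 ⟨h.disj c hc e h1 h2.symm, h.disj d hd e h1 h3.symm⟩
  refine ⟨?_, ?_, ?_, ?_⟩
  · intro e he
    rcases Finset.mem_insert.1 he with rfl | he
    · exact ⟨u, Finset.mem_union_left _ hu⟩
    · exact h.ne e (hmem e he).1
  · intro e he
    rcases Finset.mem_insert.1 he with rfl | he
    · exact hz_join_cycle (h.cyc c hc) (h.cyc d hd) (h.disj c hc d hd hcd) hu hv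
    · have h1 := Finset.disjoint_left.1 (hdis e he)
      exact hz_other (h.cyc e (hmem e he).1) (h1 (Finset.mem_union_left _ hu))
        (h1 (Finset.mem_union_right _ hv))
  · intro e he f hf hef
    rcases Finset.mem_insert.1 he with rfl | he <;> rcases Finset.mem_insert.1 hf with rfl | hf
    · exact absurd rfl hef
    · exact hdis f hf
    · exact (hdis e he).symm
    · exact h.disj e (hmem e he).1 f (hmem f hf).1 hef
  · rw [← h.un]
    ext x
    simp only [Finset.mem_biUnion, Finset.mem_insert, Finset.mem_erase, id]
    constructor
    · rintro ⟨e, (rfl | he), hx⟩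
      · rcases Finset.mem_union.1 hx with hx | hx
        · exact ⟨c, hc, hx⟩
        · exact ⟨d, hd, hx⟩
      · exact ⟨e, he.2.2, hx⟩
    · rintro ⟨e, he, hx⟩
      by_cases h1 : e = c
      · subst h1; exact ⟨_, Or.inl rfl, Finset.mem_union_left _ hx⟩
      by_cases h2 : e = d
      · subst h2; exact ⟨_, Or.inl rfl, Finset.mem_union_right _ hx⟩
      exact ⟨e, Or.inr ⟨h2, h1, he⟩, hx⟩

lemma hz_join_card {π : Perm V} {A : Finset V} {C : Finset (Finset V)} (h : hzPart π A C)
    {c d : Finset V} (hc : c ∈ C) :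
    c ∪ d ∉ (C.erase c).erase d := by
  intro hm
  simp only [Finset.mem_erase] at hm
  obtain ⟨x, hx⟩ := h.ne c hc
  exact hm.2.1 (h.eq_of_mem hm.2.2 hc (Finset.mem_union_left _ hx) hx)

/-- Arc of a cycle. -/
def hzarc (π : Perm V) (u : V) (a : ℕ) : Finset V := (Finset.range a).image (fun i => (π ^ i) u)

lemma hzarc_cycle {π : Perm V} {c : Finset V} (h : π.IsCycleOn (c : Set V)) {u v : V} (hu : u ∈ c)
    {a : ℕ} (h0 : 0 < a) (h1 : a < c.card) (hv : v = (π ^ a) u) :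
    (swap u v * π).IsCycleOn (hzarc π u a : Set V) ∧ (hzarc π u a).card = a ∧ u ∈ hzarc π u a := by
  have hpow : ∀ i j, i < c.card → j < c.card → (π ^ i) u = (π ^ j) u → i = j := by
    intro i j hi hj hij
    rw [h.pow_apply_eq_pow_apply hu] at hij
    exact Nat.ModEq.eq_of_lt_of_lt hij hi hj
  have key : ∀ i, i < a → ((swap u v * π) ^ i) u = (π ^ i) u := by
    intro i hi
    refine hz_swap_pow i fun j h2 h3 => ⟨hz_pow_ne h hu h2 (by omega), fun h4 => ?_⟩
    rw [hv] at h4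
    have := hpow j a (by omega) h1 h4
    omega
  have hau : ((swap u v * π) ^ a) u = u := by
    obtain ⟨k, rfl⟩ : ∃ k, a = k + 1 := ⟨a - 1, by omega⟩
    rw [pow_succ', Perm.mul_apply, key k (by omega), Perm.mul_apply, ← Perm.mul_apply π,
        ← pow_succ', ← hv, swap_apply_right]
  refine ⟨hz_isCycleOn (fun x hx => ?_) u (fun x hx => ?_), ?_, ?_⟩
  · obtain ⟨i, hi, rfl⟩ := Finset.mem_image.1 hx
    rw [Finset.mem_range] at hi
    rw [← key i hi, ← Perm.mul_apply, ← pow_succ']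
    by_cases hia : i + 1 = a
    · rw [hia, hau]
      exact Finset.mem_image.2 ⟨0, Finset.mem_range.2 h0, by simp⟩
    · rw [key (i + 1) (by omega)]
      exact Finset.mem_image.2 ⟨i + 1, Finset.mem_range.2 (by omega), rfl⟩
  · obtain ⟨i, hi, rfl⟩ := Finset.mem_image.1 hx
    rw [Finset.mem_range] at hi
    rw [← key i hi]
    exact hz_sameCycle_pow _ _ _
  · rw [hzarc, Finset.card_image_of_injOn, Finset.card_range]
    intro i hi j hj hij
    simp only [Finset.coe_range, Set.mem_Iio] at hi hj
    exact hpow i j (by omega) (by omega) hij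
  · exact Finset.mem_image.2 ⟨0, Finset.mem_range.2 h0, by simp⟩

lemma hzPart.cut {π : Perm V} {A : Finset V} {C : Finset (Finset V)} (h : hzPart π A C)
    {c : Finset V} (hc : c ∈ C) {u v : V} (hu : u ∈ c) {a : ℕ} (h0 : 0 < a) (h1 : a < c.card)
    (hv : v = (π ^ a) u) :
    ∃ c₁ c₂ : Finset V, u ∈ c₁ ∧ v ∈ c₂ ∧ c₁.card = a ∧ c₂.card = c.card - a ∧ c₁ ≠ c₂ ∧
      c₁ ∉ C.erase c ∧ c₂ ∉ C.erase c ∧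
      hzPart (swap u v * π) A (insert c₁ (insert c₂ (C.erase c))) := by
  have hcy := h.cyc c hc
  have hcl := hz_cycle_cl hcy
  have hvc : v ∈ c := by rw [hv]; exact hz_pow_mem hcl a u hu
  obtain ⟨p1, p2, p3⟩ := hzarc_cycle hcy hu h0 h1 hv
  have hvu : u = (π ^ (c.card - a)) v := by
    rw [hv, ← Perm.mul_apply, ← pow_add, Nat.sub_add_cancel h1.le, hcy.pow_card_apply hu]
  obtain ⟨q1, q2, q3⟩ := hzarc_cycle hcy hvc (by omega) (by omega) hvu
  rw [swap_comm v u] at q1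
  set c₁ := hzarc π u a
  set c₂ := hzarc π v (c.card - a)
  have s1 : c₁ ⊆ c := by
    intro x hx
    obtain ⟨i, _, rfl⟩ := Finset.mem_image.1 hx
    exact hz_pow_mem hcl i u hu
  have s2 : c₂ ⊆ c := by
    intro x hx
    obtain ⟨i, _, rfl⟩ := Finset.mem_image.1 hx
    exact hz_pow_mem hcl i v hvc
  have hd : Disjoint c₁ c₂ := by
    rw [Finset.disjoint_left]
    intro x hx hy
    obtain ⟨i, hi, rfl⟩ := Finset.mem_image.1 hx
    obtain ⟨j, hj, hij⟩ := Finset.mem_image.1 hy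
    rw [Finset.mem_range] at hi hj
    rw [hv, ← Perm.mul_apply, ← pow_add, hcy.pow_apply_eq_pow_apply hu] at hij
    have := Nat.ModEq.eq_of_lt_of_lt hij (by omega) (by omega)
    omega
  have hun : c₁ ∪ c₂ = c := by
    apply Finset.eq_of_subset_of_card_le (Finset.union_subset s1 s2)
    rw [Finset.card_union_of_disjoint hd, p2, q2]; omega
  have hne : c₁ ≠ c₂ := fun he => Finset.disjoint_left.1 hd p3 (he ▸ p3)
  have hmem : ∀ e ∈ C.erase c, Disjoint c e := fun e he =>
    h.disj c hc e (Finset.mem_of_mem_erase he) (Finset.ne_of_mem_erase he).symm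
  have hn1 : c₁ ∉ C.erase c := fun he => Finset.disjoint_left.1 (hmem _ he) hu p3
  have hn2 : c₂ ∉ C.erase c := fun he => Finset.disjoint_left.1 (hmem _ he) hvc q3
  refine ⟨c₁, c₂, p3, q3, p2, q2, hne, hn1, hn2, ?_, ?_, ?_, ?_⟩
  · intro e he
    rcases Finset.mem_insert.1 he with rfl | he
    · exact ⟨u, p3⟩
    rcases Finset.mem_insert.1 he with rfl | he
    · exact ⟨v, q3⟩
    · exact h.ne e (Finset.mem_of_mem_erase he)
  · intro e he
    rcases Finset.mem_insert.1 he with rfl | he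
    · exact p1
    rcases Finset.mem_insert.1 he with rfl | he
    · exact q1
    · exact hz_other (h.cyc e (Finset.mem_of_mem_erase he)) (Finset.disjoint_left.1 (hmem e he) hu)
        (Finset.disjoint_left.1 (hmem e he) hvc)
  · have m1 : ∀ e ∈ C.erase c, Disjoint c₁ e := fun e he => Finset.disjoint_of_subset_left s1 (hmem e he)
    have m2 : ∀ e ∈ C.erase c, Disjoint c₂ e := fun e he => Finset.disjoint_of_subset_left s2 (hmem e he)
    intro e he f hf hef
    rw [Finset.mem_insert, Finset.mem_insert] at he hf
    rcases he with rfl | rfl | he <;> rcases hf with rfl | rfl | hf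
    · exact absurd rfl hef
    · exact hd
    · exact m1 _ hf
    · exact hd.symm
    · exact absurd rfl hef
    · exact m2 _ hf
    · exact (m1 _ he).symm
    · exact (m2 _ he).symm
    · exact h.disj e (Finset.mem_of_mem_erase he) f (Finset.mem_of_mem_erase hf) hef
  · rw [Finset.biUnion_insert, Finset.biUnion_insert, ← Finset.union_assoc, id, id, hun, ← h.un]
    conv_rhs => rw [← Finset.insert_erase hc, Finset.biUnion_insert]
    rfl

end CyclePartitions

open Equiv

set_option linter.unusedSectionVars false

section Hurwitz
variable {V : Type*} [Fintype V] [DecidableEq V]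

variable (V) in
def hzHur (m : ℕ) : Prop := ∀ (A : Finset V) (π : Perm V) (C : Finset (Finset V)),
  hzPart π A C → A.Nonempty →
  (m + 2 < A.card + C.card → hzN A π m = 0) ∧
  (m + 2 = A.card + C.card → hzN A π m = (m.factorial : ℚ) *
    ((A.card : ℚ) ^ ((C.card : ℤ) - 3) * ∏ c ∈ C, hzphi c.card))

/-- The sum over splittings. -/
noncomputable def hzS (A : Finset V) (u v : V) (ρ : Perm V) (m : ℕ) : ℚ :=
  ∑ B ∈ A.powerset.filter (fun B => u ∈ B ∧ v ∉ B),
    ∑ p ∈ Finset.HasAntidiagonal.antidiagonal m, (m.choose p.1 : ℚ) *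
      (hzN B ρ p.1 * hzN (A \ B) ρ p.2)

lemma hzPart.biUnion_sub {π : Perm V} {A : Finset V} {D S S' : Finset (Finset V)} (h : hzPart π A D)
    (hS : S ⊆ D) (hS' : S' ⊆ D) (he : S.biUnion id ⊆ S'.biUnion id) : S ⊆ S' := by
  intro c hc
  obtain ⟨x, hx⟩ := h.ne c (hS hc)
  have hx' := he (Finset.mem_biUnion.2 ⟨c, hc, hx⟩)
  obtain ⟨d, hd, hxd⟩ := Finset.mem_biUnion.1 hx'
  rwa [h.eq_of_mem (hS hc) (hS' hd) hx hxd]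

lemma hzPart.sdiff {π : Perm V} {A : Finset V} {D S : Finset (Finset V)} (h : hzPart π A D)
    (hS : S ⊆ D) : A \ S.biUnion id = (D \ S).biUnion id := by
  ext x
  rw [← h.un]
  simp only [Finset.mem_sdiff, Finset.mem_biUnion, id]
  constructor
  · rintro ⟨⟨c, hc, hx⟩, h2⟩
    exact ⟨c, ⟨hc, fun hcS => h2 ⟨c, hcS, hx⟩⟩, hx⟩
  · rintro ⟨c, ⟨hc, hcS⟩, hx⟩
    refine ⟨⟨c, hc, hx⟩, ?_⟩
    rintro ⟨d, hd, hxd⟩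
    rw [h.eq_of_mem hc (hS hd) hx hxd] at hcS
    exact hcS hd

lemma hzPart.closed {π : Perm V} {A B : Finset V} {D : Finset (Finset V)} (h : hzPart π A D)
    (hB : B ⊆ A) (hcl : ∀ x ∈ B, π x ∈ B) : (D.filter (· ⊆ B)).biUnion id = B := by
  ext x
  simp only [Finset.mem_biUnion, Finset.mem_filter, id]
  constructor
  · rintro ⟨c, ⟨_, hc⟩, hx⟩; exact hc hx
  · intro hx
    have hxA := hB hx
    rw [← h.un] at hxA
    obtain ⟨c, hc, hxc⟩ := Finset.mem_biUnion.1 hxA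
    exact ⟨c, ⟨hc, hz_cycle_sub (h.cyc c hc) hcl hxc hx⟩, hxc⟩

lemma hz_antidiag (m s t : ℕ) (hs : 2 ≤ s) (ht : 2 ≤ t) (f g : ℕ → ℚ)
    (hf : ∀ i, i ≤ m → i + 2 < s → f i = 0) (hg : ∀ i, i ≤ m → i + 2 < t → g i = 0) (F G : ℚ)
    (hF : s ≤ m + 2 → f (s - 2) = ((s - 2).factorial : ℚ) * F)
    (hG : t ≤ m + 2 → g (t - 2) = ((t - 2).factorial : ℚ) * G) :
    (m + 4 < s + t → ∑ p ∈ Finset.HasAntidiagonal.antidiagonal m, (m.choose p.1 : ℚ) *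
      (f p.1 * g p.2) = 0) ∧
    (m + 4 = s + t → ∑ p ∈ Finset.HasAntidiagonal.antidiagonal m, (m.choose p.1 : ℚ) *
      (f p.1 * g p.2) = (m.factorial : ℚ) * (F * G)) := by
  constructor
  · intro h
    refine Finset.sum_eq_zero fun p hp => ?_
    rw [Finset.HasAntidiagonal.mem_antidiagonal] at hp
    by_cases h1 : p.1 + 2 < s
    · rw [hf _ (by omega) h1]; ring
    · rw [hg p.2 (by omega) (by omega)]; ring
  · intro h
    rw [Finset.sum_eq_single (s - 2, t - 2)]
    · simp only
      rw [hF (by omega), hG (by omega), Nat.cast_choose ℚ (by omega), show m - (s - 2) = t - 2 by omega]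
      have f2 : ((s - 2).factorial : ℚ) ≠ 0 := by exact_mod_cast (s - 2).factorial_ne_zero
      have f3 : ((t - 2).factorial : ℚ) ≠ 0 := by exact_mod_cast (t - 2).factorial_ne_zero
      field_simp
    · intro p hp hne
      rw [Finset.HasAntidiagonal.mem_antidiagonal] at hp
      by_cases h1 : p.1 + 2 < s
      · rw [hf _ (by omega) h1]; ring
      · by_cases h2 : p.2 + 2 < t
        · rw [hg p.2 (by omega) h2]; ring
        · exfalso
          apply hne
          ext
          · simp only; omega
          · simp only; omega
    · intro hn
      exfalso
      apply hn
      rw [Finset.HasAntidiagonal.mem_antidiagonal]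
      simp only; omega

lemma hz_sep {m : ℕ} (IH : ∀ m' ≤ m, hzHur V m') {A : Finset V} {ρ : Perm V} {c₁ c₂ : Finset V}
    {R : Finset (Finset V)} (h : hzPart ρ A (insert c₁ (insert c₂ R))) (h12 : c₁ ≠ c₂)
    (h1 : c₁ ∉ R) (h2 : c₂ ∉ R) {u v : V} (hu : u ∈ c₁) (hv : v ∈ c₂) :
    (m + 4 < A.card + (R.card + 2) → hzS A u v ρ m = 0) ∧
    (m + 4 = A.card + (R.card + 2) → hzS A u v ρ m = (m.factorial : ℚ) *
      (hzphi c₁.card * hzphi c₂.card * (∏ c ∈ R, hzphi c.card) *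
        ∑ T ∈ R.powerset, hzC (fun c : Finset V => (c.card : ℚ)) (c₁.card : ℚ) T *
          hzC (fun c : Finset V => (c.card : ℚ)) (c₂.card : ℚ) (R \ T))) := by
  set D := insert c₁ (insert c₂ R) with hD
  have hc1D : c₁ ∈ D := by simp [hD]
  have hc2D : c₂ ∈ D := by simp [hD]
  have hRD : R ⊆ D := fun c hc => by simp [hD, hc]
  set G : Finset V → ℚ := fun B => ∑ p ∈ Finset.HasAntidiagonal.antidiagonal m, (m.choose p.1 : ℚ) *
      (hzN B ρ p.1 * hzN (A \ B) ρ p.2) with hG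
  have hSD : ∀ T ⊆ R, insert c₁ T ⊆ D := fun T hT =>
    Finset.insert_subset hc1D (hT.trans hRD)
  have hS'D : ∀ T ⊆ R, insert c₂ (R \ T) ⊆ D := fun T hT =>
    Finset.insert_subset hc2D (Finset.sdiff_subset.trans hRD)
  have hDS : ∀ T ⊆ R, D \ insert c₁ T = insert c₂ (R \ T) := by
    intro T hT
    ext c
    simp only [hD, Finset.mem_sdiff, Finset.mem_insert]
    constructor
    · rintro ⟨rfl | rfl | hc, h3⟩
      · simp at h3
      · left; rfl
      · right; exact ⟨hc, fun h4 => h3 (Or.inr h4)⟩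
    · rintro (rfl | ⟨hc, hcT⟩)
      · refine ⟨Or.inr (Or.inl rfl), ?_⟩
        rintro (h4 | h4)
        · exact h12 h4.symm
        · exact h2 (hT h4)
      · refine ⟨Or.inr (Or.inr hc), ?_⟩
        rintro (h4 | h4)
        · exact h1 (h4 ▸ hc)
        · exact hcT h4
  have key : hzS A u v ρ m = ∑ T ∈ R.powerset, G ((insert c₁ T).biUnion id) := by
    have hinj : Set.InjOn (fun T : Finset (Finset V) => (insert c₁ T).biUnion id)
        (R.powerset : Set (Finset (Finset V))) := by
      intro T hT T' hT' he
      rw [Finset.mem_coe, Finset.mem_powerset] at hT hT'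
      have he' : (insert c₁ T).biUnion id = (insert c₁ T').biUnion id := he
      have h3 : insert c₁ T = insert c₁ T' := le_antisymm
        (h.biUnion_sub (hSD T hT) (hSD T' hT') he'.le) (h.biUnion_sub (hSD T' hT') (hSD T hT) he'.ge)
      rw [← Finset.erase_insert (fun h4 => h1 (hT h4)), h3,
        Finset.erase_insert (fun h4 => h1 (hT' h4))]
    rw [← Finset.sum_image (f := G) hinj, hzS]
    symm
    refine Finset.sum_subset ?_ ?_
    · intro B hB
      obtain ⟨T, hT, rfl⟩ := Finset.mem_image.1 hB
      rw [Finset.mem_powerset] at hT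
      rw [Finset.mem_filter, Finset.mem_powerset]
      refine ⟨?_, ?_, ?_⟩
      · rw [← h.un]; exact Finset.biUnion_subset_biUnion_of_subset_left _ (hSD T hT)
      · exact Finset.mem_biUnion.2 ⟨c₁, Finset.mem_insert_self _ _, hu⟩
      · intro hvB
        have : v ∈ A \ (insert c₁ T).biUnion id := by
          rw [h.sdiff (hSD T hT), hDS T hT]
          exact Finset.mem_biUnion.2 ⟨c₂, Finset.mem_insert_self _ _, hv⟩
        exact (Finset.mem_sdiff.1 this).2 hvB
    · intro B hB hn
      rw [Finset.mem_filter, Finset.mem_powerset] at hB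
      by_contra hne
      have hcl : ∀ x ∈ B, ρ x ∈ B := by
        by_contra hcl
        apply hne
        refine Finset.sum_eq_zero fun p _ => ?_
        have : hzN B ρ p.1 = 0 := by
          by_contra h3
          exact hcl (hzN_ne_zero h3)
        rw [this]; ring
      have hBe := h.closed hB.1 hcl
      apply hn
      refine Finset.mem_image.2 ⟨R.filter (· ⊆ B), Finset.mem_powerset.2 (Finset.filter_subset _ _), ?_⟩
      have : insert c₁ (R.filter (· ⊆ B)) = D.filter (· ⊆ B) := by
        ext c
        simp only [hD, Finset.mem_insert, Finset.mem_filter]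
        constructor
        · rintro (rfl | ⟨h3, h4⟩)
          · exact ⟨Or.inl rfl, hz_cycle_sub (h.cyc c hc1D) hcl hu hB.2.1⟩
          · exact ⟨Or.inr (Or.inr h3), h4⟩
        · rintro ⟨rfl | rfl | h3, h4⟩
          · left; rfl
          · exact absurd (h4 hv) hB.2.2
          · right; exact ⟨h3, h4⟩
      show (insert c₁ (R.filter (· ⊆ B))).biUnion id = B
      rw [this, hBe]
  have term : ∀ T ∈ R.powerset,
      (m + 4 < A.card + (R.card + 2) → G ((insert c₁ T).biUnion id) = 0) ∧
      (m + 4 = A.card + (R.card + 2) → G ((insert c₁ T).biUnion id) = (m.factorial : ℚ) *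
      (hzphi c₁.card * hzphi c₂.card * (∏ c ∈ R, hzphi c.card) *
        (hzC (fun c : Finset V => (c.card : ℚ)) (c₁.card : ℚ) T *
          hzC (fun c : Finset V => (c.card : ℚ)) (c₂.card : ℚ) (R \ T)))) := by
    intro T hT
    rw [Finset.mem_powerset] at hT
    have hc1T : c₁ ∉ T := fun h4 => h1 (hT h4)
    have hc2T : c₂ ∉ R \ T := fun h4 => h2 (Finset.sdiff_subset h4)
    set B := (insert c₁ T).biUnion id with hB
    have hAB : A \ B = (insert c₂ (R \ T)).biUnion id := by
      rw [hB, h.sdiff (hSD T hT), hDS T hT]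
    have hp1 : hzPart ρ B (insert c₁ T) := h.sub (hSD T hT)
    have hp2 : hzPart ρ (A \ B) (insert c₂ (R \ T)) := by
      rw [hAB]; exact h.sub (hS'D T hT)
    have hBne : B.Nonempty := ⟨u, Finset.mem_biUnion.2 ⟨c₁, Finset.mem_insert_self _ _, hu⟩⟩
    have hABne : (A \ B).Nonempty := ⟨v, by
      rw [hAB]; exact Finset.mem_biUnion.2 ⟨c₂, Finset.mem_insert_self _ _, hv⟩⟩
    have hBA : B ⊆ A := by
      rw [← h.un]; exact Finset.biUnion_subset_biUnion_of_subset_left _ (hSD T hT)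
    have hcB : B.card + (A \ B).card = A.card := by
      rw [Finset.card_sdiff_of_subset hBA]
      have := Finset.card_le_card hBA
      omega
    have hcR : T.card + (R \ T).card = R.card := by
      rw [Finset.card_sdiff_of_subset hT]
      have := Finset.card_le_card hT
      omega
    have k1 : (insert c₁ T).card = T.card + 1 := Finset.card_insert_of_notMem hc1T
    have k2 : (insert c₂ (R \ T)).card = (R \ T).card + 1 := Finset.card_insert_of_notMem hc2T
    have n1 := Finset.card_pos.2 hBne
    have n2 := Finset.card_pos.2 hABne
    have := hz_antidiag m (B.card + (T.card + 1)) ((A \ B).card + ((R \ T).card + 1)) (by omega) (by omega)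
      (fun i => hzN B ρ i) (fun i => hzN (A \ B) ρ i)
      (fun i hi hi2 => (IH i hi B ρ _ hp1 hBne).1 (by rw [k1]; omega))
      (fun i hi hi2 => (IH i hi (A \ B) ρ _ hp2 hABne).1 (by rw [k2]; omega))
      ((B.card : ℚ) ^ (((insert c₁ T).card : ℤ) - 3) * ∏ c ∈ insert c₁ T, hzphi c.card)
      (((A \ B).card : ℚ) ^ (((insert c₂ (R \ T)).card : ℤ) - 3) * ∏ c ∈ insert c₂ (R \ T), hzphi c.card)
      (fun hi => (IH _ (by omega) B ρ _ hp1 hBne).2 (by rw [k1]; omega))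
      (fun hi => (IH _ (by omega) (A \ B) ρ _ hp2 hABne).2 (by rw [k2]; omega))
    constructor
    · intro hm
      exact this.1 (by omega)
    · intro hm
      rw [hG]
      refine (this.2 (by omega)).trans ?_
      have z1 : (B.card : ℚ) ^ (((insert c₁ T).card : ℤ) - 3) =
          hzC (fun c : Finset V => (c.card : ℚ)) (c₁.card : ℚ) T := by
        rw [hzC, k1, hp1.card_eq, Finset.sum_insert hc1T]
        push_cast
        congr 1; ring
      have z2 : ((A \ B).card : ℚ) ^ (((insert c₂ (R \ T)).card : ℤ) - 3) =
          hzC (fun c : Finset V => (c.card : ℚ)) (c₂.card : ℚ) (R \ T) := by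
        rw [hzC, k2, hp2.card_eq, Finset.sum_insert hc2T]
        push_cast
        congr 1; ring
      rw [z1, z2, Finset.prod_insert hc1T, Finset.prod_insert hc2T, ← Finset.prod_sdiff hT]
      ring
  constructor
  · intro hm
    rw [key]
    exact Finset.sum_eq_zero fun T hT => (term T hT).1 hm
  · intro hm
    rw [key, Finset.sum_congr rfl fun T hT => (term T hT).2 hm, ← Finset.mul_sum, ← Finset.mul_sum]

/-- Splitting the sum over ordered pairs according to cycles. -/
lemma hz_offDiag {π : Perm V} {A : Finset V} {C : Finset (Finset V)} (h : hzPart π A C)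
    (f : V → V → ℚ) : ∑ p ∈ A.offDiag, f p.1 p.2 =
      ∑ c ∈ C, ∑ d ∈ C.erase c, ∑ u ∈ c, ∑ v ∈ d, f u v +
      ∑ c ∈ C, ∑ u ∈ c, ∑ a ∈ Finset.Ico 1 c.card, f u ((π ^ a) u) := by
  have e1 : ∑ p ∈ A.offDiag, f p.1 p.2 = ∑ u ∈ A, ∑ v ∈ A.erase u, f u v := by
    rw [Finset.sum_sigma']
    refine Finset.sum_nbij' (fun p => ⟨p.1, p.2⟩) (fun p => (p.1, p.2)) ?_ ?_ ?_ ?_ ?_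
    · rintro ⟨a, b⟩ hp
      simp only [Finset.mem_offDiag, Finset.mem_sigma, Finset.mem_erase] at *
      exact ⟨hp.1, hp.2.2.symm, hp.2.1⟩
    · rintro ⟨a, b⟩ hp
      simp only [Finset.mem_offDiag, Finset.mem_sigma, Finset.mem_erase] at *
      exact ⟨hp.1, hp.2.2, hp.2.1.symm⟩
    · intros; rfl
    · intros; rfl
    · intros; rfl
  have hpd : (C : Set (Finset V)).PairwiseDisjoint id := fun c hc d hd hcd => h.disj c hc d hd hcd
  have e2 : ∀ g : V → ℚ, ∑ v ∈ A, g v = ∑ c ∈ C, ∑ v ∈ c, g v := by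
    intro g
    rw [← h.un, Finset.sum_biUnion hpd]; rfl
  rw [e1, e2, ← Finset.sum_add_distrib]
  refine Finset.sum_congr rfl fun c hc => ?_
  rw [Finset.sum_comm, ← Finset.sum_add_distrib]
  refine Finset.sum_congr rfl fun u hu => ?_
  have e3 : ∑ v ∈ A.erase u, f u v = ∑ v ∈ A, f u v - f u u := by
    rw [← Finset.add_sum_erase A _ (h.mem_sub hc hu)]; ring
  have e4 : ∑ v ∈ c, f u v = f u u + ∑ a ∈ Finset.Ico 1 c.card, f u ((π ^ a) u) := by
    have hcy := h.cyc c hc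
    have hpos : 0 < c.card := Finset.card_pos.2 ⟨u, hu⟩
    have : ∑ v ∈ c, f u v = ∑ a ∈ Finset.range c.card, f u ((π ^ a) u) := by
      symm
      refine Finset.sum_bij (fun a _ => (π ^ a) u) ?_ ?_ ?_ ?_
      · intro a _; exact hz_pow_mem (hz_cycle_cl hcy) a u hu
      · intro a ha b hb hab
        rw [hcy.pow_apply_eq_pow_apply hu] at hab
        exact Nat.ModEq.eq_of_lt_of_lt hab (Finset.mem_range.1 ha) (Finset.mem_range.1 hb)
      · intro v hv
        obtain ⟨i, hi, hiv⟩ := hcy.exists_pow_eq hu hv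
        exact ⟨i, Finset.mem_range.2 hi, hiv⟩
      · intros; rfl
    rw [this, Finset.range_eq_Ico, Finset.sum_eq_sum_Ico_succ_bot hpos]
    simp
  rw [e3, e2, ← Finset.add_sum_erase C _ hc, e4]
  ring

lemma hz_conn_nil {A : Finset V} (h : hzconn A []) : A.card = 1 := by
  obtain ⟨x, hx⟩ := h.1
  have := h.2 {x} (by simpa using hx) (by simp) (by simp [hzcl])
  rw [← this]; simp

theorem hz_hurwitz (m : ℕ) : hzHur V m := by
  induction m using Nat.strong_induction_on with
  | _ m ih =>
  intro A π C h hA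
  have hCne : C.Nonempty := by
    rw [Finset.nonempty_iff_ne_empty]
    rintro rfl
    have := h.un
    simp at this
    rw [← this] at hA
    simp at hA
  have hA1 := Finset.card_pos.2 hA
  have hC1 := Finset.card_pos.2 hCne
  rcases m with _ | m
  · constructor
    · intro hm
      rw [hzN, hzw_zero, hzi_neg]
      rintro ⟨h1, h2⟩
      have hA2 := hz_conn_nil h1
      have := h.card_eq
      have h3 : C.card ≤ ∑ c ∈ C, c.card := by
        rw [Finset.card_eq_sum_ones]
        exact Finset.sum_le_sum fun c hc => Finset.card_pos.2 (h.ne c hc)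
      omega
    · intro hm
      have hAc : A.card = 1 := by omega
      have hCc : C.card = 1 := by omega
      obtain ⟨c, rfl⟩ := Finset.card_eq_one.1 hCc
      have hcA : c = A := by have := h.un; simpa using this
      subst hcA
      obtain ⟨x, rfl⟩ := Finset.card_eq_one.1 hAc
      rw [hzN, hzw_zero, hzi_pos]
      · simp [hzphi, hzpsi]
      · refine ⟨⟨by simp, fun B hB hne _ => ?_⟩, ?_⟩
        · exact (Finset.subset_singleton_iff.1 hB).resolve_left hne.ne_empty
        · intro y hy
          have h3 := hz_cycle_cl (h.cyc {x} (by simp)) y hy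
          rw [Finset.mem_singleton] at hy h3
          rw [h3, hy]; simp
  have IH : ∀ m' ≤ m, hzHur V m' := fun m' hm' => ih m' (by omega)
  have hsucc : hzN A π (m + 1) = (1 / 2) * ∑ p ∈ A.offDiag,
      (fun u v => hzN A (swap u v * π) m + hzS A u v (swap u v * π) m) p.1 p.2 := hzN_succ A π m
  rw [hz_offDiag h (fun u v => hzN A (swap u v * π) m + hzS A u v (swap u v * π) m)] at hsucc
  beta_reduce at hsucc
  -- different cycles
  have hjoin : ∀ c ∈ C, ∀ d ∈ C.erase c, ∀ u ∈ c, ∀ v ∈ d,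
      (m + 1 + 2 < A.card + C.card →
        hzN A (swap u v * π) m + hzS A u v (swap u v * π) m = 0) ∧
      (m + 1 + 2 = A.card + C.card →
        hzN A (swap u v * π) m + hzS A u v (swap u v * π) m = (m.factorial : ℚ) *
        ((A.card : ℚ) ^ ((C.card : ℤ) - 4) *
          (hzphi (c.card + d.card) * ∏ e ∈ (C.erase c).erase d, hzphi e.card))) := by
    intro c hc d hd u hu v hv
    have hd' := Finset.mem_of_mem_erase hd
    have hcd := (Finset.ne_of_mem_erase hd).symm
    have hp := h.join hc hd' hcd hu hv
    have hdis := h.disj c hc d hd' hcd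
    have hS : hzS A u v (swap u v * π) m = 0 := by
      refine Finset.sum_eq_zero fun B hB => Finset.sum_eq_zero fun p _ => ?_
      rw [Finset.mem_filter] at hB
      have : hzN B (swap u v * π) p.1 = 0 := by
        by_contra hne
        have hcl := hzN_ne_zero hne
        have hs := hz_cycle_sub (hp.cyc _ (Finset.mem_insert_self _ _)) hcl
          (Finset.mem_union_left _ hu) hB.2.1
        exact hB.2.2 (hs (Finset.mem_union_right _ hv))
      rw [this]; ring
    have hni := hz_join_card (d := d) h hc
    have hc1 : ((C.erase c).erase d).card + 2 = C.card := by
      rw [Finset.card_erase_of_mem hd, Finset.card_erase_of_mem hc]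
      have : 0 < (C.erase c).card := Finset.card_pos.2 ⟨d, hd⟩
      rw [Finset.card_erase_of_mem hc] at this
      omega
    have hc2 : (insert (c ∪ d) ((C.erase c).erase d)).card = ((C.erase c).erase d).card + 1 :=
      Finset.card_insert_of_notMem hni
    rw [hS, add_zero]
    constructor
    · intro hm
      exact (IH m le_rfl A _ _ hp hA).1 (by omega)
    · intro hm
      rw [(IH m le_rfl A _ _ hp hA).2 (by omega), Finset.prod_insert hni,
        Finset.card_union_of_disjoint hdis, hc2]
      congr 3
      rw [← hc1]; push_cast; ring
  have hcut : ∀ c ∈ C, ∀ u ∈ c, ∀ a ∈ Finset.Ico 1 c.card,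
      (m + 1 + 2 < A.card + C.card →
        hzN A (swap u ((π ^ a) u) * π) m + hzS A u ((π ^ a) u) (swap u ((π ^ a) u) * π) m = 0) ∧
      (m + 1 + 2 = A.card + C.card →
        hzN A (swap u ((π ^ a) u) * π) m + hzS A u ((π ^ a) u) (swap u ((π ^ a) u) * π) m =
        (m.factorial : ℚ) * (hzphi a * hzphi (c.card - a) * (∏ e ∈ C.erase c, hzphi e.card) *
          (∑ T ∈ (C.erase c).powerset, hzC (fun i : Finset V => (i.card : ℚ)) (a : ℚ) T *
            hzC (fun i : Finset V => (i.card : ℚ)) ((c.card - a : ℕ) : ℚ) (C.erase c \ T)))) := by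
    intro c hc u hu a ha
    rw [Finset.mem_Ico] at ha
    obtain ⟨c₁, c₂, hu1, hv2, k1, k2, h12, n1, n2, hp⟩ := h.cut hc hu (v := (π ^ a) u) ha.1 ha.2 rfl
    have hc1 : (C.erase c).card + 1 = C.card := by
      rw [Finset.card_erase_of_mem hc]; omega
    have hc2 : (insert c₁ (insert c₂ (C.erase c))).card = (C.erase c).card + 2 := by
      rw [Finset.card_insert_of_notMem, Finset.card_insert_of_notMem n2]
      rw [Finset.mem_insert]
      rintro (h3 | h3)
      · exact h12 h3
      · exact n1 h3
    have hsep := hz_sep IH hp h12 n1 n2 hu1 hv2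
    rw [k1, k2] at hsep
    constructor
    · intro hm
      rw [(IH m le_rfl A _ _ hp hA).1 (by omega), hsep.1 (by omega), add_zero]
    · intro hm
      rw [(IH m le_rfl A _ _ hp hA).1 (by omega), hsep.2 (by omega), zero_add]
  constructor
  · intro hm
    rw [hsucc, Finset.sum_eq_zero, Finset.sum_eq_zero]
    · ring
    · intro c hc
      exact Finset.sum_eq_zero fun u hu => Finset.sum_eq_zero fun a ha => (hcut c hc u hu a ha).1 hm
    · intro c hc
      exact Finset.sum_eq_zero fun d hd => Finset.sum_eq_zero fun u hu =>
        Finset.sum_eq_zero fun v hv => (hjoin c hc d hd u hu v hv).1 hm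
  · intro hm
    have hstar := hz_star (fun c : Finset V => c.card) C hCne
      (fun c hc => Finset.card_pos.2 (h.ne c hc)) (A.card : ℚ) (by rw [h.card_eq]; push_cast; rfl)
    have s1 : ∑ c ∈ C, ∑ d ∈ C.erase c, ∑ u ∈ c, ∑ v ∈ d,
        (hzN A (swap u v * π) m + hzS A u v (swap u v * π) m) = (m.factorial : ℚ) *
        ∑ c ∈ C, ∑ d ∈ C.erase c, (c.card : ℚ) * d.card * ((A.card : ℚ) ^ ((C.card : ℤ) - 4) *
          (hzphi (c.card + d.card) * ∏ e ∈ (C.erase c).erase d, hzphi e.card)) := by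
      rw [Finset.mul_sum]
      refine Finset.sum_congr rfl fun c hc => ?_
      rw [Finset.mul_sum]
      refine Finset.sum_congr rfl fun d hd => ?_
      rw [Finset.sum_congr rfl fun u hu => Finset.sum_congr rfl fun v hv =>
        (hjoin c hc d hd u hu v hv).2 hm]
      simp only [Finset.sum_const, nsmul_eq_mul]
      ring
    have s2 : ∑ c ∈ C, ∑ u ∈ c, ∑ a ∈ Finset.Ico 1 c.card,
        (hzN A (swap u ((π ^ a) u) * π) m + hzS A u ((π ^ a) u) (swap u ((π ^ a) u) * π) m) =
        (m.factorial : ℚ) *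
        ∑ c ∈ C, (c.card : ℚ) * ∑ a ∈ Finset.Ico 1 c.card,
          (hzphi a * hzphi (c.card - a) * (∏ e ∈ C.erase c, hzphi e.card) *
          (∑ T ∈ (C.erase c).powerset, hzC (fun i : Finset V => (i.card : ℚ)) (a : ℚ) T *
            hzC (fun i : Finset V => (i.card : ℚ)) ((c.card - a : ℕ) : ℚ) (C.erase c \ T))) := by
      rw [Finset.mul_sum]
      refine Finset.sum_congr rfl fun c hc => ?_
      rw [Finset.sum_congr rfl fun u hu => Finset.sum_congr rfl fun a ha =>
        (hcut c hc u hu a ha).2 hm]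
      simp only [Finset.sum_const, nsmul_eq_mul, ← Finset.mul_sum]
      ring
    rw [hsucc, s1, s2, ← mul_add, hstar, Nat.factorial_succ]
    have hm' : (A.card : ℚ) + C.card - 2 = m + 1 := by
      have : ((m + 1 + 2 : ℕ) : ℚ) = ((A.card + C.card : ℕ) : ℚ) := by rw [hm]
      push_cast at this
      linarith
    rw [hm']
    push_cast
    ring

end Hurwitz

open Equiv

set_option linter.unusedSectionVars false

section Values
variable {V : Type*} [Fintype V] [DecidableEq V]

/-- Singletons outside of `D`. -/
def hzsing (D : Finset V) : Finset (Finset V) := Dᶜ.image (fun x => {x})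

lemma mem_hzsing {D c : Finset V} : c ∈ hzsing D ↔ ∃ x, x ∉ D ∧ {x} = c := by
  simp [hzsing]

lemma hzsing_card (D : Finset V) : (hzsing D).card + D.card = Fintype.card V := by
  rw [hzsing, Finset.card_image_of_injective _ Finset.singleton_injective, add_comm,
    Finset.card_add_card_compl]

lemma hzsing_sum (D : Finset V) (f : ℕ → ℚ) :
    ∑ c ∈ hzsing D, f c.card = ((hzsing D).card : ℚ) * f 1 := by
  rw [Finset.sum_congr rfl (g := fun _ => f 1), Finset.sum_const, nsmul_eq_mul]
  intro c hc
  obtain ⟨x, _, rfl⟩ := mem_hzsing.1 hc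
  simp

lemma hzsing_prod (D : Finset V) : ∏ c ∈ hzsing D, hzphi c.card = 1 := by
  refine Finset.prod_eq_one fun c hc => ?_
  obtain ⟨x, _, rfl⟩ := mem_hzsing.1 hc
  simp [hzphi, hzpsi]

lemma hzsing_disj (K : Finset (Finset V)) : Disjoint K (hzsing (K.biUnion id)) := by
  rw [Finset.disjoint_left]
  intro c hc hc'
  obtain ⟨x, hx, rfl⟩ := mem_hzsing.1 hc'
  exact hx (Finset.mem_biUnion.2 ⟨_, hc, by simp⟩)

lemma hz_cyc_sing {π : Perm V} {x : V} (h : π x = x) : π.IsCycleOn (({x} : Finset V) : Set V) :=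
  hz_isCycleOn (by simp [h]) x (by simp [Perm.SameCycle.refl])

/-- Cells together with the fixed points form a cycle partition. -/
structure hzCell (π : Perm V) (K : Finset (Finset V)) : Prop where
  ne : ∀ c ∈ K, c.Nonempty
  cyc : ∀ c ∈ K, π.IsCycleOn (c : Set V)
  disj : ∀ c ∈ K, ∀ d ∈ K, c ≠ d → Disjoint c d
  fix : ∀ x, x ∉ K.biUnion id → π x = x

lemma hzCell.part {π : Perm V} {K : Finset (Finset V)} (h : hzCell π K) :
    hzPart π Finset.univ (K ∪ hzsing (K.biUnion id)) := by
  have hd : ∀ c ∈ K, ∀ x, x ∉ K.biUnion id → Disjoint c {x} := by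
    intro c hc x hx
    rw [Finset.disjoint_singleton_right]
    exact fun hxc => hx (Finset.mem_biUnion.2 ⟨c, hc, hxc⟩)
  refine ⟨?_, ?_, ?_, ?_⟩
  · intro c hc
    rcases Finset.mem_union.1 hc with hc | hc
    · exact h.ne c hc
    · obtain ⟨x, hx, rfl⟩ := mem_hzsing.1 hc
      simp
  · intro c hc
    rcases Finset.mem_union.1 hc with hc | hc
    · exact h.cyc c hc
    · obtain ⟨x, hx, rfl⟩ := mem_hzsing.1 hc
      exact hz_cyc_sing (h.fix x hx)
  · intro c hc d hd' hne
    rcases Finset.mem_union.1 hc with hc | hc <;> rcases Finset.mem_union.1 hd' with hd' | hd'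
    · exact h.disj c hc d hd' hne
    · obtain ⟨x, hx, rfl⟩ := mem_hzsing.1 hd'
      exact hd c hc x hx
    · obtain ⟨x, hx, rfl⟩ := mem_hzsing.1 hc
      exact (hd d hd' x hx).symm
    · obtain ⟨x, hx, rfl⟩ := mem_hzsing.1 hc
      obtain ⟨y, hy, rfl⟩ := mem_hzsing.1 hd'
      rw [Finset.disjoint_singleton]
      rintro rfl
      exact hne rfl
  · ext x
    simp only [Finset.mem_univ, iff_true, Finset.mem_biUnion]
    by_cases hx : x ∈ K.biUnion id
    · obtain ⟨c, hc, hxc⟩ := Finset.mem_biUnion.1 hx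
      exact ⟨c, Finset.mem_union_left _ hc, hxc⟩
    · exact ⟨{x}, Finset.mem_union_right _ (mem_hzsing.2 ⟨x, hx, rfl⟩), by simp⟩

/-- The weighted count of factorisations completing `σ₁`, `σ₂`. -/
noncomputable def hzWt (σ₁ σ₂ : Perm V) (m : ℕ) : ℚ :=
  hzw (hzE (Finset.univ : Finset V)) m (fun l => hzi (hzconn Finset.univ (σ₁ :: σ₂ :: l) ∧
    ∀ x ∈ (Finset.univ : Finset V), l.prod x = (σ₂⁻¹ * σ₁⁻¹) x))

lemma hz_val_join {σ₁ σ₂ : Perm V} {K : Finset (Finset V)} {m : ℕ} (h : hzCell (σ₂⁻¹ * σ₁⁻¹) K)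
    (hcl : ∀ B : Finset V, (∀ x ∈ B, (σ₂⁻¹ * σ₁⁻¹) x ∈ B) →
      (∀ x ∈ B, σ₁ x ∈ B) ∧ (∀ x ∈ B, σ₂ x ∈ B))
    (hc : K.card + 4 = (K.biUnion id).card) (hm : m + 6 = 2 * Fintype.card V) :
    hzWt σ₁ σ₂ m = (m.factorial : ℚ) *
      ((Fintype.card V : ℚ) ^ ((Fintype.card V : ℤ) - 7) * ∏ c ∈ K, hzphi c.card) := by
  have e : hzWt σ₁ σ₂ m = hzN Finset.univ (σ₂⁻¹ * σ₁⁻¹) m := by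
    refine hzw_congr _ _ _ _ fun l _ _ => hzi_congr (and_congr_left fun hl => ?_)
    refine and_congr_right fun _ => ?_
    refine forall_congr' fun B => imp_congr_right fun _ => imp_congr_right fun _ => ?_
    rw [hzcl_cons, hzcl_cons]
    constructor
    · intro h1 h2
      refine h1 ⟨?_, ?_, h2⟩
      · exact (hcl B fun x hx => by rw [← hl x (by simp)]; exact hz_prod_cl h2 x hx).1
      · exact (hcl B fun x hx => by rw [← hl x (by simp)]; exact hz_prod_cl h2 x hx).2
    · intro h1 h2
      exact h1 h2.2.2
  have hsc := hzsing_card (K.biUnion id)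
  have hcc : (K ∪ hzsing (K.biUnion id)).card = K.card + (hzsing (K.biUnion id)).card :=
    Finset.card_union_of_disjoint (hzsing_disj K)
  have hne : (Finset.univ : Finset V).Nonempty := by
    rw [← Finset.card_pos, Finset.card_univ]; omega
  rw [e, (hz_hurwitz m _ _ _ h.part hne).2 (by rw [hcc, Finset.card_univ]; omega),
    Finset.prod_union (hzsing_disj K), hzsing_prod, mul_one, Finset.card_univ]
  congr 3
  omega

lemma hz_val_cut {σ₁ σ₂ : Perm V} {c₁ c₂ : Finset V} {K : Finset (Finset V)} {m : ℕ} {x z : V}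
    (h : hzCell (σ₂⁻¹ * σ₁⁻¹) (insert c₁ (insert c₂ K))) (h1 : z ∈ c₁) (h2 : x ∈ c₂)
    (n12 : c₁ ≠ c₂) (n1 : c₁ ∉ K) (n2 : c₂ ∉ K)
    (hcl : ∀ B : Finset V, (∀ x ∈ B, (σ₂⁻¹ * σ₁⁻¹) x ∈ B) →
      (((∀ x ∈ B, σ₁ x ∈ B) ∧ (∀ x ∈ B, σ₂ x ∈ B)) ↔ (z ∈ B ↔ x ∈ B)))
    (hc : K.card + 4 = ((insert c₁ (insert c₂ K)).biUnion id).card)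
    (hm : m + 6 = 2 * Fintype.card V) :
    ∃ R, R = K ∪ hzsing ((insert c₁ (insert c₂ K)).biUnion id) ∧
      Disjoint K (hzsing ((insert c₁ (insert c₂ K)).biUnion id)) ∧
      (∀ c ∈ R, c.Nonempty) ∧
      hzWt σ₁ σ₂ m = (m.factorial : ℚ) *
        (hzphi c₁.card * hzphi c₂.card * (∏ c ∈ K, hzphi c.card) *
        ∑ T ∈ R.powerset, hzC (fun c : Finset V => (c.card : ℚ)) (c₁.card : ℚ) T *
          hzC (fun c : Finset V => (c.card : ℚ)) (c₂.card : ℚ) (R \ T)) := by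
  set K' := insert c₁ (insert c₂ K) with hK'
  have hdis := hzsing_disj K'
  have hdis' : Disjoint K (hzsing (K'.biUnion id)) := by
    refine Finset.disjoint_of_subset_left ?_ hdis
    intro c hc; simp [hK', hc]
  have e : hzWt σ₁ σ₂ m = hzN Finset.univ (σ₂⁻¹ * σ₁⁻¹) m + hzS Finset.univ z x (σ₂⁻¹ * σ₁⁻¹) m := by
    refine Eq.trans ?_ (hz_M_eq (Finset.mem_univ z) (Finset.mem_univ x) _ m)
    refine hzw_congr _ _ _ _ fun l _ _ => hzi_congr (and_congr_left fun hl => ?_)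
    refine and_congr_right fun _ => ?_
    refine forall_congr' fun B => imp_congr_right fun _ => imp_congr_right fun _ => ?_
    refine imp_congr_left ?_
    rw [hzcl_cons, hzcl_cons, hzcl_cons, ← and_assoc, hz_swap_cl]
    refine and_congr_left fun h2 => ?_
    exact hcl B fun x hx => by rw [← hl x (by simp)]; exact hz_prod_cl h2 x hx
  have hsc := hzsing_card (K'.biUnion id)
  have hK'c : K'.card = K.card + 2 := by
    rw [hK', Finset.card_insert_of_notMem, Finset.card_insert_of_notMem n2]
    rw [Finset.mem_insert]; tauto
  have hcc : (K' ∪ hzsing (K'.biUnion id)).card = K'.card + (hzsing (K'.biUnion id)).card :=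
    Finset.card_union_of_disjoint hdis
  have hRc : (K ∪ hzsing (K'.biUnion id)).card = K.card + (hzsing (K'.biUnion id)).card :=
    Finset.card_union_of_disjoint hdis'
  have hne : (Finset.univ : Finset V).Nonempty := ⟨z, Finset.mem_univ z⟩
  have hp := h.part
  have heq : K' ∪ hzsing (K'.biUnion id) = insert c₁ (insert c₂ (K ∪ hzsing (K'.biUnion id))) := by
    rw [hK', Finset.insert_union, Finset.insert_union]
  have m1 : c₁ ∉ hzsing (K'.biUnion id) :=
    Finset.disjoint_left.1 hdis (by simp [hK'])
  have m2 : c₂ ∉ hzsing (K'.biUnion id) :=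
    Finset.disjoint_left.1 hdis (by simp [hK'])
  have hN := (hz_hurwitz m _ _ _ hp hne).1 (by rw [hcc, Finset.card_univ]; omega)
  have hp' := hp
  rw [heq] at hp'
  have hS := (hz_sep (fun m' _ => hz_hurwitz m') hp' n12
    (by rw [Finset.mem_union]; tauto) (by rw [Finset.mem_union]; tauto) h1 h2 (m := m)).2
    (by rw [hRc, Finset.card_univ]; omega)
  refine ⟨_, rfl, hdis', ?_, ?_⟩
  · intro c hc
    exact hp'.ne c (by simp [-Finset.mem_union, hc])
  · rw [e, hN, hS, zero_add, Finset.prod_union hdis', hzsing_prod, mul_one]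

end Values

open Equiv

set_option linter.unusedSectionVars false

section Values2
variable {V : Type*} [Fintype V] [DecidableEq V]

lemma hz_phi1 : hzphi 1 = 1 := by norm_num [hzphi, hzpsi]
lemma hz_phi2 : hzphi 2 = 4 := by norm_num [hzphi, hzpsi]
lemma hz_phi3 : hzphi 3 = 27 / 2 := by norm_num [hzphi, hzpsi, Nat.factorial]
lemma hz_phi4 : hzphi 4 = 128 / 3 := by norm_num [hzphi, hzpsi, Nat.factorial]
lemma hz_phi5 : hzphi 5 = 3125 / 24 := by norm_num [hzphi, hzpsi, Nat.factorial]

/-- `σ` acts as a 3-cycle on `X` and trivially elsewhere. -/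
structure hzThree (σ : Perm V) (X : Finset V) : Prop where
  cyc : σ.IsCycleOn (X : Set V)
  card : X.card = 3
  fix : ∀ x, x ∉ X → σ x = x

lemma hzThree.inv_fix {σ : Perm V} {X : Finset V} (h : hzThree σ X) : ∀ x, x ∉ X → σ⁻¹ x = x := by
  intro x hx
  rw [Perm.inv_eq_iff_eq, h.fix x hx]

lemma hzThree.cl {σ π : Perm V} {X c B : Finset V} (h : hzThree σ X) (hc : π.IsCycleOn (c : Set V))
    (hX : X ⊆ c) (hB : ∀ x ∈ B, π x ∈ B) : ∀ x ∈ B, σ x ∈ B := by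
  intro x hx
  by_cases hxX : x ∈ X
  · exact hz_cycle_sub hc hB (hX hxX) hx (hX (hz_cycle_cl h.cyc x hxX))
  · rwa [h.fix x hxX]

lemma hz_cell_iff {π : Perm V} {c B : Finset V} {a b : V} (hc : π.IsCycleOn (c : Set V))
    (ha : a ∈ c) (hb : b ∈ c) (hB : ∀ x ∈ B, π x ∈ B) : a ∈ B ↔ b ∈ B :=
  ⟨fun h => hz_cycle_sub hc hB ha h hb, fun h => hz_cycle_sub hc hB hb h ha⟩

lemma hz_two_cl {B : Finset V} {a b c d : V} (h1 : a ∈ B ↔ b ∈ B) (h2 : c ∈ B ↔ d ∈ B) :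
    ∀ x ∈ B, (swap a b * swap c d) x ∈ B := by
  intro x hx
  exact hz_swap_cl.2 h1 _ (hz_swap_cl.2 h2 _ hx)

lemma hz_pair_cyc {ρ : Perm V} {a b : V} (hab : a ≠ b) (ha : ρ a = a) (hb : ρ b = b) :
    (swap a b * ρ).IsCycleOn (({a, b} : Finset V) : Set V) :=
  hz_join_cycle (hz_cyc_sing ha) (hz_cyc_sing hb) (by simpa using hab) (by simp) (by simp)

lemma hz_add_cyc {ρ : Perm V} {c : Finset V} {a b : V} (hc : ρ.IsCycleOn (c : Set V)) (ha : a ∈ c)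
    (hbc : b ∉ c) (hb : ρ b = b) :
    (swap a b * ρ).IsCycleOn ((insert b c : Finset V) : Set V) := by
  have := hz_join_cycle hc (hz_cyc_sing hb) (by simpa using hbc) ha (Finset.mem_singleton_self b)
  rwa [Finset.union_comm] at this

lemma hz_v0 {σ : Perm V} {X : Finset V} {a b c d : V} {m : ℕ} (h : hzThree σ X)
    (ha : a ∉ X) (hb : b ∉ X) (hc : c ∉ X) (hd : d ∉ X) (hab : a ≠ b) (hac : a ≠ c) (had : a ≠ d)
    (hbc : b ≠ c) (hbd : b ≠ d) (hcd : c ≠ d) (hm : m + 6 = 2 * Fintype.card V) :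
    hzWt σ (swap a b * swap c d) m = (m.factorial : ℚ) *
      ((Fintype.card V : ℚ) ^ ((Fintype.card V : ℤ) - 7) * (27 / 2 * 16)) := by
  have e : (swap a b * swap c d)⁻¹ * σ⁻¹ = swap c d * (swap a b * σ⁻¹) := by
    simp [mul_inv_rev, mul_assoc]
  have i := h.inv_fix
  have k1 : (swap c d * (swap a b * σ⁻¹)).IsCycleOn (X : Set V) :=
    hz_other (hz_other h.cyc.inv ha hb) hc hd
  have k2 : (swap c d * (swap a b * σ⁻¹)).IsCycleOn (({a, b} : Finset V) : Set V) :=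
    hz_other (hz_pair_cyc hab (i a ha) (i b hb)) (by simp [hac.symm, hbc.symm])
      (by simp [had.symm, hbd.symm])
  have f : ∀ x, x ≠ a → x ≠ b → x ∉ X → (swap a b * σ⁻¹) x = x := by
    intro x h1 h2 h3
    rw [Perm.mul_apply, i x h3, swap_apply_of_ne_of_ne h1 h2]
  have k3 : (swap c d * (swap a b * σ⁻¹)).IsCycleOn (({c, d} : Finset V) : Set V) :=
    hz_pair_cyc hcd (f c hac.symm hbc.symm hc) (f d had.symm hbd.symm hd)
  have d1 : Disjoint X {a, b} := by simp [ha, hb]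
  have d2 : Disjoint X {c, d} := by simp [hc, hd]
  have d3 : Disjoint ({a, b} : Finset V) {c, d} := by
    simp [hac.symm, had.symm, hbc.symm, hbd.symm]
  have n1 : X ∉ ({{a, b}, {c, d}} : Finset (Finset V)) := by
    simp only [Finset.mem_insert, Finset.mem_singleton, not_or]
    exact ⟨fun h' => ha (by rw [h']; simp), fun h' => hc (by rw [h']; simp)⟩
  have n2 : ({a, b} : Finset V) ∉ ({{c, d}} : Finset (Finset V)) := by
    simp only [Finset.mem_singleton]
    intro h'
    have : a ∈ ({c, d} : Finset V) := by rw [← h']; simp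
    simp [hac, had] at this
  have un : ({X, {a, b}, {c, d}} : Finset (Finset V)).biUnion id = X ∪ ({a, b} ∪ {c, d}) := by
    simp only [Finset.biUnion_insert, Finset.singleton_biUnion, id]
  have cell : hzCell ((swap a b * swap c d)⁻¹ * σ⁻¹) {X, {a, b}, {c, d}} := by
    rw [e]
    refine ⟨?_, ?_, ?_, ?_⟩
    · simp only [Finset.mem_insert, Finset.mem_singleton]
      rintro s (rfl | rfl | rfl)
      · rw [← Finset.card_pos, h.card]; norm_num
      · simp
      · simp
    · simp only [Finset.mem_insert, Finset.mem_singleton]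
      rintro s (rfl | rfl | rfl) <;> assumption
    · simp only [Finset.mem_insert, Finset.mem_singleton]
      rintro s (rfl | rfl | rfl) t (rfl | rfl | rfl) hne <;>
        first
        | exact absurd rfl hne
        | assumption
        | exact Disjoint.symm (by assumption)
    · rw [un]
      intro x hx
      simp only [Finset.mem_union, Finset.mem_insert, Finset.mem_singleton, not_or] at hx
      rw [Perm.mul_apply, f x hx.2.1.1 hx.2.1.2 hx.1, swap_apply_of_ne_of_ne hx.2.2.1 hx.2.2.2]
  rw [hz_val_join cell ?_ ?_ hm, Finset.prod_insert n1, Finset.prod_insert n2,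
    Finset.prod_singleton, h.card, Finset.card_pair hab, Finset.card_pair hcd, hz_phi3, hz_phi2]
  · norm_num
  · rw [e]
    intro B hB
    exact ⟨h.cl k1 subset_rfl hB, hz_two_cl (hz_cell_iff k2 (by simp) (by simp) hB)
      (hz_cell_iff k3 (by simp) (by simp) hB)⟩
  · rw [un, Finset.card_union_of_disjoint, Finset.card_union_of_disjoint d3, h.card,
      Finset.card_pair hab, Finset.card_pair hcd, Finset.card_insert_of_notMem n1,
      Finset.card_insert_of_notMem n2, Finset.card_singleton]
    exact Finset.disjoint_union_right.2 ⟨d1, d2⟩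

lemma hz_v1 {σ : Perm V} {X : Finset V} {a b c d : V} {m : ℕ} (h : hzThree σ X)
    (ha : a ∈ X) (hb : b ∉ X) (hc : c ∉ X) (hd : d ∉ X)
    (hbc : b ≠ c) (hbd : b ≠ d) (hcd : c ≠ d) (hm : m + 6 = 2 * Fintype.card V) :
    hzWt σ (swap a b * swap c d) m = (m.factorial : ℚ) *
      ((Fintype.card V : ℚ) ^ ((Fintype.card V : ℤ) - 7) * (128 / 3 * 4)) := by
  have e : (swap a b * swap c d)⁻¹ * σ⁻¹ = swap c d * (swap a b * σ⁻¹) := by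
    simp [mul_inv_rev, mul_assoc]
  have i := h.inv_fix
  have k1 : (swap c d * (swap a b * σ⁻¹)).IsCycleOn ((insert b X : Finset V) : Set V) :=
    hz_other (hz_add_cyc h.cyc.inv ha hb (i b hb)) (by simp [hbc.symm, hc]) (by simp [hbd.symm, hd])
  have f : ∀ x, x ≠ b → x ∉ X → (swap a b * σ⁻¹) x = x := by
    intro x h2 h3
    rw [Perm.mul_apply, i x h3, swap_apply_of_ne_of_ne (fun h' : x = a => h3 (by rw [h']; exact ha)) h2]
  have k3 : (swap c d * (swap a b * σ⁻¹)).IsCycleOn (({c, d} : Finset V) : Set V) :=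
    hz_pair_cyc hcd (f c hbc.symm hc) (f d hbd.symm hd)
  have d1 : Disjoint (insert b X) {c, d} := by
    simp [hc, hd, hbc.symm, hbd.symm]
  have n1 : insert b X ∉ ({{c, d}} : Finset (Finset V)) := by
    simp only [Finset.mem_singleton]
    intro h'
    have : b ∈ ({c, d} : Finset V) := by rw [← h']; simp
    simp [hbc, hbd] at this
  have un : ({insert b X, {c, d}} : Finset (Finset V)).biUnion id = insert b X ∪ {c, d} := by
    simp only [Finset.biUnion_insert, Finset.singleton_biUnion, id]
  have cell : hzCell ((swap a b * swap c d)⁻¹ * σ⁻¹) {insert b X, {c, d}} := by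
    rw [e]
    refine ⟨?_, ?_, ?_, ?_⟩
    · simp only [Finset.mem_insert, Finset.mem_singleton]
      rintro s (rfl | rfl) <;> simp
    · simp only [Finset.mem_insert, Finset.mem_singleton]
      rintro s (rfl | rfl) <;> assumption
    · simp only [Finset.mem_insert, Finset.mem_singleton]
      rintro s (rfl | rfl) t (rfl | rfl) hne <;>
        first
        | exact absurd rfl hne
        | assumption
        | exact Disjoint.symm (by assumption)
    · rw [un]
      intro x hx
      simp only [Finset.mem_union, Finset.mem_insert, Finset.mem_singleton, not_or] at hx
      rw [Perm.mul_apply, f x hx.1.1 hx.1.2, swap_apply_of_ne_of_ne hx.2.1 hx.2.2]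
  rw [hz_val_join cell ?_ ?_ hm, Finset.prod_insert n1,
    Finset.prod_singleton, Finset.card_insert_of_notMem hb, h.card, Finset.card_pair hcd,
    hz_phi4, hz_phi2]
  · rw [e]
    intro B hB
    exact ⟨h.cl k1 (Finset.subset_insert _ _) hB,
      hz_two_cl (hz_cell_iff k1 (by simp [ha]) (by simp) hB)
      (hz_cell_iff k3 (by simp) (by simp) hB)⟩
  · rw [un, Finset.card_union_of_disjoint d1, Finset.card_insert_of_notMem hb, h.card,
      Finset.card_pair hcd, Finset.card_insert_of_notMem n1, Finset.card_singleton]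

lemma hz_v2 {σ : Perm V} {X : Finset V} {a b c d : V} {m : ℕ} (h : hzThree σ X)
    (ha : a ∈ X) (hb : b ∉ X) (hc : c ∈ X) (hd : d ∉ X) (hbd : b ≠ d)
    (hm : m + 6 = 2 * Fintype.card V) :
    hzWt σ (swap a b * swap c d) m = (m.factorial : ℚ) *
      ((Fintype.card V : ℚ) ^ ((Fintype.card V : ℤ) - 7) * (3125 / 24)) := by
  have e : (swap a b * swap c d)⁻¹ * σ⁻¹ = swap c d * (swap a b * σ⁻¹) := by
    simp [mul_inv_rev, mul_assoc]
  have i := h.inv_fix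
  have f : ∀ x, x ≠ b → x ∉ X → (swap a b * σ⁻¹) x = x := by
    intro x h2 h3
    rw [Perm.mul_apply, i x h3, swap_apply_of_ne_of_ne (fun h' : x = a => h3 (by rw [h']; exact ha)) h2]
  have hd' : d ∉ insert b X := by simp [hbd.symm, hd]
  have k1 : (swap c d * (swap a b * σ⁻¹)).IsCycleOn ((insert d (insert b X) : Finset V) : Set V) :=
    hz_add_cyc (hz_add_cyc h.cyc.inv ha hb (i b hb)) (by simp [hc]) hd' (f d hbd.symm hd)
  have un : ({insert d (insert b X)} : Finset (Finset V)).biUnion id = insert d (insert b X) := by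
    simp only [Finset.singleton_biUnion, id]
  have cell : hzCell ((swap a b * swap c d)⁻¹ * σ⁻¹) {insert d (insert b X)} := by
    rw [e]
    refine ⟨?_, ?_, ?_, ?_⟩
    · simp
    · simp only [Finset.mem_singleton]
      rintro s rfl; assumption
    · simp only [Finset.mem_singleton]
      rintro s rfl t rfl hne
      exact absurd rfl hne
    · rw [un]
      intro x hx
      simp only [Finset.mem_insert, not_or] at hx
      rw [Perm.mul_apply, f x hx.2.1 hx.2.2, swap_apply_of_ne_of_ne (fun h' : x = c => hx.2.2 (by rw [h']; exact hc)) hx.1]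
  rw [hz_val_join cell ?_ ?_ hm,
    Finset.prod_singleton, Finset.card_insert_of_notMem hd', Finset.card_insert_of_notMem hb, h.card,
    hz_phi5]
  · rw [e]
    intro B hB
    exact ⟨h.cl k1 (by intro x hx; simp [hx]) hB,
      hz_two_cl (hz_cell_iff k1 (by simp [ha]) (by simp) hB)
      (hz_cell_iff k1 (by simp [hc]) (by simp) hB)⟩
  · rw [un, Finset.card_insert_of_notMem hd', Finset.card_insert_of_notMem hb, h.card,
      Finset.card_singleton]

lemma hz_A_eval (R : Finset (Finset V)) (hR : ∀ c ∈ R, c.Nonempty) (a b n s k : ℚ) (ha : 0 < a)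
    (hb : 0 < b) (hf : ∀ f : ℕ → ℚ, ∑ c ∈ R, f c.card = s * f 2 + k * f 1)
    (hn : n = a + b + (2 * s + k)) :
    ∑ T ∈ R.powerset, hzC (fun c : Finset V => (c.card : ℚ)) a T *
          hzC (fun c : Finset V => (c.card : ℚ)) b (R \ T) =
    n ^ ((R.card : ℤ) - 3) * ((a + b) * n ^ 2 / (a ^ 2 * b ^ 2) -
      n * (s * (2 * (a + b + 2) * (1 / (a * (a + 2) * b ^ 2) + 1 / (b * (b + 2) * a ^ 2))) +
        k * (1 * (a + b + 1) * (1 / (a * (a + 1) * b ^ 2) + 1 / (b * (b + 1) * a ^ 2)))) +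
      ((s * (s - 1) * (2 * 2 * (a + b + 2 + 2) / (a * b * (a + 2) * (b + 2))) +
        s * k * (1 * 2 * (a + b + 1 + 2) / (a * b * (a + 1) * (b + 2))) +
        s * k * (2 * 1 * (a + b + 2 + 1) / (a * b * (a + 2) * (b + 1))) +
        k * (k - 1) * (1 * 1 * (a + b + 1 + 1) / (a * b * (a + 1) * (b + 1)))))) := by
  rw [hz_A _ R a b n ha hb (fun c hc => by exact_mod_cast Finset.card_pos.2 (hR c hc))
    (by rw [hn, hf (fun i => (i : ℚ))]; push_cast; ring)]
  have e1 := hf (fun i => (i : ℚ) * (a + b + i) *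
    (1 / (a * (a + i) * b ^ 2) + 1 / (b * (b + i) * a ^ 2)))
  have e2 : ∀ j ∈ R, ∑ i ∈ R.erase j, (i.card : ℚ) * (j.card : ℚ) * (a + b + i.card + j.card) /
      (a * b * (a + i.card) * (b + j.card)) =
      (fun q : ℕ => s * (2 * (q : ℚ) * (a + b + 2 + q) / (a * b * (a + 2) * (b + q))) +
       k * (1 * (q : ℚ) * (a + b + 1 + q) / (a * b * (a + 1) * (b + q))) -
       (q : ℚ) * (q : ℚ) * (a + b + q + q) / (a * b * (a + q) * (b + q))) j.card := by
    intro j hj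
    have h1 := hf (fun i => (i : ℚ) * (j.card : ℚ) * (a + b + i + j.card) /
      (a * b * (a + i) * (b + j.card)))
    have h2 := Finset.add_sum_erase R (fun i => (i.card : ℚ) * (j.card : ℚ) *
      (a + b + i.card + j.card) / (a * b * (a + i.card) * (b + j.card))) hj
    beta_reduce at h1 h2 ⊢
    rw [h1] at h2
    rw [eq_sub_of_add_eq' h2]
    push_cast
    ring
  rw [e1, (Finset.sum_congr rfl e2).trans (hf (fun q : ℕ =>
       s * (2 * (q : ℚ) * (a + b + 2 + q) / (a * b * (a + 2) * (b + q))) +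
       k * (1 * (q : ℚ) * (a + b + 1 + q) / (a * b * (a + 1) * (b + q))) -
       (q : ℚ) * (q : ℚ) * (a + b + q + q) / (a * b * (a + q) * (b + q))))]
  push_cast
  congr 1
  ring

end Values2

open Equiv

set_option linter.unusedSectionVars false

section Values3
variable {V : Type*} [Fintype V] [DecidableEq V]

/-- The 3-cycle `x → z → y → x`. -/
def hzcyc (x y z : V) : Perm V := swap x y * swap x z

lemma hzcyc_x {x y z : V} (hxz : x ≠ z) (hyz : y ≠ z) : hzcyc x y z x = z := by
  rw [hzcyc, Perm.mul_apply, swap_apply_left, swap_apply_of_ne_of_ne hxz.symm hyz.symm]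
lemma hzcyc_y {x y z : V} (hxy : x ≠ y) (hyz : y ≠ z) : hzcyc x y z y = x := by
  rw [hzcyc, Perm.mul_apply, swap_apply_of_ne_of_ne hxy.symm hyz, swap_apply_right]
lemma hzcyc_z {x y z : V} : hzcyc x y z z = y := by
  rw [hzcyc, Perm.mul_apply, swap_apply_right, swap_apply_left]
lemma hzcyc_o {x y z w : V} (hx : w ≠ x) (hy : w ≠ y) (hz : w ≠ z) : hzcyc x y z w = w := by
  rw [hzcyc, Perm.mul_apply, swap_apply_of_ne_of_ne hx hz, swap_apply_of_ne_of_ne hx hy]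

lemma hzcyc_unique {x y z : V} {σ : Perm V} (hxy : x ≠ y) (hxz : x ≠ z) (hyz : y ≠ z)
    (h1 : σ x = z) (h2 : σ z = y) (h3 : σ y = x) (h4 : ∀ w, w ≠ x → w ≠ y → w ≠ z → σ w = w) :
    σ = hzcyc x y z := by
  ext w
  by_cases hx : w = x
  · rw [hx, h1, hzcyc_x hxz hyz]
  by_cases hy : w = y
  · rw [hy, h3, hzcyc_y hxy hyz]
  by_cases hz : w = z
  · rw [hz, h2, hzcyc_z]
  rw [h4 w hx hy hz, hzcyc_o hx hy hz]

lemma hzcyc_rot {x y z : V} (hxy : x ≠ y) (hxz : x ≠ z) (hyz : y ≠ z) :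
    hzcyc x y z = hzcyc z x y :=
  hzcyc_unique hxz.symm hyz.symm hxy hzcyc_z (hzcyc_y hxy hyz) (hzcyc_x hxz hyz)
    fun _ h1 h2 h3 => hzcyc_o h2 h3 h1

lemma hzcyc_three {x y z : V} (hxy : x ≠ y) (hxz : x ≠ z) (hyz : y ≠ z) :
    hzThree (hzcyc x y z) {x, y, z} := by
  refine ⟨?_, ?_, ?_⟩
  · refine hz_isCycleOn ?_ x ?_
    · simp only [Finset.mem_insert, Finset.mem_singleton]
      rintro w (rfl | rfl | rfl)
      · rw [hzcyc_x hxz hyz]; simp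
      · rw [hzcyc_y hxy hyz]; simp
      · rw [hzcyc_z]; simp
    · simp only [Finset.mem_insert, Finset.mem_singleton]
      rintro w (rfl | rfl | rfl)
      · exact Perm.SameCycle.refl _ _
      · exact ⟨2, by simp [pow_two, zpow_two, hzcyc_x hxz hyz, hzcyc_z]⟩
      · exact ⟨1, by simp [hzcyc_x hxz hyz]⟩
  · rw [Finset.card_insert_of_notMem (by simp [hxy, hxz]), Finset.card_pair hyz]
  · intro w hw
    simp only [Finset.mem_insert, Finset.mem_singleton, not_or] at hw
    exact hzcyc_o hw.1 hw.2.1 hw.2.2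

lemma hzcyc_prod (x y z c d : V) :
    (swap x z * swap c d)⁻¹ * (hzcyc x y z)⁻¹ = swap c d * (swap x y * 1) := by
  rw [hzcyc, mul_inv_rev, mul_inv_rev, swap_inv, swap_inv, swap_inv, mul_one, mul_assoc,
    swap_mul_self_mul]

lemma hzcyc_cl {x y z : V} (hxz : x ≠ z) (hyz : y ≠ z) {B : Finset V} (h : x ∈ B ↔ y ∈ B)
    {c d : V} (h2 : c ∈ B ↔ d ∈ B) :
    ((∀ w ∈ B, hzcyc x y z w ∈ B) ∧ (∀ w ∈ B, (swap x z * swap c d) w ∈ B)) ↔ (z ∈ B ↔ x ∈ B) := by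
  constructor
  · rintro ⟨h1, -⟩
    refine ⟨fun hz => ?_, fun hx => ?_⟩
    · have := h1 z hz
      rw [hzcyc_z] at this
      exact h.2 this
    · have := h1 x hx
      rwa [hzcyc_x hxz hyz] at this
  · intro h3
    exact ⟨hz_two_cl h h3.symm, hz_two_cl h3.symm h2⟩

lemma hz_v3 {x y z c d : V} {m : ℕ} (hxy : x ≠ y) (hxz : x ≠ z) (hyz : y ≠ z)
    (hcx : c ≠ x) (hcy : c ≠ y) (hcz : c ≠ z) (hdx : d ≠ x) (hdy : d ≠ y) (hdz : d ≠ z)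
    (hcd : c ≠ d) (hm : m + 6 = 2 * Fintype.card V) :
    hzWt (hzcyc x y z) (swap x z * swap c d) m = (m.factorial : ℚ) *
      ((Fintype.card V : ℚ) ^ ((Fintype.card V : ℤ) - 7) *
        (16 * (7 * (Fintype.card V : ℚ) + 65) / 12)) := by
  have e := hzcyc_prod x y z c d
  have f : ∀ w, w ≠ x → w ≠ y → (swap x y * (1 : Perm V)) w = w := by
    intro w h1 h2
    rw [mul_one, swap_apply_of_ne_of_ne h1 h2]
  have g : ∀ w, w ≠ x → w ≠ y → w ≠ c → w ≠ d → (swap c d * (swap x y * (1 : Perm V))) w = w := by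
    intro w h1 h2 h3 h4
    rw [Perm.mul_apply, f w h1 h2, swap_apply_of_ne_of_ne h3 h4]
  have k1 : (swap c d * (swap x y * 1)).IsCycleOn (({z} : Finset V) : Set V) :=
    hz_cyc_sing (g z hxz.symm hyz.symm hcz.symm hdz.symm)
  have k2 : (swap c d * (swap x y * 1)).IsCycleOn (({x, y} : Finset V) : Set V) :=
    hz_other (hz_pair_cyc hxy rfl rfl) (by simp [hcx, hcy]) (by simp [hdx, hdy])
  have k3 : (swap c d * (swap x y * 1)).IsCycleOn (({c, d} : Finset V) : Set V) :=
    hz_pair_cyc hcd (f c hcx hcy) (f d hdx hdy)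
  have d1 : Disjoint ({z} : Finset V) {x, y} := by simp [hxz.symm, hyz.symm]
  have d2 : Disjoint ({z} : Finset V) {c, d} := by simp [hcz.symm, hdz.symm]
  have d3 : Disjoint ({x, y} : Finset V) {c, d} := by simp [hcx, hcy, hdx, hdy]
  have un : (insert {z} (insert {x, y} {{c, d}}) : Finset (Finset V)).biUnion id =
      {z} ∪ ({x, y} ∪ {c, d}) := by
    simp only [Finset.biUnion_insert, Finset.singleton_biUnion, id]
  have unc : (({z} ∪ ({x, y} ∪ {c, d}) : Finset V)).card = 5 := by
    rw [Finset.card_union_of_disjoint (Finset.disjoint_union_right.2 ⟨d1, d2⟩),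
      Finset.card_union_of_disjoint d3, Finset.card_pair hxy, Finset.card_pair hcd,
      Finset.card_singleton]
  have cell : hzCell ((swap x z * swap c d)⁻¹ * (hzcyc x y z)⁻¹)
      (insert {z} (insert {x, y} {{c, d}})) := by
    rw [e]
    refine ⟨?_, ?_, ?_, ?_⟩
    · simp only [Finset.mem_insert, Finset.mem_singleton]
      rintro s (rfl | rfl | rfl) <;> simp
    · simp only [Finset.mem_insert, Finset.mem_singleton]
      rintro s (rfl | rfl | rfl) <;> assumption
    · simp only [Finset.mem_insert, Finset.mem_singleton]
      rintro s (rfl | rfl | rfl) t (rfl | rfl | rfl) hne <;>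
        first
        | exact absurd rfl hne
        | assumption
        | exact Disjoint.symm (by assumption)
    · rw [un]
      intro w hw
      simp only [Finset.mem_union, Finset.mem_insert, Finset.mem_singleton, not_or] at hw
      exact g w hw.2.1.1 hw.2.1.2 hw.2.2.1 hw.2.2.2
  have q : ∀ {s t : Finset V}, s.Nonempty → Disjoint s t → s ≠ t := by
    rintro s t hs hd rfl
    exact hs.ne_empty (disjoint_self.1 hd)
  obtain ⟨R, hR, hdis, hRne, hW⟩ := hz_val_cut (x := x) (z := z) (m := m) cell (by simp) (by simp)
    (q (by simp) d1) (by rw [Finset.mem_singleton]; exact q (by simp) d2)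
    (by rw [Finset.mem_singleton]; exact q (by simp) d3)
    (by
      rw [e]
      intro B hB
      exact hzcyc_cl hxz hyz (hz_cell_iff k2 (by simp) (by simp) hB)
        (hz_cell_iff k3 (by simp) (by simp) hB))
    (by rw [un, unc]; simp) hm
  rw [un] at hR hdis
  have hsc := hzsing_card ({z} ∪ ({x, y} ∪ {c, d}) : Finset V)
  rw [unc] at hsc
  have hscQ : ((hzsing ({z} ∪ ({x, y} ∪ {c, d}) : Finset V)).card : ℚ) = Fintype.card V - 5 := by
    rw [← hsc]; push_cast; ring
  have hRc : R.card + 4 = Fintype.card V := by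
    rw [hR, Finset.card_union_of_disjoint hdis, Finset.card_singleton]; omega
  have hev := hz_A_eval R hRne 1 2 (Fintype.card V : ℚ) 1 (Fintype.card V - 5) (by norm_num)
    (by norm_num)
    (by
      intro f
      rw [hR, Finset.sum_union hdis, Finset.sum_singleton, hzsing_sum, Finset.card_pair hcd, hscQ]
      ring) (by ring)
  rw [hW, Finset.prod_singleton, Finset.card_singleton, Finset.card_pair hxy, Finset.card_pair hcd,
    Nat.cast_one, Nat.cast_two, hev, hz_phi1, hz_phi2]
  have : ((R.card : ℤ) - 3) = (Fintype.card V : ℤ) - 7 := by omega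
  rw [this]
  ring

lemma hz_v4 {x y z d : V} {m : ℕ} (hxy : x ≠ y) (hxz : x ≠ z) (hyz : y ≠ z)
    (hdx : d ≠ x) (hdy : d ≠ y) (hdz : d ≠ z) (hm : m + 6 = 2 * Fintype.card V) :
    hzWt (hzcyc x y z) (swap x z * swap y d) m = (m.factorial : ℚ) *
      ((Fintype.card V : ℚ) ^ ((Fintype.card V : ℤ) - 7) *
        (27 / 2 * (19 * (Fintype.card V : ℚ) / 36 + 5))) := by
  have e := hzcyc_prod x y z y d
  have f : ∀ w, w ≠ x → w ≠ y → (swap x y * (1 : Perm V)) w = w := by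
    intro w h1 h2
    rw [mul_one, swap_apply_of_ne_of_ne h1 h2]
  have g : ∀ w, w ≠ x → w ≠ y → w ≠ d → (swap y d * (swap x y * (1 : Perm V))) w = w := by
    intro w h1 h2 h4
    rw [Perm.mul_apply, f w h1 h2, swap_apply_of_ne_of_ne h2 h4]
  have k1 : (swap y d * (swap x y * 1)).IsCycleOn (({z} : Finset V) : Set V) :=
    hz_cyc_sing (g z hxz.symm hyz.symm hdz.symm)
  have k2 : (swap y d * (swap x y * 1)).IsCycleOn ((insert d {x, y} : Finset V) : Set V) :=
    hz_add_cyc (hz_pair_cyc hxy rfl rfl) (by simp) (by simp [hdx, hdy]) (f d hdx hdy)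
  have d1 : Disjoint ({z} : Finset V) (insert d {x, y}) := by simp [hxz.symm, hyz.symm, hdz.symm]
  have c2 : (insert d {x, y} : Finset V).card = 3 := by
    rw [Finset.card_insert_of_notMem (by simp [hdx, hdy]), Finset.card_pair hxy]
  have un : (insert {z} (insert (insert d {x, y}) ∅) : Finset (Finset V)).biUnion id =
      {z} ∪ insert d {x, y} := by
    simp only [Finset.biUnion_insert, Finset.biUnion_empty, id, Finset.union_empty]
  have unc : (({z} ∪ insert d {x, y} : Finset V)).card = 4 := by
    rw [Finset.card_union_of_disjoint d1, c2, Finset.card_singleton]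
  have cell : hzCell ((swap x z * swap y d)⁻¹ * (hzcyc x y z)⁻¹)
      (insert {z} (insert (insert d {x, y}) ∅)) := by
    rw [e]
    refine ⟨?_, ?_, ?_, ?_⟩
    · simp only [Finset.mem_insert, Finset.notMem_empty, or_false]
      rintro s (rfl | rfl) <;> simp
    · simp only [Finset.mem_insert, Finset.notMem_empty, or_false]
      rintro s (rfl | rfl) <;> assumption
    · simp only [Finset.mem_insert, Finset.notMem_empty, or_false]
      rintro s (rfl | rfl) t (rfl | rfl) hne <;>
        first
        | exact absurd rfl hne
        | assumption
        | exact Disjoint.symm (by assumption)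
    · rw [un]
      intro w hw
      simp only [Finset.mem_union, Finset.mem_insert, Finset.mem_singleton, not_or] at hw
      exact g w hw.2.2.1 hw.2.2.2 hw.2.1
  have q : ∀ {s t : Finset V}, s.Nonempty → Disjoint s t → s ≠ t := by
    rintro s t hs hd rfl
    exact hs.ne_empty (disjoint_self.1 hd)
  obtain ⟨R, hR, hdis, hRne, hW⟩ := hz_val_cut (x := x) (z := z) (m := m) cell (by simp) (by simp)
    (q (by simp) d1) (by simp) (by simp)
    (by
      rw [e]
      intro B hB
      exact hzcyc_cl hxz hyz (hz_cell_iff k2 (by simp) (by simp) hB)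
        (hz_cell_iff k2 (by simp) (by simp) hB))
    (by rw [un, unc]; simp) hm
  rw [un] at hR hdis
  have hsc := hzsing_card ({z} ∪ insert d {x, y} : Finset V)
  rw [unc] at hsc
  have hscQ : ((hzsing ({z} ∪ insert d {x, y} : Finset V)).card : ℚ) = Fintype.card V - 4 := by
    rw [← hsc]; push_cast; ring
  rw [Finset.empty_union] at hR
  have hRc : R.card + 4 = Fintype.card V := by
    rw [hR]; omega
  have hev := hz_A_eval R hRne 1 3 (Fintype.card V : ℚ) 0 (Fintype.card V - 4) (by norm_num)
    (by norm_num)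
    (by
      intro f
      rw [hR, hzsing_sum, hscQ]
      ring) (by ring)
  rw [hW, Finset.prod_empty, Finset.card_singleton, c2,
    Nat.cast_one, Nat.cast_ofNat, hev, hz_phi1, hz_phi3]
  have : ((R.card : ℤ) - 3) = (Fintype.card V : ℤ) - 7 := by omega
  rw [this]
  ring

end Values3

open Equiv

set_option linter.unusedSectionVars false

section Values4
variable {V : Type*} [Fintype V] [DecidableEq V]

/-- Value as a function of the memberships in the support of the 3-cycle. -/
def hzF (v0 v1 v2 v3 v4 : ℚ) : Bool → Bool → Bool → Bool → ℚ
  | false, false, false, false => v0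
  | true, false, false, false => v1
  | false, true, false, false => v1
  | false, false, true, false => v1
  | false, false, false, true => v1
  | true, false, true, false => v2
  | true, false, false, true => v2
  | false, true, true, false => v2
  | false, true, false, true => v2
  | true, true, false, false => v3
  | false, false, true, true => v3
  | true, true, true, false => v4
  | true, true, false, true => v4
  | true, false, true, true => v4
  | false, true, true, true => v4
  | true, true, true, true => 0

lemma hz_orient {x y z a b : V} (hxy : x ≠ y) (hxz : x ≠ z) (hyz : y ≠ z)
    (ha : a ∈ ({x, y, z} : Finset V)) (hb : b ∈ ({x, y, z} : Finset V)) (hab : a ≠ b) :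
    ∃ p q r, hzcyc x y z = hzcyc p q r ∧ p ≠ q ∧ p ≠ r ∧ q ≠ r ∧
      ({x, y, z} : Finset V) = {p, q, r} ∧ (a = p ∧ b = r ∨ a = r ∧ b = p) := by
  have r1 := hzcyc_rot hxy hxz hyz
  have r2 := hzcyc_rot hxz.symm hyz.symm hxy
  have s1 : ({x, y, z} : Finset V) = {z, x, y} := by ext w; simp; tauto
  have s2 : ({x, y, z} : Finset V) = {y, z, x} := by ext w; simp; tauto
  simp only [Finset.mem_insert, Finset.mem_singleton] at ha hb
  rcases ha with rfl | rfl | rfl <;> rcases hb with rfl | rfl | rfl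
  · exact absurd rfl hab
  · exact ⟨b, z, a, r1.trans r2, hyz, hxy.symm, hxz.symm, s2, Or.inr ⟨rfl, rfl⟩⟩
  · exact ⟨a, y, b, rfl, hxy, hxz, hyz, rfl, Or.inl ⟨rfl, rfl⟩⟩
  · exact ⟨a, z, b, r1.trans r2, hyz, hxy.symm, hxz.symm, s2, Or.inl ⟨rfl, rfl⟩⟩
  · exact absurd rfl hab
  · exact ⟨b, x, a, r1, hxz.symm, hyz.symm, hxy, s1, Or.inr ⟨rfl, rfl⟩⟩
  · exact ⟨b, y, a, rfl, hxy, hxz, hyz, rfl, Or.inr ⟨rfl, rfl⟩⟩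
  · exact ⟨a, x, b, r1, hxz.symm, hyz.symm, hxy, s1, Or.inl ⟨rfl, rfl⟩⟩
  · exact absurd rfl hab

lemma hz_P3 {x y z a b c d : V} {m : ℕ} (hxy : x ≠ y) (hxz : x ≠ z) (hyz : y ≠ z)
    (ha : a ∈ ({x, y, z} : Finset V)) (hb : b ∈ ({x, y, z} : Finset V)) (hab : a ≠ b)
    (hc : c ∉ ({x, y, z} : Finset V)) (hd : d ∉ ({x, y, z} : Finset V)) (hcd : c ≠ d)
    (hm : m + 6 = 2 * Fintype.card V) :
    hzWt (hzcyc x y z) (swap a b * swap c d) m = (m.factorial : ℚ) *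
      ((Fintype.card V : ℚ) ^ ((Fintype.card V : ℤ) - 7) *
        (16 * (7 * (Fintype.card V : ℚ) + 65) / 12)) := by
  obtain ⟨p, q, r, e, hpq, hpr, hqr, hs, h⟩ := hz_orient hxy hxz hyz ha hb hab
  rw [hs] at hc hd
  simp only [Finset.mem_insert, Finset.mem_singleton, not_or] at hc hd
  have : swap a b = swap p r := by
    rcases h with ⟨rfl, rfl⟩ | ⟨rfl, rfl⟩
    · rfl
    · exact swap_comm _ _
  rw [e, this]
  exact hz_v3 hpq hpr hqr hc.1 hc.2.1 hc.2.2 hd.1 hd.2.1 hd.2.2 hcd hm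

lemma hz_P4 {x y z a b c d : V} {m : ℕ} (hxy : x ≠ y) (hxz : x ≠ z) (hyz : y ≠ z)
    (ha : a ∈ ({x, y, z} : Finset V)) (hb : b ∈ ({x, y, z} : Finset V)) (hab : a ≠ b)
    (hc : c ∈ ({x, y, z} : Finset V)) (hd : d ∉ ({x, y, z} : Finset V)) (hac : a ≠ c) (hbc : b ≠ c)
    (hm : m + 6 = 2 * Fintype.card V) :
    hzWt (hzcyc x y z) (swap a b * swap c d) m = (m.factorial : ℚ) *
      ((Fintype.card V : ℚ) ^ ((Fintype.card V : ℤ) - 7) *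
        (27 / 2 * (19 * (Fintype.card V : ℚ) / 36 + 5))) := by
  obtain ⟨p, q, r, e, hpq, hpr, hqr, hs, h⟩ := hz_orient hxy hxz hyz ha hb hab
  rw [hs] at hc hd
  simp only [Finset.mem_insert, Finset.mem_singleton, not_or] at hc hd
  have h2 : swap a b = swap p r := by
    rcases h with ⟨rfl, rfl⟩ | ⟨rfl, rfl⟩
    · rfl
    · exact swap_comm _ _
  have h3 : c = q := by
    rcases h with ⟨rfl, rfl⟩ | ⟨rfl, rfl⟩
    · rcases hc with h | h | h
      · exact absurd h.symm hac
      · exact h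
      · exact absurd h.symm hbc
    · rcases hc with h | h | h
      · exact absurd h.symm hbc
      · exact h
      · exact absurd h.symm hac
  rw [e, h2, h3]
  exact hz_v4 hpq hpr hqr hd.1 hd.2.1 hd.2.2 hm

lemma hz_swap_comm2 {a b c d : V} (hac : a ≠ c) (had : a ≠ d) (hbc : b ≠ c) (hbd : b ≠ d)
    (hab : a ≠ b) (hcd : c ≠ d) : swap a b * swap c d = swap c d * swap a b := by
  have : Perm.Disjoint (swap a b) (swap c d) := by
    rw [Perm.disjoint_iff_disjoint_support, Perm.support_swap hab, Perm.support_swap hcd]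
    simp [hac.symm, had.symm, hbc.symm, hbd.symm]
  exact this.commute

lemma hz_F {x y z a b c d : V} {m : ℕ} (hxy : x ≠ y) (hxz : x ≠ z) (hyz : y ≠ z)
    (hab : a ≠ b) (hac : a ≠ c) (had : a ≠ d) (hbc : b ≠ c) (hbd : b ≠ d) (hcd : c ≠ d)
    (hm : m + 6 = 2 * Fintype.card V) :
    hzWt (hzcyc x y z) (swap a b * swap c d) m = (m.factorial : ℚ) *
      ((Fintype.card V : ℚ) ^ ((Fintype.card V : ℤ) - 7) *
      hzF (27 / 2 * 16) (128 / 3 * 4) (3125 / 24) (16 * (7 * (Fintype.card V : ℚ) + 65) / 12)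
        (27 / 2 * (19 * (Fintype.card V : ℚ) / 36 + 5))
        (decide (a ∈ ({x, y, z} : Finset V))) (decide (b ∈ ({x, y, z} : Finset V)))
        (decide (c ∈ ({x, y, z} : Finset V))) (decide (d ∈ ({x, y, z} : Finset V)))) := by
  have h := hzcyc_three hxy hxz hyz
  have e1 := swap_comm a b
  have e2 := swap_comm c d
  have e3 := hz_swap_comm2 hac had hbc hbd hab hcd
  by_cases ha : a ∈ ({x, y, z} : Finset V) <;> by_cases hb : b ∈ ({x, y, z} : Finset V) <;>
  by_cases hc : c ∈ ({x, y, z} : Finset V) <;> by_cases hd : d ∈ ({x, y, z} : Finset V) <;>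
  simp only [ha, hb, hc, hd, decide_true, decide_false, hzF]
  · exfalso
    have hs : ({a, b, c, d} : Finset V) ⊆ {x, y, z} := by
      intro w hw
      simp only [Finset.mem_insert, Finset.mem_singleton] at hw
      rcases hw with rfl | rfl | rfl | rfl <;> assumption
    have := Finset.card_le_card hs
    rw [h.card, Finset.card_insert_of_notMem (by simp [hab, hac, had]),
      Finset.card_insert_of_notMem (by simp [hbc, hbd]), Finset.card_pair hcd] at this
    omega
  · exact hz_P4 hxy hxz hyz ha hb hab hc hd hac hbc hm
  · rw [e2]; exact hz_P4 hxy hxz hyz ha hb hab hd hc had hbd hm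
  · exact hz_P3 hxy hxz hyz ha hb hab hc hd hcd hm
  · rw [e3]; exact hz_P4 hxy hxz hyz hc hd hcd ha hb hac.symm had.symm hm
  · exact hz_v2 h ha hb hc hd hbd hm
  · rw [e2]; exact hz_v2 h ha hb hd hc hbc hm
  · exact hz_v1 h ha hb hc hd hbc hbd hcd hm
  · rw [e3, e1]; exact hz_P4 hxy hxz hyz hc hd hcd hb ha hbc.symm hbd.symm hm
  · rw [e1]; exact hz_v2 h hb ha hc hd had hm
  · rw [e1, e2]; exact hz_v2 h hb ha hd hc hac hm
  · rw [e1]; exact hz_v1 h hb ha hc hd hac had hcd hm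
  · rw [e3]; exact hz_P3 hxy hxz hyz hc hd hcd ha hb hab hm
  · rw [e3]; exact hz_v1 h hc hd ha hb had.symm hbd.symm hab hm
  · rw [e3, e2]; exact hz_v1 h hd hc ha hb hac.symm hbc.symm hab hm
  · exact hz_v0 h ha hb hc hd hab hac had hbc hbd hcd hm

/-- Numbers of elements of `S` inside and outside `X`. -/
def hzQ (X S : Finset V) (p q : ℚ) : Prop := ((S ∩ X).card : ℚ) = p ∧ ((S \ X).card : ℚ) = q

lemma hzQ.erase_in {X S : Finset V} {p q : ℚ} (h : hzQ X S p q) {a : V} (ha : a ∈ S) (haX : a ∈ X) :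
    hzQ X (S.erase a) (p - 1) q := by
  constructor
  · rw [Finset.erase_inter, Finset.card_erase_of_mem (by simp [ha, haX]),
      Nat.cast_sub (Finset.card_pos.2 ⟨a, by simp [ha, haX]⟩), h.1]; simp
  · rw [Finset.erase_sdiff_comm, Finset.erase_eq_of_notMem (by simp [haX]), h.2]

lemma hzQ.erase_out {X S : Finset V} {p q : ℚ} (h : hzQ X S p q) {a : V} (ha : a ∈ S)
    (haX : a ∉ X) : hzQ X (S.erase a) p (q - 1) := by
  constructor
  · rw [Finset.erase_inter, Finset.erase_eq_of_notMem (by simp [haX]), h.1]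
  · rw [Finset.erase_sdiff_comm, Finset.card_erase_of_mem (by simp [ha, haX]),
      Nat.cast_sub (Finset.card_pos.2 ⟨a, by simp [ha, haX]⟩), h.2]; simp

lemma hzQ.sum {X S : Finset V} {p q : ℚ} (h : hzQ X S p q) (G : V → ℚ) (g1 g0 : ℚ)
    (h1 : ∀ a ∈ S, a ∈ X → G a = g1) (h0 : ∀ a ∈ S, a ∉ X → G a = g0) :
    ∑ a ∈ S, G a = p * g1 + q * g0 := by
  rw [← Finset.sum_inter_add_sum_sdiff S X, Finset.sum_congr rfl (g := fun _ => g1),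
    Finset.sum_congr (s₁ := S \ X) rfl (g := fun _ => g0), Finset.sum_const, Finset.sum_const,
    nsmul_eq_mul, nsmul_eq_mul, h.1, h.2]
  · intro a ha; rw [Finset.mem_sdiff] at ha; exact h0 a ha.1 ha.2
  · intro a ha; rw [Finset.mem_inter] at ha; exact h1 a ha.1 ha.2

lemma hzQ.L1 {X S : Finset V} {p q : ℚ} (h : hzQ X S p q) (f : Bool → ℚ) :
    ∑ a ∈ S, f (decide (a ∈ X)) = p * f true + q * f false :=
  h.sum _ _ _ (fun a _ ha => by simp [ha]) (fun a _ ha => by simp [ha])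

lemma hzQ.L2 {X S : Finset V} {p q : ℚ} (h : hzQ X S p q) (f : Bool → Bool → ℚ) :
    ∑ a ∈ S, ∑ b ∈ S.erase a, f (decide (a ∈ X)) (decide (b ∈ X)) =
      p * ((p - 1) * f true true + q * f true false) +
      q * (p * f false true + (q - 1) * f false false) := by
  refine h.sum _ _ _ (fun a hS ha => ?_) (fun a hS ha => ?_)
  · rw [(h.erase_in hS ha).L1 (f (decide (a ∈ X)))]; simp [ha]
  · rw [(h.erase_out hS ha).L1 (f (decide (a ∈ X)))]; simp [ha]

lemma hzQ.L3 {X S : Finset V} {p q : ℚ} (h : hzQ X S p q) (f : Bool → Bool → Bool → ℚ) :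
    ∑ a ∈ S, ∑ b ∈ S.erase a, ∑ c ∈ (S.erase a).erase b,
      f (decide (a ∈ X)) (decide (b ∈ X)) (decide (c ∈ X)) =
      p * ((p - 1) * ((p - 1 - 1) * f true true true + q * f true true false) +
        q * ((p - 1) * f true false true + (q - 1) * f true false false)) +
      q * (p * ((p - 1) * f false true true + (q - 1) * f false true false) +
        (q - 1) * (p * f false false true + (q - 1 - 1) * f false false false)) := by
  refine h.sum _ _ _ (fun a hS ha => ?_) (fun a hS ha => ?_)
  · rw [(h.erase_in hS ha).L2 (f (decide (a ∈ X)))]; simp only [ha, decide_true]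
  · rw [(h.erase_out hS ha).L2 (f (decide (a ∈ X)))]; simp only [ha, decide_false]

lemma hzQ.L4 {X S : Finset V} {p q : ℚ} (h : hzQ X S p q) (f : Bool → Bool → Bool → Bool → ℚ) :
    ∑ a ∈ S, ∑ b ∈ S.erase a, ∑ c ∈ (S.erase a).erase b, ∑ d ∈ ((S.erase a).erase b).erase c,
      f (decide (a ∈ X)) (decide (b ∈ X)) (decide (c ∈ X)) (decide (d ∈ X)) =
      p * ((p - 1) * ((p - 1 - 1) * ((p - 1 - 1 - 1) * f true true true true +
            q * f true true true false) +
          q * ((p - 1 - 1) * f true true false true + (q - 1) * f true true false false)) +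
        q * ((p - 1) * ((p - 1 - 1) * f true false true true +
            (q - 1) * f true false true false) +
          (q - 1) * ((p - 1) * f true false false true + (q - 1 - 1) * f true false false false))) +
      q * (p * ((p - 1) * ((p - 1 - 1) * f false true true true +
            (q - 1) * f false true true false) +
          (q - 1) * ((p - 1) * f false true false true +
            (q - 1 - 1) * f false true false false)) +
        (q - 1) * (p * ((p - 1) * f false false true true +
            (q - 1 - 1) * f false false true false) +
          (q - 1 - 1) * (p * f false false false true +
            (q - 1 - 1 - 1) * f false false false false))) := by
  refine h.sum _ _ _ (fun a hS ha => ?_) (fun a hS ha => ?_)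
  · rw [(h.erase_in hS ha).L3 (f (decide (a ∈ X)))]; simp only [ha, decide_true]
  · rw [(h.erase_out hS ha).L3 (f (decide (a ∈ X)))]; simp only [ha, decide_false]

end Values4

open Equiv

set_option linter.unusedSectionVars false

section Sums
variable {V : Type*} [Fintype V] [DecidableEq V]

lemma hzcyc_isThree {x y z : V} (hxy : x ≠ y) (hxz : x ≠ z) (hyz : y ≠ z) :
    (hzcyc x y z).cycleType = {3} :=
  Perm.isThreeCycle_swap_mul_swap_same hxy hxz hyz

/-- Permutations with a given cycle type. -/
def hzTy (V : Type*) [Fintype V] [DecidableEq V] (t : Multiset ℕ) : Finset (Perm V) :=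
  Finset.univ.filter (fun σ => σ.cycleType = t)

lemma mem_hzTy {t : Multiset ℕ} {σ : Perm V} : σ ∈ hzTy V t ↔ σ.cycleType = t := by
  simp [hzTy]

lemma hzTy_card {t : Multiset ℕ} {σ : Perm V} (h : σ ∈ hzTy V t) : σ.support.card = t.sum := by
  rw [← mem_hzTy.1 h, Perm.sum_cycleType]

lemma hz_three_props {σ : Perm V} (h : σ ∈ hzTy V {3}) {x : V} (hx : x ∈ σ.support) :
    σ (σ (σ x)) = x ∧ σ (σ x) ≠ x ∧ ∀ w, w ≠ x → w ≠ σ (σ x) → w ≠ σ x → σ w = w := by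
  have h3 : σ.IsThreeCycle := mem_hzTy.1 h
  have ho := h3.orderOf
  have hx1 : σ x ≠ x := Perm.mem_support.1 hx
  have e3 : σ (σ (σ x)) = x := by
    have : (σ ^ 3) x = x := by rw [← ho, pow_orderOf_eq_one]; rfl
    simpa [pow_succ] using this
  have e2 : σ (σ x) ≠ x := by
    intro h2
    rw [h2] at e3
    exact hx1 e3
  have e4 : σ (σ x) ≠ σ x := fun h => hx1 (σ.injective h)
  refine ⟨e3, e2, fun w h1 h2 h4 => ?_⟩
  by_contra hw
  have hs : ({w, x, σ x, σ (σ x)} : Finset V) ⊆ σ.support := by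
    intro v hv
    simp only [Finset.mem_insert, Finset.mem_singleton] at hv
    rcases hv with rfl | rfl | rfl | rfl
    · simpa using hw
    · exact hx
    · simpa using hx1
    · simpa using hx1
  have := Finset.card_le_card hs
  rw [hzTy_card h, Finset.card_insert_of_notMem (by simp [h1, h2, h4]),
    Finset.card_insert_of_notMem (by simp [hx1.symm, e2.symm]), Finset.card_pair e4.symm] at this
  simp at this

lemma hz_sum3 (f : Perm V → ℚ) :
    ∑ x : V, ∑ y ∈ Finset.univ.erase x, ∑ z ∈ (Finset.univ.erase x).erase y, f (hzcyc x y z) =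
      3 * ∑ σ ∈ hzTy V {3}, f σ := by
  have e : 3 * ∑ σ ∈ hzTy V {3}, f σ = ∑ σ ∈ hzTy V {3}, ∑ x ∈ σ.support, f σ := by
    rw [Finset.mul_sum]
    refine Finset.sum_congr rfl fun σ hσ => ?_
    rw [Finset.sum_const, hzTy_card hσ]
    simp
  rw [e, Finset.sum_comm' (t' := Finset.univ)
    (s' := fun x => (hzTy V {3}).filter (fun σ => x ∈ σ.support)) (by simp)]
  refine Finset.sum_congr rfl fun x _ => ?_
  rw [Finset.sum_sigma']
  refine Finset.sum_nbij' (fun p => hzcyc x p.1 p.2) (fun σ => ⟨σ (σ x), σ x⟩) ?_ ?_ ?_ ?_ ?_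
  · rintro ⟨y, z⟩ h
    simp only [Finset.mem_sigma, Finset.mem_erase, Finset.mem_univ, and_true] at h
    rw [Finset.mem_filter, mem_hzTy]
    refine ⟨hzcyc_isThree h.1.symm h.2.2.symm h.2.1.symm, ?_⟩
    rw [Perm.mem_support, hzcyc_x h.2.2.symm h.2.1.symm]
    exact h.2.2
  · intro σ hσ
    rw [Finset.mem_filter] at hσ
    obtain ⟨h1, h2, h3⟩ := hz_three_props hσ.1 hσ.2
    have hx1 : σ x ≠ x := Perm.mem_support.1 hσ.2
    simp only [Finset.mem_sigma, Finset.mem_erase, Finset.mem_univ, and_true]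
    exact ⟨h2, fun h => hx1 (σ.injective h).symm, hx1⟩
  · rintro ⟨y, z⟩ h
    simp only [Finset.mem_sigma, Finset.mem_erase, Finset.mem_univ, and_true] at h
    simp only [hzcyc_x h.2.2.symm h.2.1.symm, hzcyc_z]
  · intro σ hσ
    rw [Finset.mem_filter] at hσ
    obtain ⟨h1, h2, h3⟩ := hz_three_props hσ.1 hσ.2
    have hx1 : σ x ≠ x := Perm.mem_support.1 hσ.2
    exact (hzcyc_unique h2.symm hx1.symm (fun h => hx1 (σ.injective h)) rfl rfl h1 h3).symm
  · intros; rfl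

lemma hz_two_type {a b c d : V} (hab : a ≠ b) (hac : a ≠ c) (had : a ≠ d) (hbc : b ≠ c)
    (hbd : b ≠ d) (hcd : c ≠ d) : (swap a b * swap c d).cycleType = {2, 2} := by
  have : Perm.Disjoint (swap a b) (swap c d) := by
    rw [Perm.disjoint_iff_disjoint_support, Perm.support_swap hab, Perm.support_swap hcd]
    simp [hac.symm, had.symm, hbc.symm, hbd.symm]
  rw [this.cycleType_mul, Perm.isSwap_iff_cycleType.1 ⟨a, b, hab, rfl⟩,
    Perm.isSwap_iff_cycleType.1 ⟨c, d, hcd, rfl⟩]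
  rfl

lemma hz_two_sq {σ : Perm V} (h : σ ∈ hzTy V {2, 2}) (x : V) : σ (σ x) = x := by
  have ho : orderOf σ = 2 := by
    rw [← Perm.lcm_cycleType, mem_hzTy.1 h]; rfl
  have : (σ ^ 2) x = x := by rw [← ho, pow_orderOf_eq_one]; rfl
  simpa [pow_succ] using this

lemma hz_sum22 (f : Perm V → ℚ) :
    ∑ a : V, ∑ b ∈ Finset.univ.erase a, ∑ c ∈ (Finset.univ.erase a).erase b,
      ∑ d ∈ ((Finset.univ.erase a).erase b).erase c, f (swap a b * swap c d) =
      8 * ∑ σ ∈ hzTy V {2, 2}, f σ := by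
  have e : 8 * ∑ σ ∈ hzTy V {2, 2}, f σ =
      ∑ σ ∈ hzTy V {2, 2}, ∑ a ∈ σ.support, ∑ c ∈ (σ.support.erase a).erase (σ a), f σ := by
    rw [Finset.mul_sum]
    refine Finset.sum_congr rfl fun σ hσ => ?_
    have hc := hzTy_card hσ
    simp only [Multiset.insert_eq_cons, Multiset.sum_cons, Multiset.sum_singleton] at hc
    rw [Finset.sum_congr rfl (g := fun _ => 2 * f σ), Finset.sum_const, hc]
    · simp; ring
    · intro a ha
      rw [Finset.sum_const, Finset.card_erase_of_mem, Finset.card_erase_of_mem ha, hc]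
      · simp
      · rw [Finset.mem_erase]
        exact ⟨Perm.mem_support.1 ha, by simpa using ha⟩
  rw [e, Finset.sum_comm' (t' := Finset.univ)
    (s' := fun x => (hzTy V {2, 2}).filter (fun σ => x ∈ σ.support)) (by simp)]
  refine Finset.sum_congr rfl fun a _ => ?_
  rw [Finset.sum_sigma', Finset.sum_sigma', Finset.sum_sigma']
  refine Finset.sum_nbij' (fun p => ⟨swap a p.1.1 * swap p.1.2 p.2, p.1.2⟩)
    (fun s => ⟨⟨s.1 a, s.2⟩, s.1 s.2⟩) ?_ ?_ ?_ ?_ ?_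
  · rintro ⟨⟨b, c⟩, d⟩ h
    simp only [Finset.mem_sigma, Finset.mem_erase, Finset.mem_univ, and_true] at h
    obtain ⟨⟨hba, hcb, hca⟩, hdc, hdb, hda⟩ := h
    have ea : (swap a b * swap c d) a = b := by
      rw [Perm.mul_apply, swap_apply_of_ne_of_ne hca.symm hda.symm, swap_apply_left]
    have ec : (swap a b * swap c d) c = d := by
      rw [Perm.mul_apply, swap_apply_left, swap_apply_of_ne_of_ne hda hdb]
    simp only [Finset.mem_sigma, Finset.mem_filter, mem_hzTy, Finset.mem_erase, Perm.mem_support,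
      ea, ec]
    exact ⟨⟨hz_two_type hba.symm hca.symm hda.symm hcb.symm hdb.symm hdc.symm, hba⟩, hcb, hca, hdc⟩
  · rintro ⟨σ, c⟩ h
    simp only [Finset.mem_sigma, Finset.mem_filter, Finset.mem_erase, Perm.mem_support] at h
    obtain ⟨⟨hσ, ha⟩, hcb, hca, hc⟩ := h
    simp only [Finset.mem_sigma, Finset.mem_erase, Finset.mem_univ, and_true]
    refine ⟨⟨ha, hcb, hca⟩, hc, fun h => hca (σ.injective h), fun h => hcb ?_⟩
    rw [← h, hz_two_sq hσ]
  · rintro ⟨⟨b, c⟩, d⟩ h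
    simp only [Finset.mem_sigma, Finset.mem_erase, Finset.mem_univ, and_true] at h
    obtain ⟨⟨hba, hcb, hca⟩, hdc, hdb, hda⟩ := h
    have ea : (swap a b * swap c d) a = b := by
      rw [Perm.mul_apply, swap_apply_of_ne_of_ne hca.symm hda.symm, swap_apply_left]
    have ec : (swap a b * swap c d) c = d := by
      rw [Perm.mul_apply, swap_apply_left, swap_apply_of_ne_of_ne hda hdb]
    simp only [ea, ec]
  · rintro ⟨σ, c⟩ h
    simp only [Finset.mem_sigma, Finset.mem_filter, Finset.mem_erase, Perm.mem_support] at h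
    obtain ⟨⟨hσ, ha⟩, hcb, hca, hc⟩ := h
    have sq := hz_two_sq hσ
    have hda : σ c ≠ a := fun h => hcb (by rw [← h, sq])
    have hdb : σ c ≠ σ a := fun h => hca (σ.injective h)
    have key : swap a (σ a) * swap c (σ c) = σ := by
      ext w
      rw [Perm.mul_apply]
      by_cases h1 : w = a
      · rw [h1, swap_apply_of_ne_of_ne hca.symm hda.symm, swap_apply_left]
      by_cases h2 : w = σ a
      · rw [h2, swap_apply_of_ne_of_ne hcb.symm hdb.symm, swap_apply_right, sq]
      by_cases h3 : w = c
      · rw [h3, swap_apply_left, swap_apply_of_ne_of_ne hda hdb]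
      by_cases h4 : w = σ c
      · rw [h4, swap_apply_right, swap_apply_of_ne_of_ne hca hcb, sq]
      rw [swap_apply_of_ne_of_ne h3 h4, swap_apply_of_ne_of_ne h1 h2]
      by_contra hw
      have hs : ({w, a, σ a, c, σ c} : Finset V) ⊆ σ.support := by
        intro v hv
        simp only [Finset.mem_insert, Finset.mem_singleton] at hv
        rcases hv with rfl | rfl | rfl | rfl | rfl
        · simpa using fun h => hw (by rw [h])
        · simpa using ha
        · simpa using ha
        · simpa using hc
        · simpa using hc
      have := Finset.card_le_card hs
      rw [hzTy_card hσ, Finset.card_insert_of_notMem (by simp [h1, h2, h3, h4]),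
        Finset.card_insert_of_notMem (by simp [ha.symm, hca.symm, hda.symm]),
        Finset.card_insert_of_notMem (by simp [hcb.symm, hdb.symm]), Finset.card_pair hc.symm] at this
      simp at this
    simp only [key]
  · intros; rfl

/-- Total of the values over all pairs. -/
lemma hz_total {m : ℕ} (hm : m + 6 = 2 * Fintype.card V) :
    24 * ∑ σ₁ ∈ hzTy V {3}, ∑ σ₂ ∈ hzTy V {2, 2}, hzWt σ₁ σ₂ m =
      (Fintype.card V : ℚ) * (Fintype.card V - 1) * (Fintype.card V - 2) * ((m.factorial : ℚ) *
      ((Fintype.card V : ℚ) ^ ((Fintype.card V : ℤ) - 7) *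
        (72 * (Fintype.card V - 3) * (Fintype.card V) *
          (3 * (Fintype.card V : ℚ) ^ 2 - 15 * (Fintype.card V : ℚ) + 20)))) := by
  have e : 24 * ∑ σ₁ ∈ hzTy V {3}, ∑ σ₂ ∈ hzTy V {2, 2}, hzWt σ₁ σ₂ m =
      3 * ∑ σ₁ ∈ hzTy V {3}, 8 * ∑ σ₂ ∈ hzTy V {2, 2}, hzWt σ₁ σ₂ m := by
    rw [← Finset.mul_sum]; ring
  rw [e, ← hz_sum3 (fun σ₁ => 8 * ∑ σ₂ ∈ hzTy V {2, 2}, hzWt σ₁ σ₂ m)]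
  have key : ∀ x y z : V, x ≠ y → x ≠ z → y ≠ z →
      8 * ∑ σ₂ ∈ hzTy V {2, 2}, hzWt (hzcyc x y z) σ₂ m = ((m.factorial : ℚ) *
      ((Fintype.card V : ℚ) ^ ((Fintype.card V : ℤ) - 7) *
        (72 * (Fintype.card V - 3) * (Fintype.card V) *
          (3 * (Fintype.card V : ℚ) ^ 2 - 15 * (Fintype.card V : ℚ) + 20)))) := by
    intro x y z hxy hxz hyz
    rw [← hz_sum22 (fun σ₂ => hzWt (hzcyc x y z) σ₂ m)]
    have hX := (hzcyc_three hxy hxz hyz).card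
    have hQ : hzQ {x, y, z} Finset.univ 3 ((Fintype.card V : ℚ) - 3) := by
      constructor
      · rw [Finset.univ_inter, hX]; rfl
      · rw [← Finset.compl_eq_univ_sdiff, Finset.card_compl, Nat.cast_sub (Finset.card_le_univ _), hX]
        rfl
    have := hQ.L4 (fun α β γ δ => (m.factorial : ℚ) *
      ((Fintype.card V : ℚ) ^ ((Fintype.card V : ℤ) - 7) *
      hzF (27 / 2 * 16) (128 / 3 * 4) (3125 / 24) (16 * (7 * (Fintype.card V : ℚ) + 65) / 12)
        (27 / 2 * (19 * (Fintype.card V : ℚ) / 36 + 5)) α β γ δ))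
    refine (Eq.trans ?_ this).trans ?_
    · refine Finset.sum_congr rfl fun a _ => Finset.sum_congr rfl fun b hb =>
        Finset.sum_congr rfl fun c hc => Finset.sum_congr rfl fun d hd => ?_
      simp only [Finset.mem_erase, Finset.mem_univ, and_true] at hb hc hd
      exact hz_F hxy hxz hyz hb.symm hc.2.symm hd.2.2.symm hc.1.symm hd.2.1.symm hd.1.symm hm
    · simp only [hzF]
      ring
  have hQ : hzQ (∅ : Finset V) Finset.univ 0 (Fintype.card V : ℚ) := by
    constructor <;> simp
  have := hQ.L3 (fun _ _ _ => ((m.factorial : ℚ) *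
      ((Fintype.card V : ℚ) ^ ((Fintype.card V : ℤ) - 7) *
        (72 * (Fintype.card V - 3) * (Fintype.card V) *
          (3 * (Fintype.card V : ℚ) ^ 2 - 15 * (Fintype.card V : ℚ) + 20)))))
  refine (Eq.trans ?_ this).trans (by ring)
  refine Finset.sum_congr rfl fun x _ => Finset.sum_congr rfl fun y hy =>
    Finset.sum_congr rfl fun z hz => ?_
  simp only [Finset.mem_erase, Finset.mem_univ, and_true] at hy hz
  exact key x y z hy.symm hz.2.symm hz.1.symm

lemma hz_trans_iff [Nonempty V] (l : List (Perm V)) :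
    (∀ x y : V, ∃ g ∈ Subgroup.closure {τ | τ ∈ l}, g x = y) ↔ hzconn Finset.univ l := by
  classical
  constructor
  · intro h
    refine ⟨Finset.univ_nonempty, fun B _ hB hcl => ?_⟩
    obtain ⟨x, hx⟩ := hB
    rw [Finset.eq_univ_iff_forall]
    intro y
    obtain ⟨g, hg, rfl⟩ := h x y
    have : ∀ w, g w ∈ B ↔ w ∈ B := by
      induction hg using Subgroup.closure_induction with
      | mem τ hτ => exact fun w => hz_mem_iff (hcl τ hτ) w
      | one => simp
      | mul a b _ _ h1 h2 => intro w; rw [Perm.mul_apply, h1, h2]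
      | inv a _ h1 => intro w; rw [← h1 (a⁻¹ w)]; simp
    exact (this x).2 hx
  · intro h x y
    have := h.2 (Finset.univ.filter (fun y => ∃ g ∈ Subgroup.closure {τ | τ ∈ l}, g x = y))
      (Finset.subset_univ _) ⟨x, by simpa using ⟨1, Subgroup.one_mem _, rfl⟩⟩ ?_
    · have hy : y ∈ (Finset.univ : Finset V) := Finset.mem_univ y
      rw [← this, Finset.mem_filter] at hy
      exact hy.2
    · intro τ hτ w hw
      rw [Finset.mem_filter] at hw ⊢
      obtain ⟨_, g, hg, rfl⟩ := hw
      exact ⟨Finset.mem_univ _, τ * g, Subgroup.mul_mem _ (Subgroup.subset_closure hτ) hg, rfl⟩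

lemma hz_card_eq [Nonempty V] (m : ℕ) :
    (Nat.card {p : Perm V × Perm V × (Fin m → Perm V) //
        p.1.cycleType = {3} ∧
        p.2.1.cycleType = {2, 2} ∧
        (∀ i, (p.2.2 i).IsSwap) ∧
        p.1 * p.2.1 * (List.ofFn p.2.2).prod = 1 ∧
        (∀ x y : V, ∃ g ∈ Subgroup.closure ({p.1, p.2.1} ∪ Set.range p.2.2),
          g x = y)} : ℚ) = ∑ σ₁ ∈ hzTy V {3}, ∑ σ₂ ∈ hzTy V {2, 2}, hzWt σ₁ σ₂ m := by
  classical
  let P : Perm V → Perm V → List (Perm V) → Prop := fun σ₁ σ₂ l =>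
    hzconn Finset.univ (σ₁ :: σ₂ :: l) ∧
      ∀ x ∈ (Finset.univ : Finset V), l.prod x = (σ₂⁻¹ * σ₁⁻¹) x
  have hP : ∀ (σ₁ σ₂ : Perm V) (f : Fin m → Perm V),
      ((∀ i, f i ∈ hzE (Finset.univ : Finset V)) ∧ P σ₁ σ₂ (List.ofFn f)) ↔
      ((∀ i, (f i).IsSwap) ∧ σ₁ * σ₂ * (List.ofFn f).prod = 1 ∧
        (∀ x y : V, ∃ g ∈ Subgroup.closure ({σ₁, σ₂} ∪ Set.range f), g x = y)) := by
    intro σ₁ σ₂ f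
    have h1 : (∀ i, f i ∈ hzE (Finset.univ : Finset V)) ↔ ∀ i, (f i).IsSwap := by
      simp [mem_hzE, Perm.IsSwap]
    have h2 : (∀ x ∈ (Finset.univ : Finset V), (List.ofFn f).prod x = (σ₂⁻¹ * σ₁⁻¹) x) ↔
        σ₁ * σ₂ * (List.ofFn f).prod = 1 := by
      rw [mul_eq_one_iff_inv_eq, mul_inv_rev, eq_comm (a := σ₂⁻¹ * σ₁⁻¹), Perm.ext_iff]
      simp
    have h3 : {τ | τ ∈ σ₁ :: σ₂ :: List.ofFn f} = {σ₁, σ₂} ∪ Set.range f := by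
      ext τ
      simp [List.mem_ofFn, or_assoc]
    rw [h1, ← h2, ← h3, hz_trans_iff]
    simp only [P]
    tauto
  let e : {p : Perm V × Perm V × (Fin m → Perm V) //
        p.1.cycleType = {3} ∧
        p.2.1.cycleType = {2, 2} ∧
        (∀ i, (p.2.2 i).IsSwap) ∧
        p.1 * p.2.1 * (List.ofFn p.2.2).prod = 1 ∧
        (∀ x y : V, ∃ g ∈ Subgroup.closure ({p.1, p.2.1} ∪ Set.range p.2.2),
          g x = y)} ≃ Σ s : (hzTy V {3}) × (hzTy V {2, 2}),
          {f : Fin m → Perm V // (∀ i, f i ∈ hzE (Finset.univ : Finset V)) ∧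
            P s.1.1 s.2.1 (List.ofFn f)} :=
    { toFun := fun p => ⟨(⟨p.1.1, mem_hzTy.2 p.2.1⟩, ⟨p.1.2.1, mem_hzTy.2 p.2.2.1⟩),
        ⟨p.1.2.2, (hP _ _ _).2 p.2.2.2⟩⟩
      invFun := fun s => ⟨(s.1.1.1, s.1.2.1, s.2.1), mem_hzTy.1 s.1.1.2, mem_hzTy.1 s.1.2.2,
        (hP _ _ _).1 s.2.2⟩
      left_inv := fun p => rfl
      right_inv := fun s => rfl }
  rw [Nat.card_congr e, Nat.card_sigma, Nat.cast_sum, Fintype.sum_prod_type]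
  rw [← Finset.sum_coe_sort (hzTy V {3}) (fun σ₁ => ∑ σ₂ ∈ hzTy V {2, 2}, hzWt σ₁ σ₂ m)]
  refine Finset.sum_congr rfl fun σ₁ _ => ?_
  rw [← Finset.sum_coe_sort (hzTy V {2, 2}) (fun σ₂ => hzWt σ₁ σ₂ m)]
  refine Finset.sum_congr rfl fun σ₂ _ => ?_
  rw [hzw_card]
  rw [hzWt]
  refine hzw_congr _ _ _ _ fun l _ _ => ?_
  simp only [P, hzi]
  congr

end Sums

open Equiv

/-- Theorem 1.2, second formula. -/
theorem hurwitz_number_2_1_1_2 (n : ℕ) (hn : 4 ≤ n) :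
    (Nat.card {p : Perm (Fin n) × Perm (Fin n) × (Fin (2 * n - 6) → Perm (Fin n)) //
        p.1.cycleType = {3} ∧
        p.2.1.cycleType = {2, 2} ∧
        (∀ i, (p.2.2 i).IsSwap) ∧
        p.1 * p.2.1 * (List.ofFn p.2.2).prod = 1 ∧
        (∀ x y : Fin n, ∃ g ∈ Subgroup.closure ({p.1, p.2.1} ∪ Set.range p.2.2),
          g x = y)} : ℚ) =
      (n.factorial : ℚ) * (3 * (3 * (n : ℚ) ^ 2 - 15 * (n : ℚ) + 20)) *
        (((2 * n - 6).factorial : ℚ) / ((n - 4).factorial : ℚ)) *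
        (n : ℚ) ^ ((n : ℤ) - 6) := by
  have hne : Nonempty (Fin n) := ⟨⟨0, by omega⟩⟩
  have hm : (2 * n - 6) + 6 = 2 * Fintype.card (Fin n) := by rw [Fintype.card_fin]; omega
  rw [hz_card_eq (V := Fin n) (2 * n - 6)]
  have h := hz_total hm
  rw [Fintype.card_fin] at h
  have hn0 : (n : ℚ) ≠ 0 := by
    have : n ≠ 0 := by omega
    exact_mod_cast this
  have hp : (n : ℚ) ^ ((n : ℤ) - 6) = (n : ℚ) ^ ((n : ℤ) - 7) * n := by
    rw [← zpow_add_one₀ hn0]; congr 1; ring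
  obtain ⟨k, rfl⟩ : ∃ k, n = k + 4 := ⟨n - 4, by omega⟩
  have hf : ((k + 4).factorial : ℚ) = (k + 4) * (k + 3) * (k + 2) * (k + 1) * (k.factorial : ℚ) := by
    simp only [Nat.factorial_succ]; push_cast; ring
  have hk : (k.factorial : ℚ) ≠ 0 := by exact_mod_cast k.factorial_ne_zero
  have hk4 : k + 4 - 4 = k := by omega
  rw [hp, hf, hk4]
  generalize hS : ∑ σ₁ ∈ hzTy (Fin (k + 4)) {3}, ∑ σ₂ ∈ hzTy (Fin (k + 4)) {2, 2},
    hzWt σ₁ σ₂ (2 * (k + 4) - 6) = S at h ⊢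
  generalize ((k + 4 : ℕ) : ℚ) ^ (((k + 4 : ℕ) : ℤ) - 7) = Z at h ⊢
  generalize ((2 * (k + 4) - 6).factorial : ℚ) = M at h ⊢
  push_cast at h ⊢
  field_simp
  linarith [h]
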